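/- arXiv:2105.12630 — 10 statements merged into one kernel-verified Lean document; each statement's English description precedes it below -/
import Mathlib

section
/- Let d ≥ 2 and let T be a d-regular tree. Let G be a Hausdorff topological group with a faithful, vertex-transitive action on T by graph automorphisms such that: (a) every graph automorphism of T is induced by an element of G; (b) the stabilizer in G of each vertex of T is a compact open subgroup of G; and (c) the pointwise stabilizers in G of finite sets of vertices of T form a neighbourhood basis of the identity of G (these conditions characterize Aut(T) with the permutation topology). Then every Cayley–Abels graph for G has degree at least d; consequently T is itself a Cayley–Abels graph of minimal degree for G and md(Aut(T_d)) = d. -/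
/-- A Cayley–Abels graph for a topological group `G`: a connected, locally finite simple
graph together with a vertex-transitive action of `G` by graph automorphisms (given by a
homomorphism `ρ` into the permutations of the vertex set, preserving adjacency) such that
the stabilizer of every vertex is a compact open subgroup of `G`. -/
def IsCayleyAbels {G V : Type*} [Group G] [TopologicalSpace G]
    (Γ : SimpleGraph V) (ρ : G →* Equiv.Perm V) : Prop :=
  Γ.Connected ∧ (∀ v : V, (Γ.neighborSet v).Finite) ∧
    (∀ (g : G) (u v : V), Γ.Adj u v → Γ.Adj (ρ g u) (ρ g v)) ∧
    (∀ u v : V, ∃ g : G, ρ g u = v) ∧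
    (∀ v : V, IsCompact {g : G | ρ g v = v} ∧ IsOpen {g : G | ρ g v = v})

universe u
section TreeMetric
variable {V : Type*} {T : SimpleGraph V}

theorem tm_parent_unique (hT : T.IsTree) {o v a b : V} (ha : T.Adj v a) (hb : T.Adj v b)
    (hda : T.dist o a + 1 = T.dist o v) (hdb : T.dist o b + 1 = T.dist o v) : a = b := by
  obtain ⟨p, hp, hpl⟩ := hT.connected.exists_path_of_dist o a
  obtain ⟨q, hq, hql⟩ := hT.connected.exists_path_of_dist o b
  have h1 : (p.concat ha.symm).IsPath :=
    SimpleGraph.Walk.isPath_of_length_eq_dist _ (by simp [hpl, hda])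
  have h2 : (q.concat hb.symm).IsPath :=
    SimpleGraph.Walk.isPath_of_length_eq_dist _ (by simp [hql, hdb])
  have h3 := (hT.existsUnique_path o v).unique h1 h2
  have h4 := congrArg SimpleGraph.Walk.penultimate h3
  simpa using h4

theorem tm_step (hT : T.IsTree) (o : V) {v a : V} (ha : T.Adj v a) :
    T.dist o a + 1 = T.dist o v ∨ T.dist o a = T.dist o v + 1 := by
  rcases hT.dist_eq_dist_add_one_of_adj o ha with h | h
  · left; exact h.symm
  · right; exact h

/-- existence of a neighbour closer to `o`. -/
theorem tm_exists_closer (hT : T.Connected) {o v : V} (h : v ≠ o) :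
    ∃ a, T.Adj v a ∧ T.dist o a + 1 = T.dist o v := by
  obtain ⟨p, hp, hpl⟩ := hT.exists_path_of_dist v o
  cases p with
  | nil => exact absurd rfl h
  | @cons _ a _ hadj q =>
    refine ⟨a, hadj, ?_⟩
    have h1 := SimpleGraph.dist_le q
    have h2 := hT.dist_triangle (u := v) (v := a) (w := o)
    have h3 := SimpleGraph.dist_eq_one_iff_adj.2 hadj
    simp at hpl
    rw [SimpleGraph.dist_comm (u := o), SimpleGraph.dist_comm (u := o)]
    omega

/-- distances add when the first steps differ -/
theorem tm_add (hT : T.IsTree) (q : V) : ∀ (n : ℕ) (p a b r : V), T.dist p r = n →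
    T.Adj p a → T.Adj p b → T.dist q a + 1 = T.dist q p → T.dist r b + 1 = T.dist r p → a ≠ b →
    T.dist q r = T.dist q p + n := by
  intro n
  induction n with
  | zero =>
    intro p a b r h _ _ _ h2 _
    rw [SimpleGraph.dist_comm] at h
    omega
  | succ n ih =>
    intro p a b r h ha hb hda hdb hne
    have hb' : T.dist q b = T.dist q p + 1 := by
      rcases tm_step hT q hb with h1 | h1
      · exact absurd (tm_parent_unique hT ha hb hda h1) hne
      · exact h1
    rw [SimpleGraph.dist_comm] at h
    by_cases hbr : b = r
    · subst hbr
      rw [SimpleGraph.dist_self] at hdb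
      omega
    · obtain ⟨c, hc, hdc⟩ := tm_exists_closer hT.connected hbr
      have := ih b p c r (by rw [SimpleGraph.dist_comm]; omega) hb.symm hc (by omega) hdc
        (by rintro rfl; omega)
      omega

/-- four point condition -/
theorem tm_four (hT : T.IsTree) : ∀ (n : ℕ) (p q r s : V), T.dist p q ≤ n →
    T.dist p s + T.dist q r ≤ max (T.dist p q + T.dist r s) (T.dist p r + T.dist q s) ∧
    T.dist p q + T.dist r s ≤ max (T.dist p s + T.dist q r) (T.dist p r + T.dist q s) ∧
    T.dist p r + T.dist q s ≤ max (T.dist p s + T.dist q r) (T.dist p q + T.dist r s) := by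
  have tri : ∀ u v w : V, T.dist u w ≤ T.dist u v + T.dist v w := fun u v w =>
    hT.connected.dist_triangle
  have comm : ∀ u v : V, T.dist u v = T.dist v u := fun u v => SimpleGraph.dist_comm
  intro n
  induction n with
  | zero =>
    intro p q r s h
    have h0 : T.dist p q = 0 := by omega
    have := tri p q s; have := tri q p s; have := tri p q r; have := tri q p r
    have := tri r q s; have := comm p q; have := comm q r
    have hpq : p = q := (hT.connected.dist_eq_zero_iff).1 h0
    subst hpq
    have := tri r p s; have := comm p r
    omega
  | succ n ih =>
    intro p q r s h
    have c1 := comm p q; have c2 := comm p r; have c3 := comm p s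
    have c4 := comm q r; have c5 := comm q s; have c6 := comm r s
    by_cases hq : p = q
    · subst hq
      have := tri r p s
      simp only [SimpleGraph.dist_self]
      omega
    by_cases hr : p = r
    · subst hr
      have := tri q p s
      simp only [SimpleGraph.dist_self]
      omega
    by_cases hs : p = s
    · subst hs
      have := tri q p r
      simp only [SimpleGraph.dist_self]
      omega
    obtain ⟨a, ha, hda⟩ := tm_exists_closer hT.connected hq
    obtain ⟨b, hb, hdb⟩ := tm_exists_closer hT.connected hr
    obtain ⟨c, hc, hdc⟩ := tm_exists_closer hT.connected hs
    have t1 := tri q p r; have t2 := tri q p s; have t3 := tri r p s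
    have hab : a ≠ b → T.dist q r = T.dist q p + T.dist p r :=
      fun hne => tm_add hT q _ p a b r rfl ha hb hda hdb hne
    have hac : a ≠ c → T.dist q s = T.dist q p + T.dist p s :=
      fun hne => tm_add hT q _ p a c s rfl ha hc hda hdc hne
    have hbc : b ≠ c → T.dist r s = T.dist r p + T.dist p s :=
      fun hne => tm_add hT r _ p b c s rfl hb hc hdb hdc hne
    by_cases e1 : a = b
    · by_cases e2 : a = c
      · subst e1; subst e2
        have := ih a q r s (by rw [comm a q]; omega)
        rw [comm a q, comm a r, comm a s] at this
        omega
      · have := hac e2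
        have := hbc (e1 ▸ e2)
        omega
    · have := hab e1
      by_cases e2 : a = c
      · have := hbc (fun h => e1 (e2.trans h.symm))
        omega
      · have := hac e2
        omega

theorem tm_four_point (hT : T.IsTree) (p q r s : V) :
    T.dist p s + T.dist q r ≤ max (T.dist p q + T.dist r s) (T.dist p r + T.dist q s) :=
  (tm_four hT _ p q r s le_rfl).1

end TreeMetric
section Serre
variable {V G : Type*} [Group G] [MulAction G V]

/-- an isometry that is not a translation of the tree -/
def NonHyp (D : V → V → ℕ) (g : G) : Prop := ∀ x : V, D x (g • g • x) ≤ D x (g • x)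

variable {D : V → V → ℕ} (hself : ∀ x, D x x = 0) (hcomm : ∀ x y, D x y = D y x)
  (h4 : ∀ p q r s, D p s + D q r ≤ max (D p q + D r s) (D p r + D q s))
  (hinv : ∀ (g : G) x y, D (g • x) (g • y) = D x y)

include hcomm h4 hinv in
theorem sr_growth {g : G} (hg : ¬ NonHyp D g) : ∃ x, ∀ n : ℕ, n ≤ D x (g ^ n • x) := by
  unfold NonHyp at hg
  push Not at hg
  obtain ⟨x, hx⟩ := hg
  refine ⟨x, ?_⟩
  have e2 : g • g • x = g ^ 2 • x := by rw [pow_two, mul_smul]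
  rw [e2] at hx
  have key : ∀ n : ℕ, D x (g • x) + n + 1 ≤ D x (g ^ (n + 2) • x) ∧
      D x (g ^ (n + 1) • x) + 1 ≤ D x (g ^ (n + 2) • x) := by
    intro n
    induction n with
    | zero => simp; omega
    | succ n ih =>
      have f := h4 x (g • x) (g ^ (n + 3) • x) (g ^ (n + 2) • x)
      have e1 : D (g • x) (g ^ (n + 3) • x) = D x (g ^ (n + 2) • x) := by
        rw [show g ^ (n + 3) = g * g ^ (n + 2) by rw [← pow_succ'], mul_smul, hinv]
      have e3 : D (g ^ (n + 3) • x) (g ^ (n + 2) • x) = D x (g • x) := by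
        rw [show g ^ (n + 3) = g ^ (n + 2) * g by rw [← pow_succ], mul_smul, hinv, hcomm]
      have e4 : D (g • x) (g ^ (n + 2) • x) = D x (g ^ (n + 1) • x) := by
        rw [show g ^ (n + 2) = g * g ^ (n + 1) by rw [← pow_succ'], mul_smul, hinv]
      rw [e1, e3, e4] at f
      show D x (g • x) + (n + 1) + 1 ≤ D x (g ^ (n + 3) • x) ∧
        D x (g ^ (n + 2) • x) + 1 ≤ D x (g ^ (n + 3) • x)
      omega
  have pos : 1 ≤ D x (g • x) := by
    by_contra hlt
    have f := h4 x (g • x) (g • x) (g ^ 2 • x)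
    have e : D (g • x) (g ^ 2 • x) = D x (g • x) := by
      rw [pow_two, mul_smul, hinv]
    rw [e] at f
    omega
  intro n
  match n with
  | 0 => simp
  | 1 => simpa using pos
  | n + 2 => have := key n; omega

include hcomm h4 hinv in
theorem sr_max {a b : G} (ha : NonHyp D a) (hb : NonHyp D b) (hab : NonHyp D (a * b)) (x : V) :
    D x ((a * b) • x) ≤ max (D x (a • x)) (D x (b • x)) := by
  have inv1 : ∀ g : G, D x (g⁻¹ • x) = D x (g • x) := by
    intro g
    rw [← hinv g, smul_inv_smul, hcomm]
  have nh : ∀ g : G, NonHyp D g → D (g • x) (g⁻¹ • x) ≤ D x (g • x) := by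
    intro g hg
    have := hg x
    rw [← hinv g⁻¹, inv_smul_smul] at this
    rwa [hcomm]
  have ga := nh a ha
  have gb := nh b hb
  have gc := nh (a * b) hab
  have ia := inv1 a
  have ib := inv1 b
  have ic := inv1 (a * b)
  have k1 : D (a⁻¹ • x) (b • x) = D x ((a * b) • x) := by
    rw [← hinv a, smul_inv_smul, mul_smul]
  have k2 : D (a • x) ((a * b) • x) = D x (b • x) := by
    rw [mul_smul, hinv]
  have k3 : D ((a * b)⁻¹ • x) (b⁻¹ • x) = D x (a • x) := by
    rw [mul_inv_rev, mul_smul, hinv, hcomm, ← hinv a, smul_inv_smul, hcomm, hcomm]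
  generalize (a * b) • x = C at *
  generalize (a * b)⁻¹ • x = C' at *
  generalize a • x = A at *
  generalize a⁻¹ • x = A' at *
  generalize b • x = B at *
  generalize b⁻¹ • x = B' at *
  have f1 := h4 x A' B A
  have f2 := h4 x A B B'
  have f3 := h4 x A B' C
  have f4 := h4 x B' C C'
  have := hcomm A B; have := hcomm A' B; have := hcomm A A'; have := hcomm A B'
  have := hcomm B B'; have := hcomm A C; have := hcomm C B'; have := hcomm C C'
  have := hcomm B' C'
  omega

include hself hcomm h4 hinv in
theorem sr_serre (S : Set G) (hS : ∀ a ∈ S, a⁻¹ ∈ S) (hne : ∀ a ∈ S, NonHyp D a)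
    (hp : ∀ a ∈ S, ∀ b ∈ S, a = b ∨ NonHyp D (a * b)) (x : V) (M : ℕ)
    (hM : ∀ a ∈ S, D x (a • x) ≤ M) (a₀ : G) (h₀ : a₀ ∈ S) (hM₀ : D x (a₀ • x) = M) :
    ∀ g ∈ Subgroup.closure S, D x (g • x) ≤ M := by
  have mul_le : ∀ a ∈ S, ∀ b ∈ S, D x ((a * b) • x) ≤ M := by
    intro a ha b hb
    rcases hp a ha b hb with rfl | h
    · have := hne a ha x
      rw [← mul_smul] at this
      exact this.trans (hM a ha)
    · have := sr_max hcomm h4 hinv (hne a ha) (hne b hb) h x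
      have := hM a ha; have := hM b hb
      omega
  have conj_nh : ∀ a ∈ S, NonHyp D (a₀⁻¹ * a * a₀) := by
    intro a ha y
    have := hne a ha (a₀ • y)
    rw [← hinv a₀]
    conv_rhs => rw [← hinv a₀]
    simpa [mul_smul] using this
  have conj_le : ∀ a ∈ S, D x ((a₀⁻¹ * a * a₀) • x) ≤ M := by
    intro a ha
    rcases hp _ (hS _ h₀) a ha with rfl | h
    · simpa using hM _ ha
    · have := sr_max hcomm h4 hinv h (hne _ h₀) (conj_nh a ha) x
      have := mul_le _ (hS _ h₀) a ha
      omega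
  have key : ∀ a ∈ S, ∀ y, max (D x (a • y)) (D (a₀ • x) (a • y)) ≤ max (D x y) (D (a₀ • x) y) := by
    intro a ha y
    have e1 : D x (a • y) = D (a⁻¹ • x) y := by rw [← hinv a (a⁻¹ • x), smul_inv_smul]
    have e2 : D (a₀ • x) (a • y) = D (a⁻¹ • a₀ • x) y := by
      rw [← hinv a (a⁻¹ • a₀ • x), smul_inv_smul]
    have f1 := h4 (a⁻¹ • x) x (a₀ • x) y
    have f2 := h4 (a⁻¹ • a₀ • x) x (a₀ • x) y
    have g1 : D (a⁻¹ • x) x ≤ M := by rw [hcomm]; exact hM _ (hS a ha)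
    have g2 : D (a⁻¹ • x) (a₀ • x) ≤ M := by
      rw [← hinv a, smul_inv_smul, ← mul_smul]
      exact mul_le a ha a₀ h₀
    have g3 : D (a⁻¹ • a₀ • x) x ≤ M := by
      rw [hcomm, ← mul_smul]
      exact mul_le _ (hS a ha) a₀ h₀
    have g4 : D (a⁻¹ • a₀ • x) (a₀ • x) ≤ M := by
      rw [hcomm, ← hinv a₀⁻¹, inv_smul_smul, ← mul_smul, ← mul_smul]
      exact conj_le _ (hS a ha)
    omega
  have all : ∀ g ∈ Subgroup.closure S, ∀ y,
      max (D x (g • y)) (D (a₀ • x) (g • y)) ≤ max (D x y) (D (a₀ • x) y) := by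
    intro g hg
    induction hg using Subgroup.closure_induction'' with
    | mem a ha => exact key a ha
    | inv_mem a ha => exact key _ (hS a ha)
    | one => intro y; simp
    | mul a b _ _ iha ihb =>
      intro y
      rw [mul_smul]
      exact (iha _).trans (ihb _)
  intro g hg
  have := all g hg x
  rw [hcomm (a₀ • x) x, hself] at this
  omega

end Serre

section Branch
variable {V : Type*} {T : SimpleGraph V}

theorem br_children (hT : T.IsTree) {k : ℕ} (hreg : ∀ v : V, (T.neighborSet v).ncard = k + 1)
    (o u : V) (hu : u ≠ o) : ∃ c : Fin k → V, Function.Injective c ∧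
      ∀ z, (∃ i, c i = z) ↔ (T.Adj u z ∧ T.dist o z = T.dist o u + 1) := by
  obtain ⟨a, ha, hda⟩ := tm_exists_closer hT.connected hu
  have hset : {z | T.Adj u z ∧ T.dist o z = T.dist o u + 1} = T.neighborSet u \ {a} := by
    ext z
    simp only [Set.mem_ofPred_eq, Set.mem_sdiff, SimpleGraph.mem_neighborSet, Set.mem_singleton_iff]
    constructor
    · rintro ⟨h1, h2⟩
      exact ⟨h1, by rintro rfl; omega⟩
    · rintro ⟨h1, h2⟩
      refine ⟨h1, ?_⟩
      rcases tm_step hT o h1 with h | h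
      · exact absurd (tm_parent_unique hT h1 ha h hda) h2
      · exact h
  have hfin : (T.neighborSet u).Finite := Set.finite_of_ncard_ne_zero (by rw [hreg]; omega)
  have hcard : {z | T.Adj u z ∧ T.dist o z = T.dist o u + 1}.ncard = k := by
    rw [hset, Set.ncard_sdiff_singleton_of_mem (by simpa using ha), hreg]
    rfl
  have hfin2 : {z | T.Adj u z ∧ T.dist o z = T.dist o u + 1}.Finite := by
    rw [hset]; exact hfin.sdiff
  have := hfin2.to_subtype
  have e := Finite.equivFinOfCardEq (α := {z | T.Adj u z ∧ T.dist o z = T.dist o u + 1})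
    (n := k) (by rw [Nat.card_coe_set_eq]; exact hcard)
  refine ⟨fun i => (e.symm i : V), ?_, ?_⟩
  · intro i j hij
    exact e.symm.injective (Subtype.ext hij)
  · intro z
    constructor
    · rintro ⟨i, rfl⟩
      exact (e.symm i).2
    · intro hz
      exact ⟨e ⟨z, hz⟩, by simp⟩

theorem br_main (hT : T.IsTree) {k : ℕ} (hreg : ∀ v : V, (T.neighborSet v).ncard = k + 1)
    (o v : V) (hv : v ≠ o) : ∃ θ : Equiv.Perm (Fin k) →* (T ≃g T), ∃ c : Fin k → V,
      (∀ π u, T.dist o u ≤ T.dist o v → θ π u = u) ∧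
      Function.Injective c ∧
      (∀ z, (∃ i, c i = z) ↔ (T.Adj v z ∧ T.dist o z = T.dist o v + 1)) ∧
      (∀ π i, θ π (c i) = c (π i)) ∧
      (∀ π i, π i ≠ i → ∀ n : ℕ, ∃ z, n ≤ T.dist z (θ π z)) := by
  classical
  have hex : ∀ u : V, ∃ c : Fin k → V, u ≠ o → (Function.Injective c ∧
      ∀ z, (∃ i, c i = z) ↔ (T.Adj u z ∧ T.dist o z = T.dist o u + 1)) := by
    intro u
    by_cases hu : u = o
    · exact ⟨fun _ => o, fun h => absurd hu h⟩
    · obtain ⟨c, hc⟩ := br_children hT hreg o u hu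
      exact ⟨c, fun _ => hc⟩
  choose child hchild using hex
  have cinj : ∀ u, u ≠ o → Function.Injective (child u) := fun u hu => (hchild u hu).1
  have cadj : ∀ u, u ≠ o → ∀ i, T.Adj u (child u i) := fun u hu i =>
    (((hchild u hu).2 _).1 ⟨i, rfl⟩).1
  have cdist : ∀ u, u ≠ o → ∀ i, T.dist o (child u i) = T.dist o u + 1 := fun u hu i =>
    (((hchild u hu).2 _).1 ⟨i, rfl⟩).2
  have csurj : ∀ u, u ≠ o → ∀ z, T.Adj u z → T.dist o z = T.dist o u + 1 → ∃ i, child u i = z :=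
    fun u hu z h1 h2 => ((hchild u hu).2 z).2 ⟨h1, h2⟩
  have ne_of_pos : ∀ u, T.dist o u ≠ 0 → u ≠ o := by
    rintro u h rfl
    simp at h
  have cne : ∀ u, u ≠ o → ∀ i, child u i ≠ o := fun u hu i =>
    ne_of_pos _ (by rw [cdist u hu]; omega)
  -- descendants
  let desc : V → List (Fin k) → V := fun u l => l.foldl child u
  have desc_snoc : ∀ u l j, desc u (l ++ [j]) = child (desc u l) j := by
    intro u l j; simp [desc]
  have desc_ne : ∀ l u, u ≠ o → desc u l ≠ o := by
    intro l
    induction l with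
    | nil => intro u hu; exact hu
    | cons i l ih => intro u hu; exact ih _ (cne u hu i)
  have desc_dist : ∀ l u, u ≠ o → T.dist o (desc u l) = T.dist o u + l.length := by
    intro l
    induction l with
    | nil => intro u hu; rfl
    | cons i l ih =>
      intro u hu
      have := ih _ (cne u hu i)
      have h2 := cdist u hu i
      show T.dist o (desc (child u i) l) = _
      rw [this, h2]; simp; omega
  have desc_dist' : ∀ l u, u ≠ o → T.dist u (desc u l) = l.length := by
    intro l u hu
    apply le_antisymm
    · clear desc_dist
      induction l using List.reverseRecOn with
      | nil => simp [desc]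
      | append_singleton l j ih =>
        rw [desc_snoc]
        have h1 := hT.connected.dist_triangle (u := u) (v := desc u l) (w := child (desc u l) j)
        have h2 := SimpleGraph.dist_eq_one_iff_adj.2 (cadj _ (desc_ne l u hu) j)
        simp
        omega
    · have h1 := hT.connected.dist_triangle (u := o) (v := u) (w := desc u l)
      have h2 := desc_dist l u hu
      omega
  have parent_eq : ∀ u u', u ≠ o → u' ≠ o → ∀ j j', child u j = child u' j' → u = u' := by
    intro u u' hu hu' j j' h
    have h1 := cdist u hu j
    have h2 := cdist u' hu' j'
    have a1 := (cadj u hu j).symm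
    have a2 := (cadj u' hu' j').symm
    rw [← h] at a2 h2
    exact tm_parent_unique hT a1 a2 h1.symm h2.symm
  have desc_inj : ∀ l l', desc v l = desc v l' → l = l' := by
    intro l
    induction l using List.reverseRecOn with
    | nil =>
      intro l' h
      have h1 := desc_dist [] v hv
      have h2 := desc_dist l' v hv
      rw [h] at h1
      have : l'.length = 0 := by simp at h1; omega
      exact (List.length_eq_zero_iff.1 this).symm
    | append_singleton l j ih =>
      intro l' h
      induction l' using List.reverseRecOn with
      | nil =>
        have h1 := desc_dist (l ++ [j]) v hv
        have h2 := desc_dist [] v hv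
        rw [h] at h1
        simp at h1 h2
        omega
      | append_singleton l' j' _ =>
        rw [desc_snoc, desc_snoc] at h
        have e := parent_eq _ _ (desc_ne l v hv) (desc_ne l' v hv) _ _ h
        rw [e] at h
        have e2 := cinj _ (desc_ne l' v hv) h
        rw [ih l' e, e2]
  -- the automorphism
  let φ : Equiv.Perm (Fin k) → V → V := fun π u =>
    if h : ∃ p : Fin k × List (Fin k), u = desc v (p.1 :: p.2) then
      desc v (π h.choose.1 :: h.choose.2) else u
  have φ_in : ∀ π i l, φ π (desc v (i :: l)) = desc v (π i :: l) := by
    intro π i l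
    have h : ∃ p : Fin k × List (Fin k), desc v (i :: l) = desc v (p.1 :: p.2) := ⟨(i, l), rfl⟩
    have e := desc_inj _ _ h.choose_spec
    simp only [List.cons.injEq] at e
    simp only [φ]
    rw [dif_pos h, ← e.1, ← e.2]
  have φ_out : ∀ π u, (¬ ∃ p : Fin k × List (Fin k), u = desc v (p.1 :: p.2)) → φ π u = u := by
    intro π u h
    simp only [φ]
    rw [dif_neg h]
  have φ_mul : ∀ π π' u, φ (π * π') u = φ π (φ π' u) := by
    intro π π' u
    by_cases h : ∃ p : Fin k × List (Fin k), u = desc v (p.1 :: p.2)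
    · obtain ⟨⟨i, l⟩, rfl⟩ := h
      rw [φ_in, φ_in, φ_in]; rfl
    · rw [φ_out _ _ h, φ_out _ _ h, φ_out _ _ h]
  have φ_one : ∀ u, φ 1 u = u := by
    intro u
    by_cases h : ∃ p : Fin k × List (Fin k), u = desc v (p.1 :: p.2)
    · obtain ⟨⟨i, l⟩, rfl⟩ := h
      rw [φ_in]; rfl
    · rw [φ_out _ _ h]
  have φ_near : ∀ π u, T.dist o u ≤ T.dist o v → φ π u = u := by
    intro π u hu
    apply φ_out
    rintro ⟨⟨i, l⟩, rfl⟩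
    rw [desc_dist _ _ hv] at hu
    simp at hu
  have φ_adj1 : ∀ π u z, T.Adj u z → T.dist o z = T.dist o u + 1 → T.Adj (φ π u) (φ π z) := by
    intro π u z huz hd
    by_cases hu : u = o
    · subst hu
      have hv0 : T.dist u v ≠ 0 := fun h => hv ((hT.connected.dist_eq_zero_iff).1 h).symm
      rw [φ_near π u (by simp), φ_near π z (by rw [SimpleGraph.dist_self] at hd; omega)]
      exact huz
    · obtain ⟨j, rfl⟩ := csurj u hu z huz hd
      by_cases h : ∃ p : Fin k × List (Fin k), u = desc v (p.1 :: p.2)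
      · obtain ⟨⟨i, l⟩, rfl⟩ := h
        have e := φ_in π i (l ++ [j])
        rw [← List.cons_append, ← List.cons_append, desc_snoc, desc_snoc] at e
        simp only
        rw [e, φ_in]
        exact cadj _ (desc_ne _ _ hv) _
      · rw [φ_out _ _ h]
        by_cases huv : u = v
        · subst huv
          have e := φ_in π j []
          have e1 : desc u [j] = child u j := rfl
          have e2 : desc u [π j] = child u (π j) := rfl
          rw [e1, e2] at e
          rw [e]
          exact cadj _ hv _
        · rw [φ_out]
          · exact huz
          · rintro ⟨⟨i, l⟩, hl⟩
            simp only at hl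
            induction l using List.reverseRecOn with
            | nil => exact huv (parent_eq _ _ hu hv _ _ hl)
            | append_singleton l j' _ =>
              rw [← List.cons_append, desc_snoc] at hl
              exact h ⟨(i, l), parent_eq _ _ hu (desc_ne _ _ hv) _ _ hl⟩
  have φ_adj : ∀ π u z, T.Adj u z → T.Adj (φ π u) (φ π z) := by
    intro π u z h
    rcases tm_step hT o h with h1 | h1
    · exact (φ_adj1 π z u h.symm h1.symm).symm
    · exact φ_adj1 π u z h h1
  have φ_inv : ∀ π u, φ π⁻¹ (φ π u) = u := by
    intro π u; rw [← φ_mul, inv_mul_cancel, φ_one]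
  have φ_inv' : ∀ π u, φ π (φ π⁻¹ u) = u := by
    intro π u; rw [← φ_mul, mul_inv_cancel, φ_one]
  let θ : Equiv.Perm (Fin k) →* (T ≃g T) :=
    MonoidHom.mk' (fun π => 
      { toFun := φ π
        invFun := φ π⁻¹
        left_inv := φ_inv π
        right_inv := φ_inv' π
        map_rel_iff' := by
          intro u z
          constructor
          · intro h
            have := φ_adj π⁻¹ _ _ h
            simpa [φ_inv] using this
          · exact φ_adj π u z }) (by
        intro π π'
        ext u
        exact φ_mul π π' u)
  have θ_apply : ∀ π u, θ π u = φ π u := fun _ _ => rfl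
  refine ⟨θ, child v, ?_, cinj v hv, (hchild v hv).2, ?_, ?_⟩
  · exact φ_near
  · intro π i
    exact φ_in π i []
  · intro π i hi n
    refine ⟨desc v (i :: List.replicate n i), ?_⟩
    rw [θ_apply, φ_in]
    have key : ∀ j, T.dist (desc v (j :: List.replicate n i)) (child v j) + 1 =
        T.dist (desc v (j :: List.replicate n i)) v := by
      intro j
      have h1 := desc_dist' (List.replicate n i) _ (cne v hv j)
      have h2 := desc_dist' (j :: List.replicate n i) v hv
      have e : desc v (j :: List.replicate n i) = desc (child v j) (List.replicate n i) := rfl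
      rw [e] at h2 ⊢
      rw [SimpleGraph.dist_comm, h1, SimpleGraph.dist_comm, h2]
      simp
    have := tm_add hT (desc v (i :: List.replicate n i)) _ v (child v i) (child v (π i))
      (desc v (π i :: List.replicate n i)) rfl (cadj v hv i) (cadj v hv _) (key i) (key (π i))
      (fun h => hi (cinj v hv h).symm)
    rw [this, desc_dist' _ _ hv]
    simp
    omega

end Branch

section Setup

/-- orbit of `y` under a subgroup -/
def orb {G Y : Type*} [Group G] [MulAction G Y] (H : Subgroup G) (y : Y) : Set Y :=
  (fun h : G => h • y) '' (H : Set G)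

theorem mem_orb {G Y : Type*} [Group G] [MulAction G Y] {H : Subgroup G} {y z : Y} :
    z ∈ orb H y ↔ ∃ h ∈ H, h • y = z := Iff.rfl

theorem orb_mul {G X Y : Type*} [Group G] [MulAction G X] [MulAction G Y] (H : Subgroup G)
    (z : X) (y : Y) (h1 : (orb H z).Finite) (h2 : (orb (MulAction.stabilizer G z) y).Finite) :
    (orb H y).ncard ≤ (orb H z).ncard * (orb (MulAction.stabilizer G z) y).ncard := by
  classical
  have hex : ∀ z' : X, ∃ h : G, z' ∈ orb H z → h ∈ H ∧ h • z = z' := by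
    intro z'
    by_cases hz : z' ∈ orb H z
    · obtain ⟨h, hh, e⟩ := hz
      exact ⟨h, fun _ => ⟨hh, e⟩⟩
    · exact ⟨1, fun h => absurd h hz⟩
  choose f hf using hex
  have hsub : orb H y ⊆ (fun p : X × Y => f p.1 • p.2) ''
      (orb H z ×ˢ orb (MulAction.stabilizer G z) y) := by
    rintro _ ⟨h, hh, rfl⟩
    have hz : h • z ∈ orb H z := ⟨h, hh, rfl⟩
    refine ⟨(h • z, (f (h • z))⁻¹ • h • y), ⟨hz, ?_⟩, ?_⟩
    · refine ⟨(f (h • z))⁻¹ * h, ?_, ?_⟩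
      · simp only [SetLike.mem_coe, MulAction.mem_stabilizer_iff, mul_smul]
        rw [inv_smul_eq_iff]
        exact (hf _ hz).2.symm
      · simp [mul_smul]
    · simp
  calc (orb H y).ncard ≤ _ := Set.ncard_le_ncard hsub ((h1.prod h2).image _)
    _ ≤ _ := Set.ncard_image_le (h1.prod h2)
    _ = _ := Set.ncard_prod

theorem orb_finite {G Y : Type*} [Group G] [TopologicalSpace G] [IsTopologicalGroup G]
    [MulAction G Y] (H : Subgroup G) (hH : IsCompact (H : Set G)) (y : Y)
    (hy : IsOpen {g : G | g • y = y}) : (orb H y).Finite := by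
  classical
  obtain ⟨t, -, ht⟩ := hH.elim_nhds_subcover (fun g => {h : G | h • y = g • y}) (by
    intro g _
    have : {h : G | h • y = g • y} = (fun h => g⁻¹ * h) ⁻¹' {g : G | g • y = y} := by
      ext h
      simp [mul_smul, inv_smul_eq_iff]
    rw [this]
    exact (hy.preimage (continuous_const_mul _)).mem_nhds (by simp))
  refine (t.finite_toSet.image (fun g => g • y)).subset ?_
  rintro _ ⟨h, hh, rfl⟩
  have := ht hh
  simp only [Set.mem_iUnion] at this
  obtain ⟨g, hg, e⟩ := this
  exact ⟨g, hg, e.symm⟩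

variable {V W : Type*} (G : Type*) [Group G] [MulAction G V] [MulAction G W]

/-- The combinatorial consequences of the hypotheses. -/
structure TS (k : ℕ) (T : SimpleGraph V) (Δ : SimpleGraph W) : Prop where
  hT : T.IsTree
  hk : 1 ≤ k
  hreg : ∀ v : V, (T.neighborSet v).ncard = k + 1
  transV : ∀ u v : V, ∃ g : G, g • u = v
  distV : ∀ (g : G) (u v : V), T.dist (g • u) (g • v) = T.dist u v
  br : ∀ o v : V, v ≠ o → ∃ θ : Equiv.Perm (Fin k) →* G, ∃ c : Fin k → V,
      (∀ π u, T.dist o u ≤ T.dist o v → θ π • u = u) ∧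
      Function.Injective c ∧
      (∀ z, (∃ i, c i = z) ↔ (T.Adj v z ∧ T.dist o z = T.dist o v + 1)) ∧
      (∀ π i, θ π • (c i) = c (π i)) ∧
      (∀ π i, π i ≠ i → ∀ n : ℕ, ∃ z, n ≤ T.dist z (θ π • z))
  hD : Δ.Connected
  finW : ∀ w : W, (Δ.neighborSet w).Finite
  adjW : ∀ (g : G) (u v : W), Δ.Adj u v → Δ.Adj (g • u) (g • v)
  transW : ∀ u v : W, ∃ g : G, g • u = v
  finWV : ∀ (w : W) (x : V), (orb (MulAction.stabilizer G w) x).Finite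
  finVV : ∀ (y x : V), (orb (MulAction.stabilizer G y) x).Finite
  finVW : ∀ (x : V) (w : W), (orb (MulAction.stabilizer G x) w).Finite
  basis : ∀ w w' : W, ∃ o : V, ∃ n : ℕ, ∀ g : G, (∀ u, T.dist o u ≤ n → g • u = u) →
    g • w = w ∧ g • w' = w'

variable {G} {k : ℕ} {T : SimpleGraph V} {Δ : SimpleGraph W} (S : TS G k T Δ)

include S

theorem TS.far (o : V) (n : ℕ) : ∃ v, T.dist o v = n + 1 := by
  induction n with
  | zero =>
    have h := S.hreg o
    have : (T.neighborSet o).Nonempty := Set.nonempty_of_ncard_ne_zero (by omega)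
    obtain ⟨z, hz⟩ := this
    exact ⟨z, SimpleGraph.dist_eq_one_iff_adj.2 hz⟩
  | succ n ih =>
    obtain ⟨v, hv⟩ := ih
    obtain ⟨θ, c, -, -, h, -⟩ := S.br o v (by rintro rfl; simp at hv)
    have := ((h (c ⟨0, S.hk⟩)).1 ⟨_, rfl⟩).2
    exact ⟨_, by rw [this, hv]⟩

theorem TS.unbounded (x : V) (M : ℕ) (h : ∀ g : G, T.dist x (g • x) ≤ M) : False := by
  obtain ⟨v, hv⟩ := S.far x M
  obtain ⟨g, rfl⟩ := S.transV x v
  have := h g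
  omega

theorem TS.finVbound (w : W) (x : V) : ∃ M, ∀ u : G, u • w = w → T.dist x (u • x) ≤ M := by
  obtain ⟨M, hM⟩ := ((S.finWV w x).image (fun y => T.dist x y)).bddAbove
  refine ⟨M, fun u hu => hM ⟨u • x, ⟨u, hu, rfl⟩, rfl⟩⟩

theorem TS.infW (hfin : Finite W) : False := by
  classical
  obtain ⟨w⟩ := S.hD.nonempty
  obtain ⟨x⟩ := S.hT.connected.nonempty
  choose f hf using fun w' => S.transW w w'
  have : ∃ M, ∀ w' : W, ∀ u : G, u • w = w → T.dist x (f w' • u • x) ≤ M := by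
    have h1 : (⋃ w' : W, (fun y => T.dist x (f w' • y)) '' orb (MulAction.stabilizer G w) x).Finite :=
      Set.finite_iUnion (fun w' => (S.finWV w x).image _)
    obtain ⟨M, hM⟩ := h1.bddAbove
    refine ⟨M, fun w' u hu => hM ?_⟩
    exact Set.mem_iUnion.2 ⟨w', u • x, ⟨u, hu, rfl⟩, rfl⟩
  obtain ⟨M, hM⟩ := this
  refine S.unbounded x M (fun g => ?_)
  have := hM (g • w) ((f (g • w))⁻¹ * g) (by rw [mul_smul, inv_smul_eq_iff]; exact (hf _).symm)
  simpa [mul_smul] using this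

theorem TS.kill (r : ℕ) (Λ : Subgroup (Equiv.Perm (Fin k)))
    (hΛ : ∀ H : Subgroup Λ, H.index ≠ 0 → H.index ≤ r → H = ⊤)
    (π : Equiv.Perm (Fin k)) (hπ : π ∈ Λ) (i : Fin k) (hi : π i ≠ i)
    (w₀ w₁ : W) (h01 : Δ.Adj w₀ w₁)
    (horb : ∀ w1 w2 w3 : W, Δ.Adj w2 w1 → Δ.Adj w2 w3 →
      (orb (MulAction.stabilizer G w1 ⊓ MulAction.stabilizer G w2) w3).ncard ≤ r) : False := by
  obtain ⟨o, n, hon⟩ := S.basis w₀ w₁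
  obtain ⟨v, hv⟩ := S.far o n
  obtain ⟨θ, c, hθ, -, -, -, hunb⟩ := S.br o v (by rintro rfl; simp at hv)
  have hfix : ∀ π, θ π • w₀ = w₀ ∧ θ π • w₁ = w₁ := by
    intro π
    exact hon _ (fun u hu => hθ π u (by omega))
  have step : ∀ w1 w2 w3 : W, Δ.Adj w2 w1 → Δ.Adj w2 w3 → (∀ l ∈ Λ, θ l • w1 = w1) →
      (∀ l ∈ Λ, θ l • w2 = w2) → (∀ l ∈ Λ, θ l • w3 = w3) := by
    intro w1 w2 w3 a1 a3 f1 f2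
    letI : MulAction Λ W := MulAction.compHom W (θ.comp Λ.subtype)
    have smul_def : ∀ (l : Λ) (x : W), l • x = θ l.1 • x := fun _ _ => rfl
    have hsub : MulAction.orbit Λ w3 ⊆
        orb (MulAction.stabilizer G w1 ⊓ MulAction.stabilizer G w2) w3 := by
      rintro _ ⟨l, rfl⟩
      exact ⟨θ l.1, ⟨f1 _ l.2, f2 _ l.2⟩, rfl⟩
    have hfin : (orb (MulAction.stabilizer G w1 ⊓ MulAction.stabilizer G w2) w3).Finite := by
      refine (S.finW w2).subset ?_
      rintro _ ⟨g, ⟨-, hg2⟩, rfl⟩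
      have := S.adjW g _ _ a3
      have hg2' : g • w2 = w2 := hg2
      rw [hg2'] at this
      exact this
    have h1 : (MulAction.stabilizer Λ w3).index ≤ r := by
      rw [MulAction.index_stabilizer]
      exact (Set.ncard_le_ncard hsub hfin).trans (horb w1 w2 w3 a1 a3)
    have h0 : (MulAction.stabilizer Λ w3).index ≠ 0 := by
      rw [MulAction.index_stabilizer]
      exact ((Set.ncard_pos (hfin.subset hsub)).2 (MulAction.nonempty_orbit _)).ne'
    have := hΛ _ h0 h1
    intro l hl
    have : (⟨l, hl⟩ : Λ) ∈ MulAction.stabilizer Λ w3 := by rw [this]; trivial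
    exact this
  have allfix : ∀ w : W, (∀ l ∈ Λ, θ l • w = w) ∧
      (∀ w', Δ.Adj w w' → ∀ l ∈ Λ, θ l • w' = w') := by
    intro w
    obtain ⟨p⟩ := S.hD.preconnected w₀ w
    have key : ∀ a b : W, Δ.Walk a b → ((∀ l ∈ Λ, θ l • a = a) ∧
      (∀ w', Δ.Adj a w' → ∀ l ∈ Λ, θ l • w' = w')) → ((∀ l ∈ Λ, θ l • b = b) ∧
      (∀ w', Δ.Adj b w' → ∀ l ∈ Λ, θ l • w' = w')) := by
      intro a b p
      induction p with
      | nil => exact id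
      | cons h p ih =>
        intro ha
        exact ih ⟨ha.2 _ h, fun w' hw' => step _ _ w' h.symm hw' ha.1 (ha.2 _ h)⟩
    refine key _ _ p ⟨fun l _ => (hfix l).1, fun w' hw' => ?_⟩
    exact step w₁ w₀ w' h01 hw' (fun l _ => (hfix l).2) (fun l _ => (hfix l).1)
  obtain ⟨x⟩ := S.hT.connected.nonempty
  obtain ⟨M, hM⟩ := S.finVbound w₀ x
  obtain ⟨z, hz⟩ := hunb π i hi (M + 1)
  obtain ⟨h, rfl⟩ := S.transV x z
  have h1 := hM (h⁻¹ * θ π * h) (by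
    rw [mul_smul, mul_smul, (allfix (h • w₀)).1 π hπ, inv_smul_smul])
  rw [← S.distV h] at h1
  simp only [mul_smul, smul_inv_smul] at h1
  omega

theorem TS.sphere (x : V) (n : ℕ) : ∀ y, T.dist x y = n + 1 →
    k ^ n ≤ (orb (MulAction.stabilizer G x) y).ncard := by
  classical
  induction n with
  | zero =>
    intro y _
    simp only [pow_zero]
    exact (Set.ncard_pos (S.finVV x y)).2 ⟨y, 1, Subgroup.one_mem _, by simp⟩
  | succ n ih =>
    intro y hy
    obtain ⟨y', ha, hd⟩ := tm_exists_closer S.hT.connected (o := x) (v := y)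
      (by rintro rfl; simp at hy)
    have hy' : T.dist x y' = n + 1 := by omega
    obtain ⟨θ, c, hθ, cinj, hc, hθc, -⟩ := S.br x y' (by rintro rfl; simp at hy')
    obtain ⟨j, hj⟩ := (hc y).2 ⟨ha.symm, by omega⟩
    have hex : ∀ z : V, ∃ g : G, z ∈ orb (MulAction.stabilizer G x) y' → g • x = x ∧ g • y' = z := by
      intro z
      by_cases hz : z ∈ orb (MulAction.stabilizer G x) y'
      · obtain ⟨g, hg, e⟩ := hz
        exact ⟨g, fun _ => ⟨hg, e⟩⟩
      · exact ⟨1, fun h => absurd h hz⟩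
    choose f hf using hex
    have h1 := Set.ncard_le_ncard_of_injOn (s := orb (MulAction.stabilizer G x) y' ×ˢ
      (Set.univ : Set (Fin k))) (t := orb (MulAction.stabilizer G x) y)
      (fun p => f p.1 • c p.2) (by
        rintro ⟨z, i⟩ ⟨hz, -⟩
        refine ⟨f z * θ (Equiv.swap j i), ?_, ?_⟩
        · show (f z * θ (Equiv.swap j i)) • x = x
          rw [mul_smul, hθ _ _ (by simp), (hf z hz).1]
        · simp only
          rw [mul_smul, ← hj, hθc, Equiv.swap_apply_left]) (by
        rintro ⟨z, i⟩ ⟨hz, -⟩ ⟨z', i'⟩ ⟨hz', -⟩ e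
        simp only at e hz hz'
        have fact : ∀ z, z ∈ orb (MulAction.stabilizer G x) y' → ∀ i, T.Adj (f z • c i) z ∧
            T.dist x z + 1 = T.dist x (f z • c i) := by
          intro z hz i
          have hci := (hc (c i)).1 ⟨i, rfl⟩
          obtain ⟨e1, e2⟩ := hf z hz
          constructor
          · rw [← SimpleGraph.dist_eq_one_iff_adj]
            nth_rewrite 2 [← e2]
            rw [S.distV, SimpleGraph.dist_eq_one_iff_adj]
            exact hci.1.symm
          · have d1 := S.distV (f z) x y'
            have d2 := S.distV (f z) x (c i)
            rw [e1] at d1 d2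
            rw [e2] at d1
            omega
        have p1 := fact z hz i
        have p2 := fact z' hz' i'
        rw [← e] at p2
        have ez := tm_parent_unique S.hT p1.1 p2.1 p1.2 p2.2
        subst ez
        have := cinj (smul_left_cancel _ e)
        rw [this]) (S.finVV x y)
    rw [Set.ncard_prod, Set.ncard_univ, Nat.card_eq_fintype_card, Fintype.card_fin] at h1
    calc k ^ (n + 1) = k ^ n * k := pow_succ _ _
      _ ≤ _ := Nat.mul_le_mul_right _ (ih y' hy')
      _ ≤ _ := h1

theorem TS.finWW (w w' : W) : (orb (MulAction.stabilizer G w) w').Finite := by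
  -- bounded distance from `w`
  have hball : ∀ n : ℕ, {z : W | Δ.dist w z ≤ n}.Finite := by
    intro n
    induction n with
    | zero =>
      refine (Set.finite_singleton w).subset ?_
      intro z hz
      have : Δ.dist w z = 0 := by simpa using hz
      exact ((S.hD.dist_eq_zero_iff).1 this).symm
    | succ n ih =>
      refine (ih.union (ih.biUnion (fun z _ => S.finW z))).subset ?_
      intro z hz
      have hz' : Δ.dist w z ≤ n + 1 := hz
      by_cases hzw : z = w
      · left; subst hzw; simp
      · obtain ⟨a, ha, hda⟩ := tm_exists_closer S.hD hzw
        right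
        simp only [Set.mem_iUnion]
        exact ⟨a, show Δ.dist w a ≤ n by omega, ha.symm⟩
  have hd : ∀ (g : G) (a b : W), Δ.dist (g • a) (g • b) ≤ Δ.dist a b := by
    intro g a b
    obtain ⟨p, hp⟩ := S.hD.exists_walk_length_eq_dist a b
    let F : Δ →g Δ := ⟨fun x => g • x, fun {a b} h => S.adjW g a b h⟩
    have := SimpleGraph.dist_le (p.map F)
    rw [SimpleGraph.Walk.length_map, hp] at this
    exact this
  refine (hball (Δ.dist w w')).subset ?_
  rintro _ ⟨g, hg, rfl⟩
  have hg' : g • w = w := hg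
  have := hd g w w'
  rw [hg'] at this
  exact this

theorem TS.nonhyp (w : W) (g : G) (C q : ℕ) (hq : 1 ≤ q) (hqk : q < k)
    (h : ∀ n : ℕ, (orb (MulAction.stabilizer G w) (g ^ n • w)).ncard ≤ C * q ^ n) :
    NonHyp T.dist g := by
  by_contra hg
  obtain ⟨x, hx⟩ := sr_growth (D := T.dist) (fun _ _ => SimpleGraph.dist_comm)
    (tm_four_point S.hT) S.distV hg
  set c1 := (orb (MulAction.stabilizer G x) w).ncard
  set c2 := (orb (MulAction.stabilizer G w) x).ncard
  have key : ∀ n : ℕ, k ^ n ≤ (c1 * C * c2 * k) * q ^ n := by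
    intro n
    have hd := hx n
    rcases Nat.eq_zero_or_pos n with rfl | hn
    · have h0 := h 0
      have p1 : 0 < c1 := (Set.ncard_pos (S.finVW x w)).2 ⟨w, 1, Subgroup.one_mem _, by simp⟩
      have p2 : 0 < c2 := (Set.ncard_pos (S.finWV w x)).2 ⟨x, 1, Subgroup.one_mem _, by simp⟩
      have p3 : 0 < C := by
        rcases Nat.eq_zero_or_pos C with rfl | hC
        · have := (Set.ncard_pos (S.finWW w (g ^ 0 • w))).2 ⟨_, 1, Subgroup.one_mem _, rfl⟩
          omega
        · exact hC
      have p4 : 0 < k := S.hk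
      simp only [pow_zero, mul_one]
      exact Nat.succ_le_of_lt (by positivity)
    · obtain ⟨m, hm⟩ : ∃ m, T.dist x (g ^ n • x) = m + 1 := ⟨T.dist x (g ^ n • x) - 1, by omega⟩
      have s1 := S.sphere x m _ hm
      have s2 := orb_mul (MulAction.stabilizer G x) w (g ^ n • x) (S.finVW x w) (S.finWV w _)
      have s3 := orb_mul (MulAction.stabilizer G w) (g ^ n • w) (g ^ n • x) (S.finWW w _)
        (S.finWV _ _)
      have s4 : (orb (MulAction.stabilizer G (g ^ n • w)) (g ^ n • x)).ncard ≤ c2 := by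
        refine (Set.ncard_le_ncard (t := (fun y => g ^ n • y) '' orb (MulAction.stabilizer G w) x)
          ?_ ((S.finWV w x).image _)).trans (Set.ncard_image_le (S.finWV w x))
        rintro _ ⟨u, hu, rfl⟩
        have hu' : u • g ^ n • w = g ^ n • w := hu
        refine ⟨((g ^ n)⁻¹ * u * g ^ n) • x, ⟨_, ?_, rfl⟩, ?_⟩
        · show ((g ^ n)⁻¹ * u * g ^ n) • w = w
          rw [mul_smul, mul_smul, hu', inv_smul_smul]
        · simp [mul_smul]
      have s5 := h n
      calc k ^ n ≤ k ^ (m + 1) := Nat.pow_le_pow_right S.hk (by omega)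
        _ = k ^ m * k := pow_succ _ _
        _ ≤ (c1 * ((C * q ^ n) * c2)) * k := by
          refine Nat.mul_le_mul_right _ (s1.trans (s2.trans (Nat.mul_le_mul_left _ (s3.trans ?_))))
          exact Nat.mul_le_mul s5 s4
        _ = _ := by ring
  obtain ⟨n, hn⟩ := pow_unbounded_of_one_lt (((c1 * C * c2 * k : ℕ)) : ℝ)
    (y := (k : ℝ) / q) (by
      rw [one_lt_div (by exact_mod_cast hq)]
      exact_mod_cast hqk)
  rw [div_pow, lt_div_iff₀ (by positivity)] at hn
  have := key n
  have h2 : ((k ^ n : ℕ) : ℝ) ≤ ((c1 * C * c2 * k * q ^ n : ℕ) : ℝ) := by exact_mod_cast this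
  push_cast at h2 hn
  linarith

end Setup

section Final
variable {V W : Type*} {G : Type*} [Group G] [MulAction G V] [MulAction G W]
variable {k : ℕ} {T : SimpleGraph V} {Δ : SimpleGraph W}

theorem TS.horb (S : TS G k T Δ) (hk2 : 2 ≤ k) (hm : ∀ w, (Δ.neighborSet w).ncard ≤ k)
    (w1 w2 w3 : W) (h1 : Δ.Adj w2 w1) (h3 : Δ.Adj w2 w3) :
    (orb (MulAction.stabilizer G w1 ⊓ MulAction.stabilizer G w2) w3).ncard ≤ k - 1 := by
  by_cases e : w3 = w1
  · subst e
    have : orb (MulAction.stabilizer G w3 ⊓ MulAction.stabilizer G w2) w3 ⊆ {w3} := by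
      rintro _ ⟨g, ⟨hg, -⟩, rfl⟩
      exact hg
    have := Set.ncard_le_ncard this (Set.finite_singleton _)
    rw [Set.ncard_singleton] at this
    omega
  · have : orb (MulAction.stabilizer G w1 ⊓ MulAction.stabilizer G w2) w3 ⊆
        Δ.neighborSet w2 \ {w1} := by
      rintro _ ⟨g, ⟨hg, hg2⟩, rfl⟩
      have hg' : g • w1 = w1 := hg
      have hg2' : g • w2 = w2 := hg2
      constructor
      · have := S.adjW g _ _ h3
        rw [hg2'] at this
        exact this
      · intro h
        have h' : g • w3 = w1 := h
        rw [← hg'] at h'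
        exact e (smul_left_cancel _ h')
    have h := Set.ncard_le_ncard this ((S.finW w2).subset Set.sdiff_subset)
    rw [Set.ncard_sdiff_singleton_of_mem (show w1 ∈ Δ.neighborSet w2 from h1)] at h
    have := hm w2
    omega

theorem index_three {Γ : Type*} [Group Γ] (hc : Nat.card Γ = 3) (H : Subgroup Γ)
    (h : H.index ≤ 2) : H = ⊤ := by
  have hd := H.index_dvd_card
  rw [hc, Nat.dvd_prime Nat.prime_three] at hd
  rw [← Subgroup.index_eq_one]
  omega

theorem index_alt {k : ℕ} (hk : 5 ≤ k) (H : Subgroup (alternatingGroup (Fin k)))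
    (h0 : H.index ≠ 0) (h : H.index ≤ k - 1) : H = ⊤ := by
  classical
  have hs : IsSimpleGroup (alternatingGroup (Fin k)) :=
    alternatingGroup.isSimpleGroup (by simpa using hk)
  by_contra hne
  have hcore : H.normalCore = ⊥ := by
    rcases hs.eq_bot_or_eq_top_of_normal H.normalCore inferInstance with h | h
    · exact h
    · exact absurd (top_le_iff.1 (h ▸ H.normalCore_le)) hne
  rw [Subgroup.normalCore_eq_ker] at hcore
  have hinj := (MonoidHom.ker_eq_bot_iff _).1 hcore
  have hfin : Finite (alternatingGroup (Fin k) ⧸ H) := Nat.finite_of_card_ne_zero h0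
  have h1 := Nat.card_le_card_of_injective _ hinj
  rw [Nat.card_perm] at h1
  have h2 : (Nat.card (alternatingGroup (Fin k) ⧸ H)).factorial ≤ (k - 1).factorial :=
    Nat.factorial_le h
  have hnt : Nontrivial (Fin k) := ⟨⟨⟨0, by omega⟩, ⟨1, by omega⟩, by simp⟩⟩
  have h3 : 2 * Nat.card (alternatingGroup (Fin k)) = k.factorial := by
    rw [Nat.card_eq_fintype_card, two_mul_card_alternatingGroup, Fintype.card_perm, Fintype.card_fin]
  have h4 : k.factorial = k * (k - 1).factorial := (Nat.mul_factorial_pred (by omega)).symm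
  have h5 : 0 < (k - 1).factorial := Nat.factorial_pos _
  nlinarith

theorem TS.adj_iff (S : TS G k T Δ) (g : G) (u v : W) : Δ.Adj (g • u) (g • v) ↔ Δ.Adj u v := by
  refine ⟨fun h => ?_, S.adjW g u v⟩
  simpa using S.adjW g⁻¹ _ _ h

theorem TS.distW (S : TS G k T Δ) (g : G) (a b : W) : Δ.dist (g • a) (g • b) = Δ.dist a b := by
  have hd : ∀ (g : G) (a b : W), Δ.dist (g • a) (g • b) ≤ Δ.dist a b := by
    intro g a b
    obtain ⟨p, hp⟩ := S.hD.exists_walk_length_eq_dist a b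
    let F : Δ →g Δ := ⟨fun x => g • x, fun {a b} h => S.adjW g a b h⟩
    have := SimpleGraph.dist_le (p.map F)
    rw [SimpleGraph.Walk.length_map, hp] at this
    exact this
  refine le_antisymm (hd g a b) ?_
  simpa using hd g⁻¹ (g • a) (g • b)

theorem TS.nonhyp_ball (S : TS G 4 T Δ) (hm : ∀ w, (Δ.neighborSet w).ncard ≤ 4) (w : W) (g : G)
    (hg : g • w = w ∨ Δ.Adj w (g • w)) : NonHyp T.dist g := by
  classical
  have sph : ∀ n : ℕ, {z : W | Δ.dist w z = n}.Finite ∧ {z : W | Δ.dist w z = n}.ncard ≤ 4 * 3 ^ n := by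
    intro n
    induction n with
    | zero =>
      have : {z : W | Δ.dist w z = 0} ⊆ {w} := by
        intro z hz
        exact ((S.hD.dist_eq_zero_iff).1 hz).symm
      refine ⟨(Set.finite_singleton w).subset this, ?_⟩
      have := Set.ncard_le_ncard this (Set.finite_singleton _)
      rw [Set.ncard_singleton] at this
      omega
    | succ n ih =>
      rcases Nat.eq_zero_or_pos n with rfl | hn
      · have : {z : W | Δ.dist w z = 0 + 1} ⊆ Δ.neighborSet w := by
          intro z hz
          exact SimpleGraph.dist_eq_one_iff_adj.1 hz
        refine ⟨(S.finW w).subset this, ?_⟩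
        have := Set.ncard_le_ncard this (S.finW w)
        have := hm w
        omega
      · have hpar : ∀ z : W, ∃ a, z ≠ w → Δ.Adj z a ∧ Δ.dist w a + 1 = Δ.dist w z := by
          intro z
          by_cases h : z = w
          · exact ⟨w, fun h' => absurd h h'⟩
          · obtain ⟨a, ha⟩ := tm_exists_closer S.hD h
            exact ⟨a, fun _ => ha⟩
        choose p hp using hpar
        have hsub : {z : W | Δ.dist w z = n + 1} ⊆
            ⋃ z ∈ {z : W | Δ.dist w z = n}, Δ.neighborSet z := by
          intro z hz
          have hz' : Δ.dist w z = n + 1 := hz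
          have := hp z (by rintro rfl; simp at hz')
          simp only [Set.mem_iUnion]
          exact ⟨p z, by show Δ.dist w (p z) = n; omega, this.1.symm⟩
        have hfin : {z : W | Δ.dist w z = n + 1}.Finite :=
          (ih.1.biUnion (fun z _ => S.finW z)).subset hsub
        refine ⟨hfin, ?_⟩
        have hcount := Finset.card_le_mul_card_image_of_maps_to (s := hfin.toFinset)
          (t := ih.1.toFinset) (f := p) (by
            intro z hz
            simp only [Set.Finite.mem_toFinset, Set.mem_ofPred_eq] at hz ⊢
            have := hp z (by rintro rfl; simp at hz)
            omega) 3 (by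
            intro b hb
            simp only [Set.Finite.mem_toFinset, Set.mem_ofPred_eq] at hb
            have hbw : b ≠ w := by rintro rfl; simp at hb; omega
            have hq := hp b hbw
            have hsub2 : (((hfin.toFinset).filter (fun a => p a = b) : Finset W) : Set W) ⊆
                Δ.neighborSet b \ {p b} := by
              intro a ha
              simp only [Finset.coe_filter, Set.Finite.mem_toFinset, Set.mem_ofPred_eq] at ha
              have hpa := hp a (by rintro rfl; simp at ha)
              rw [ha.2] at hpa
              refine ⟨hpa.1.symm, ?_⟩
              intro e
              have e' : a = p b := e
              rw [← e'] at hq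
              omega
            have h := Set.ncard_le_ncard hsub2 ((S.finW b).subset Set.sdiff_subset)
            rw [Set.ncard_sdiff_singleton_of_mem (show p b ∈ Δ.neighborSet b from hq.1), Set.ncard_coe_finset] at h
            have := hm b
            omega)
        rw [← Set.ncard_eq_toFinset_card _ hfin, ← Set.ncard_eq_toFinset_card _ ih.1] at hcount
        have := ih.2
        rw [pow_succ]
        omega
  have hdist : ∀ n : ℕ, Δ.dist w (g ^ n • w) ≤ n := by
    intro n
    induction n with
    | zero => simp
    | succ n ih =>
      have h1 : Δ.dist w (g • w) ≤ 1 := by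
        rcases hg with h | h
        · rw [h]; simp
        · exact (SimpleGraph.dist_eq_one_iff_adj.2 h).le
      have h2 := S.hD.dist_triangle (u := w) (v := g ^ n • w) (w := g ^ (n + 1) • w)
      have h3 : Δ.dist (g ^ n • w) (g ^ (n + 1) • w) = Δ.dist w (g • w) := by
        rw [pow_succ, mul_smul, S.distW]
      omega
  refine S.nonhyp w g 4 3 (by norm_num) (by norm_num) (fun n => ?_)
  have hs : orb (MulAction.stabilizer G w) (g ^ n • w) ⊆
      {z : W | Δ.dist w z = Δ.dist w (g ^ n • w)} := by
    rintro _ ⟨u, hu, rfl⟩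
    have hu' : u • w = w := hu
    have := S.distW u w (g ^ n • w)
    rw [hu'] at this
    exact this
  refine (Set.ncard_le_ncard hs (sph _).1).trans ((sph _).2.trans ?_)
  exact Nat.mul_le_mul_left _ (Nat.pow_le_pow_right (by norm_num) (hdist n))

theorem TS.mu_mul (S : TS G k T Δ) (w : W) (x y : G) :
    (orb (MulAction.stabilizer G w) ((x * y) • w)).ncard ≤
      (orb (MulAction.stabilizer G w) (x • w)).ncard *
      (orb (MulAction.stabilizer G w) (y • w)).ncard := by
  refine (orb_mul (MulAction.stabilizer G w) (x • w) ((x * y) • w) (S.finWW _ _)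
    (S.finWW _ _)).trans (Nat.mul_le_mul_left _ ?_)
  refine (Set.ncard_le_ncard (t := (fun z => x • z) '' orb (MulAction.stabilizer G w) (y • w))
          ?_ ((S.finWW w _).image _)).trans (Set.ncard_image_le (S.finWW w _))
  rintro _ ⟨u, hu, rfl⟩
  have hu' : u • x • w = x • w := hu
  refine ⟨(x⁻¹ * u * x) • y • w, ⟨_, ?_, rfl⟩, ?_⟩
  · show (x⁻¹ * u * x) • w = w
    rw [mul_smul, mul_smul, hu', inv_smul_smul]
  · simp [mul_smul]

theorem TS.nonhyp_mu (S : TS G 4 T Δ) (w : W) (g : G)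
    (hg : (orb (MulAction.stabilizer G w) (g • w)).ncard ≤ 3) : NonHyp T.dist g := by
  refine S.nonhyp w g 1 3 (by norm_num) (by norm_num) (fun n => ?_)
  induction n with
  | zero =>
    have : orb (MulAction.stabilizer G w) (g ^ 0 • w) ⊆ {w} := by
      rintro _ ⟨u, hu, rfl⟩
      have hu' : u • w = w := hu
      simp [hu']
    have := Set.ncard_le_ncard this (Set.finite_singleton _)
    rw [Set.ncard_singleton] at this
    omega
  | succ n ih =>
    rw [pow_succ]
    refine (S.mu_mul w _ _).trans ?_
    rw [pow_succ, ← mul_assoc]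
    exact Nat.mul_le_mul ih hg

theorem TS.serre_final (S : TS G 4 T Δ) (hm : ∀ w, (Δ.neighborSet w).ncard ≤ 4) (w : W) (a b : G)
    (ha : a • w = w ∨ Δ.Adj w (a • w)) (hb : b • w = w ∨ Δ.Adj w (b • w))
    (hcov : ∀ z, Δ.Adj w z → ∃ u : G, u • w = w ∧ (z = u • a • w ∨ z = u • a⁻¹ • w ∨ z = u • b • w))
    (hcross : ∀ x y : G, (x = a ∨ x = a⁻¹) → (y = b ∨ y = b⁻¹) →
      NonHyp T.dist (x * y) ∧ NonHyp T.dist (y * x)) : False := by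
  have hinvg : ∀ g : G, (g • w = w ∨ Δ.Adj w (g • w)) → (g⁻¹ • w = w ∨ Δ.Adj w (g⁻¹ • w)) := by
    rintro g (h | h)
    · left; rw [inv_smul_eq_iff]; exact h.symm
    · right
      have := S.adjW g⁻¹ _ _ h
      rw [inv_smul_smul] at this
      exact this.symm
  set Q : Set G := {g | g • w = w} ∪ ({a, a⁻¹} ∪ {b, b⁻¹}) with hQ
  have hQgood : ∀ g ∈ Q, g • w = w ∨ Δ.Adj w (g • w) := by
    rintro g (h | (rfl | rfl) | (rfl | rfl))
    · exact Or.inl h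
    · exact ha
    · exact hinvg _ ha
    · exact hb
    · exact hinvg _ hb
  have hN1 : NonHyp T.dist (1 : G) := S.nonhyp_ball hm w 1 (Or.inl (one_smul _ _))
  have hQinv : ∀ g ∈ Q, g⁻¹ ∈ Q := by
    rintro g (h | (rfl | rfl) | (rfl | rfl))
    · left
      show g⁻¹ • w = w
      rw [inv_smul_eq_iff]; exact Eq.symm h
    · right; left; right; rfl
    · right; left; left; simp
    · right; right; right; rfl
    · right; right; left; simp
  have hpair : ∀ (c : G) (x y : G), (x = c ∨ x = c⁻¹) → (y = c ∨ y = c⁻¹) →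
      x = y ∨ NonHyp T.dist (x * y) := by
    rintro c x y (rfl | rfl) (rfl | rfl)
    · exact Or.inl rfl
    · right; simpa using hN1
    · right; simpa using hN1
    · exact Or.inl rfl
  have hprod : ∀ x ∈ Q, ∀ y ∈ Q, x = y ∨ NonHyp T.dist (x * y) := by
    intro x hx y hy
    rcases hx with hx | hx
    · right
      have hx' : x • w = w := hx
      refine S.nonhyp_ball hm w _ ?_
      rcases hQgood y hy with h | h
      · left; rw [mul_smul, h, hx']
      · right
        have := S.adjW x _ _ h
        rw [hx'] at this
        rw [mul_smul]; exact this
    · rcases hy with hy | hy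
      · right
        have hy' : y • w = w := hy
        refine S.nonhyp_ball hm w _ ?_
        rw [mul_smul, hy']
        exact hQgood x (Or.inr hx)
      · rcases hx with hx | hx <;> rcases hy with hy | hy
        · exact hpair a x y hx hy
        · exact Or.inr (hcross x y hx hy).1
        · exact Or.inr (hcross y x hy hx).2
        · exact hpair b x y hx hy
  obtain ⟨x⟩ := S.hT.connected.nonempty
  obtain ⟨M₀, hM₀⟩ := S.finVbound w x
  set F : Set ℕ := (fun g : G => T.dist x (g • x)) '' Q with hF
  have hFne : F.Nonempty := ⟨_, a, Or.inr (Or.inl (Or.inl rfl)), rfl⟩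
  have hFb : BddAbove F := by
    refine ⟨M₀ + T.dist x (a • x) + T.dist x (a⁻¹ • x) + T.dist x (b • x) + T.dist x (b⁻¹ • x), ?_⟩
    rintro _ ⟨g, (h | (rfl | rfl) | (rfl | rfl)), rfl⟩
    · have := hM₀ g h
      simp only; omega
    all_goals (simp only; omega)
  obtain ⟨a₀, ha₀, hMa⟩ := Nat.sSup_mem hFne hFb
  have hser := sr_serre (D := T.dist) (fun _ => SimpleGraph.dist_self)
    (fun _ _ => SimpleGraph.dist_comm) (tm_four_point S.hT) S.distV Q hQinv
    (fun g hg => S.nonhyp_ball hm w g (hQgood g hg)) hprod x (sSup F)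
    (fun g hg => le_csSup hFb ⟨g, hg, rfl⟩) a₀ ha₀ hMa
  have hmem : ∀ g ∈ Q, g ∈ Subgroup.closure Q := fun g hg => Subgroup.subset_closure hg
  have htr : ∀ z : W, ∃ h ∈ Subgroup.closure Q, h • w = z := by
    intro z
    obtain ⟨p⟩ := S.hD.preconnected w z
    have key : ∀ c e : W, Δ.Walk c e → (∃ h ∈ Subgroup.closure Q, h • w = c) →
        (∃ h ∈ Subgroup.closure Q, h • w = e) := by
      intro c e p
      induction p with
      | nil => exact id
      | cons h p ih =>
        rintro ⟨g, hg, rfl⟩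
        apply ih
        have h2 := S.adjW g⁻¹ _ _ h
        rw [inv_smul_smul] at h2
        obtain ⟨u, hu, hz⟩ := hcov _ h2
        have huQ := hmem u (Or.inl hu)
        rcases hz with hz | hz | hz
        · exact ⟨g * u * a, mul_mem (mul_mem hg huQ) (hmem _ (Or.inr (Or.inl (Or.inl rfl)))), by
            rw [mul_smul, mul_smul, ← hz, smul_inv_smul]⟩
        · exact ⟨g * u * a⁻¹, mul_mem (mul_mem hg huQ) (hmem _ (Or.inr (Or.inl (Or.inr rfl)))), by
            rw [mul_smul, mul_smul, ← hz, smul_inv_smul]⟩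
        · exact ⟨g * u * b, mul_mem (mul_mem hg huQ) (hmem _ (Or.inr (Or.inr (Or.inl rfl)))), by
            rw [mul_smul, mul_smul, ← hz, smul_inv_smul]⟩
    exact key _ _ p ⟨1, one_mem _, one_smul _ _⟩
  refine S.unbounded x (sSup F) (fun g => hser g ?_)
  obtain ⟨h, hh, e⟩ := htr (g • w)
  have : h⁻¹ * g ∈ Subgroup.closure Q := hmem _ (Or.inl (by
    show (h⁻¹ * g) • w = w
    rw [mul_smul, inv_smul_eq_iff, e]))
  simpa using mul_mem hh this

theorem TS.four (S : TS G 4 T Δ) (hm : ∀ w, (Δ.neighborSet w).ncard ≤ 4) (w : W) (a : G)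
    (ha : Δ.Adj w (a • w)) (h3 : 3 ≤ (orb (MulAction.stabilizer G w) (a • w)).ncard) : False := by
  set O := orb (MulAction.stabilizer G w) (a • w) with hO
  have hsub : ∀ c, Δ.Adj w c → orb (MulAction.stabilizer G w) c ⊆ Δ.neighborSet w := by
    rintro c hc _ ⟨u, hu, rfl⟩
    have hu' : u • w = w := hu
    have := S.adjW u _ _ hc
    rw [hu'] at this
    exact this
  have hOs : O ⊆ Δ.neighborSet w := hsub _ ha
  have hOf : O.Finite := (S.finW w).subset hOs
  have ha' : Δ.Adj w (a⁻¹ • w) := by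
    have := S.adjW a⁻¹ _ _ ha
    rw [inv_smul_smul] at this
    exact this.symm
  -- at most one vertex outside
  have hrest : ∀ y z, Δ.Adj w y → Δ.Adj w z → y ∉ O → z ∉ O → y = z := by
    intro y z hy hz hyO hzO
    by_contra hne
    have hs : insert y (insert z O) ⊆ Δ.neighborSet w :=
      Set.insert_subset hy (Set.insert_subset hz hOs)
    have h1 := Set.ncard_le_ncard hs (S.finW w)
    rw [Set.ncard_insert_of_notMem (by simp [hne, hyO]) (hOf.insert _),
      Set.ncard_insert_of_notMem hzO hOf] at h1
    have := hm w
    omega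
  have hone : ∀ x y : G, (x = a ∨ x = a⁻¹) → (y = 1 ∨ y = 1⁻¹) →
      NonHyp T.dist (x * y) ∧ NonHyp T.dist (y * x) := by
    intro x y hx hy
    have hy1 : y = 1 := by simpa using hy
    subst hy1
    rw [mul_one, one_mul, and_self]
    rcases hx with rfl | rfl
    · exact S.nonhyp_ball hm w _ (Or.inr ha)
    · exact S.nonhyp_ball hm w _ (Or.inr ha')
  by_cases hA : a⁻¹ • w ∈ O
  · by_cases hB : ∃ w', Δ.Adj w w' ∧ w' ∉ O
    · obtain ⟨w', hw', hwO⟩ := hB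
      obtain ⟨b, rfl⟩ := S.transW w w'
      have hb' : Δ.Adj w (b⁻¹ • w) := by
        have := S.adjW b⁻¹ _ _ hw'
        rw [inv_smul_smul] at this
        exact this.symm
      have hbO : b⁻¹ • w ∉ O := by
        rintro ⟨u, hu, e⟩
        have hu' : u • w = w := hu
        obtain ⟨u', hu1, e'⟩ := hA
        have hu1' : u' • w = w := hu1
        apply hwO
        -- `(b * u * a)` fixes `w`
        have e : u • a • w = b⁻¹ • w := e
        have e' : u' • a • w = a⁻¹ • w := e'
        refine ⟨(b * u * a) * u', ?_, ?_⟩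
        · show ((b * u * a) * u') • w = w
          rw [mul_smul, hu1', mul_smul, mul_smul, e, smul_inv_smul]
        · show ((b * u * a) * u') • a • w = b • w
          rw [mul_smul, e', mul_smul, mul_smul, smul_inv_smul, hu']
      have hbb := hrest _ _ hb' hw' hbO hwO
      have hstab : ∀ u : G, u • w = w → ∀ c, Δ.Adj w c → c ∉ O → u • c ∉ O := by
        rintro u hu c hc hcO ⟨u', hu', e⟩
        have hu1 : u' • w = w := hu'
        apply hcO
        refine ⟨u⁻¹ * u', ?_, ?_⟩
        · show (u⁻¹ * u') • w = w
          rw [mul_smul, hu1, inv_smul_eq_iff, hu]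
        · show (u⁻¹ * u') • a • w = c
          rw [mul_smul, inv_smul_eq_iff]; exact e
      have mub : (orb (MulAction.stabilizer G w) (b • w)).ncard ≤ 1 := by
        have : orb (MulAction.stabilizer G w) (b • w) ⊆ {b • w} := by
          rintro _ ⟨u, hu, rfl⟩
          exact hrest _ _ (hsub _ hw' ⟨u, hu, rfl⟩) hw' (hstab u hu _ hw' hwO) hwO
        have := Set.ncard_le_ncard this (Set.finite_singleton _)
        rwa [Set.ncard_singleton] at this
      have mua : O.ncard ≤ 3 := by
        have h1 := Set.ncard_le_ncard (Set.insert_subset (show b • w ∈ Δ.neighborSet w from hw') hOs) (S.finW w)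
        rw [Set.ncard_insert_of_notMem hwO hOf] at h1
        have := hm w
        omega
      have mua' : (orb (MulAction.stabilizer G w) (a⁻¹ • w)).ncard ≤ 3 := by
        refine (Set.ncard_le_ncard ?_ hOf).trans mua
        rintro _ ⟨u, hu, rfl⟩
        obtain ⟨u', hu', e⟩ := hA
        refine ⟨u * u', mul_mem hu hu', ?_⟩
        show (u * u') • a • w = u • a⁻¹ • w
        have e' : u' • a • w = a⁻¹ • w := e
        rw [mul_smul, e']
      refine S.serre_final hm w a b (Or.inr ha) (Or.inr hw') ?_ ?_
      · intro z hz
        by_cases hzO : z ∈ O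
        · obtain ⟨u, hu, e⟩ := hzO
          exact ⟨u, hu, Or.inl e.symm⟩
        · exact ⟨1, one_smul _ _, Or.inr (Or.inr (by rw [one_smul]; exact hrest _ _ hz hw' hzO hwO))⟩
      · intro x y hx hy
        have hx3 : (orb (MulAction.stabilizer G w) (x • w)).ncard ≤ 3 := by
          rcases hx with rfl | rfl
          · exact mua
          · exact mua'
        have hy1 : (orb (MulAction.stabilizer G w) (y • w)).ncard ≤ 1 := by
          rcases hy with rfl | rfl
          · exact mub
          · rw [hbb]; exact mub
        exact ⟨S.nonhyp_mu w _ ((S.mu_mul w x y).trans (Nat.mul_le_mul hx3 hy1)),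
          S.nonhyp_mu w _ ((S.mu_mul w y x).trans (Nat.mul_le_mul hy1 hx3))⟩
    · push Not at hB
      refine S.serre_final hm w a 1 (Or.inr ha) (Or.inl (one_smul _ _)) ?_ hone
      intro z hz
      obtain ⟨u, hu, e⟩ := hB z hz
      exact ⟨u, hu, Or.inl e.symm⟩
  · refine S.serre_final hm w a 1 (Or.inr ha) (Or.inl (one_smul _ _)) ?_ hone
    intro z hz
    by_cases hzO : z ∈ O
    · obtain ⟨u, hu, e⟩ := hzO
      exact ⟨u, hu, Or.inl e.symm⟩
    · exact ⟨1, one_smul _ _, Or.inr (Or.inl (by rw [one_smul]; exact hrest _ _ hz ha' hzO hA))⟩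

theorem TS.degree (S : TS G k T Δ) (w : W) : k + 1 ≤ (Δ.neighborSet w).ncard := by
  classical
  by_contra hlt
  push Not at hlt
  have hm : ∀ w', (Δ.neighborSet w').ncard ≤ k := by
    intro w'
    obtain ⟨g, rfl⟩ := S.transW w' w
    refine le_trans (Set.ncard_le_ncard_of_injOn (fun z => g • z) ?_ ?_ (S.finW _))
      (Nat.le_of_lt_succ hlt)
    · intro z hz
      exact S.adjW g _ _ hz
    · intro z _ z' _ e
      exact smul_left_cancel _ e
  by_cases hdeg : ∀ w', (Δ.neighborSet w').ncard ≤ 1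
  · refine S.infW ?_
    have huniv : (insert w (Δ.neighborSet w)) = Set.univ := by
      refine Set.eq_univ_of_forall (fun z => ?_)
      obtain ⟨p⟩ := S.hD.preconnected w z
      have key : ∀ c e : W, Δ.Walk c e → c ∈ insert w (Δ.neighborSet w) →
          e ∈ insert w (Δ.neighborSet w) := by
        intro c e p
        induction p with
        | nil => exact id
        | @cons c c' e h p ih =>
          intro hc
          apply ih
          rcases hc with rfl | hc
          · right; exact h
          · left
            have hc' : Δ.Adj w c := hc
            exact (Set.ncard_le_one (S.finW c)).1 (hdeg c) _ h _ hc'.symm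
      exact key _ _ p (Or.inl rfl)
    exact Set.finite_univ_iff.1 (huniv ▸ (S.finW w).insert w)
  · push Not at hdeg
    obtain ⟨w₀, hw₀⟩ := hdeg
    obtain ⟨w₁, h01⟩ : (Δ.neighborSet w₀).Nonempty := Set.nonempty_of_ncard_ne_zero (by omega)
    have hk2 : 2 ≤ k := by have := hm w₀; omega
    have horb := S.horb hk2 hm
    rcases Nat.lt_or_ge k 5 with hk5 | hk5
    · obtain rfl | rfl | rfl : k = 2 ∨ k = 3 ∨ k = 4 := by omega
      · refine S.kill 1 ⊤ (fun H h0 h1 => Subgroup.index_eq_one.1 (by omega)) (Equiv.swap 0 1)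
          trivial 0 (by decide) w₀ w₁ h01 horb
      · let π : Equiv.Perm (Fin 3) := Equiv.swap 0 1 * Equiv.swap 1 2
        have ho : orderOf π = 3 := orderOf_eq_prime (p := 3) (by decide) (by decide)
        refine S.kill 2 (Subgroup.zpowers π) (fun H _ h1 => index_three
          (by rw [Nat.card_zpowers, ho]) H h1) π (Subgroup.mem_zpowers _) 0 (by decide)
          w₀ w₁ h01 horb
      · by_cases hbig : ∀ w' c, Δ.Adj w' c → (orb (MulAction.stabilizer G w') c).ncard ≤ 2
        · let π : Equiv.Perm (Fin 4) := Equiv.swap 0 1 * Equiv.swap 1 2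
          have ho : orderOf π = 3 := orderOf_eq_prime (p := 3) (by decide) (by decide)
          refine S.kill 2 (Subgroup.zpowers π) (fun H _ h1 => index_three
            (by rw [Nat.card_zpowers, ho]) H h1) π (Subgroup.mem_zpowers _) 0 (by decide)
            w₀ w₁ h01 ?_
          intro w1 w2 w3 _ h3
          refine (Set.ncard_le_ncard ?_ (S.finWW w2 w3)).trans (hbig w2 w3 h3)
          rintro _ ⟨g, ⟨-, hg⟩, rfl⟩
          exact ⟨g, hg, rfl⟩
        · push Not at hbig
          obtain ⟨w', c, hc, h3⟩ := hbig
          obtain ⟨a, rfl⟩ := S.transW w' c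
          exact S.four hm w' a hc h3
    · let i0 : Fin k := ⟨0, by omega⟩
      let i1 : Fin k := ⟨1, by omega⟩
      let i2 : Fin k := ⟨2, by omega⟩
      have h01' : i0 ≠ i1 := by simp [i0, i1]
      have h12' : i1 ≠ i2 := by simp [i1, i2]
      have h02' : i0 ≠ i2 := by simp [i0, i2]
      refine S.kill (k - 1) (alternatingGroup (Fin k)) (index_alt hk5)
        (Equiv.swap i0 i1 * Equiv.swap i1 i2) ?_ i0 ?_ w₀ w₁ h01 horb
      · rw [Equiv.Perm.mem_alternatingGroup, Equiv.Perm.sign_mul, Equiv.Perm.sign_swap h01',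
          Equiv.Perm.sign_swap h12']
        simp
      · rw [Equiv.Perm.mul_apply, Equiv.swap_apply_of_ne_of_ne h01' h02', Equiv.swap_apply_left]
        exact h01'.symm

end Final

theorem tree_dist_map {V : Type*} {T : SimpleGraph V} (hc : T.Connected) {G : Type*} [Group G]
    (ρ : G →* Equiv.Perm V) (hpres : ∀ (g : G) (u v : V), T.Adj u v → T.Adj (ρ g u) (ρ g v))
    (g : G) (a b : V) : T.dist (ρ g a) (ρ g b) = T.dist a b := by
  have hd : ∀ (g : G) (a b : V), T.dist (ρ g a) (ρ g b) ≤ T.dist a b := by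
    intro g a b
    obtain ⟨p, hp⟩ := hc.exists_walk_length_eq_dist a b
    let F : T →g T := ⟨fun x => ρ g x, fun {a b} h => hpres g a b h⟩
    have := SimpleGraph.dist_le (p.map F)
    rw [SimpleGraph.Walk.length_map, hp] at this
    exact this
  refine le_antisymm (hd g a b) ?_
  simpa using hd g⁻¹ (ρ g a) (ρ g b)


/-- Let `d ≥ 2` and let `T` be a `d`-regular tree.  If `G` is a Hausdorff topological group
with a faithful vertex-transitive action on `T` by graph automorphisms such that every
automorphism of `T` is induced by an element of `G`, vertex stabilizers are compact open,
and pointwise stabilizers of finite vertex sets form a neighbourhood basis of the identity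
(so that `G` is `Aut(T)` with the permutation topology), then every Cayley–Abels graph for
`G` has degree at least `d`; consequently `T` itself is a Cayley–Abels graph of minimal
degree for `G`, i.e. `md(Aut(T_d)) = d`. -/
theorem minimalDegree_aut_regular_tree {V : Type*} (G : Type*) [Group G]
    [TopologicalSpace G] [IsTopologicalGroup G] [T2Space G]
    (d : ℕ) (hd : 2 ≤ d) (T : SimpleGraph V) (hT : T.IsTree)
    (hreg : ∀ v : V, (T.neighborSet v).ncard = d)
    (ρ : G →* Equiv.Perm V)
    (hfaith : ∀ g : G, (∀ v : V, ρ g v = v) → g = 1)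
    (htrans : ∀ u v : V, ∃ g : G, ρ g u = v)
    (hpres : ∀ (g : G) (u v : V), T.Adj u v → T.Adj (ρ g u) (ρ g v))
    (hfull : ∀ φ : T ≃g T, ∃ g : G, ∀ v : V, ρ g v = φ v)
    (hstab : ∀ v : V, IsCompact {g : G | ρ g v = v} ∧ IsOpen {g : G | ρ g v = v})
    (hbasis : (nhds (1 : G)).HasBasis (fun _ : Finset V => True)
      (fun S : Finset V => {g : G | ∀ v ∈ S, ρ g v = v})) :
    IsCayleyAbels T ρ ∧
      ∀ (W : Type u) (Δ : SimpleGraph W) (σ : G →* Equiv.Perm W),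
        IsCayleyAbels Δ σ → ∀ w : W, d ≤ (Δ.neighborSet w).ncard := by
  classical
  refine ⟨⟨hT.connected, fun v => Set.finite_of_ncard_ne_zero (by rw [hreg]; omega), hpres,
    htrans, hstab⟩, ?_⟩
  rintro W Δ σ ⟨cD, cfin, cadj, ctrans, cstab⟩ w
  letI iV : MulAction G V := MulAction.compHom V ρ
  letI iW : MulAction G W := MulAction.compHom W σ
  have sV : ∀ (g : G) (v : V), g • v = ρ g v := fun _ _ => rfl
  have sW : ∀ (g : G) (v : W), g • v = σ g v := fun _ _ => rfl
  obtain ⟨k, rfl⟩ : ∃ k, d = k + 1 := ⟨d - 1, by omega⟩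
  have hinj : ∀ g h : G, (∀ v, ρ g v = ρ h v) → g = h := by
    intro g h e
    have : h⁻¹ * g = 1 := hfaith _ (fun v => by
      rw [map_mul, Equiv.Perm.mul_apply, e v, ← Equiv.Perm.mul_apply, ← map_mul]
      simp)
    exact (inv_mul_eq_one.1 this).symm
  have S : TS G k T Δ :=
    { hT := hT
      hk := by omega
      hreg := hreg
      transV := htrans
      distV := tree_dist_map hT.connected ρ hpres
      br := by
        intro o v hv
        obtain ⟨θ, c, h1, h2, h3, h4, h5⟩ := br_main hT hreg o v hv
        choose F hF using hfull
        refine ⟨MonoidHom.mk' (fun π => F (θ π)) (fun π π' => hinj _ _ (fun x => ?_)), c, ?_, h2, h3,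
          ?_, ?_⟩
        · rw [hF, map_mul ρ, Equiv.Perm.mul_apply, hF, hF, map_mul θ]
          rfl
        · intro π u hu
          show ρ (F (θ π)) u = u
          rw [hF, h1 π u hu]
        · intro π i
          show ρ (F (θ π)) (c i) = _
          rw [hF, h4]
        · intro π i hi n
          obtain ⟨z, hz⟩ := h5 π i hi n
          refine ⟨z, ?_⟩
          show n ≤ T.dist z (ρ (F (θ π)) z)
          rw [hF]; exact hz
      hD := cD
      finW := cfin
      adjW := cadj
      transW := ctrans
      finWV := fun w x => orb_finite _ (cstab w).1 x (hstab x).2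
      finVV := fun y x => orb_finite _ (hstab y).1 x (hstab x).2
      finVW := fun x w => orb_finite _ (hstab x).1 w (cstab w).2
      basis := by
        intro w w'
        have hn : {g : G | σ g w = w} ∩ {g : G | σ g w' = w'} ∈ nhds (1 : G) :=
          ((cstab w).2.inter (cstab w').2).mem_nhds (by simp)
        obtain ⟨Q, -, hQ⟩ := hbasis.mem_iff.1 hn
        obtain ⟨o⟩ := hT.connected.nonempty
        refine ⟨o, Q.sup (fun s => T.dist o s), fun g hg => ?_⟩
        exact hQ (fun v hv => hg v (Finset.le_sup (f := fun s => T.dist o s) hv)) }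
  exact S.degree w
end

section
/- Let G be a non-compact, compactly generated t.d.l.c. group. Then the following are equivalent: (1) G has a Cayley–Abels graph of degree 2 (equivalently, the two-sided line graph with vertex set ℤ, where i and j are adjacent if and only if |i − j| = 1, is a Cayley–Abels graph for G); (2) there exists a continuous surjective group homomorphism from G onto the infinite cyclic group ℤ or onto the infinite dihedral group D∞ (each with the discrete topology) whose kernel is a compact open subgroup of G. -/
/-- The two-sided line graph on `ℤ`: `i` and `j` are adjacent iff `|i - j| = 1`. -/
def lineGraphZ : SimpleGraph ℤ := SimpleGraph.fromRel (fun i j => j = i + 1)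

theorem lineAdj_iff (i j : ℤ) : lineGraphZ.Adj i j ↔ (j = i + 1 ∨ i = j + 1) := by
  unfold lineGraphZ
  rw [SimpleGraph.fromRel_adj]
  constructor
  · rintro ⟨_, h⟩; exact h
  · intro h; exact ⟨by omega, h⟩

theorem line_connected : lineGraphZ.Connected := by
  have key : ∀ (n : ℕ) (i : ℤ), lineGraphZ.Reachable i (i + n) := by
    intro n
    induction n with
    | zero => intro i; simp
    | succ k ih =>
      intro i
      refine (ih i).trans (SimpleGraph.Adj.reachable ?_)
      rw [lineAdj_iff]; left; push_cast; ring
  refine { preconnected := ?_, nonempty := ⟨0⟩ }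
  intro u v
  rcases le_total u v with h | h
  · have := key (v - u).toNat u
    rwa [Int.toNat_of_nonneg (by omega), add_sub_cancel] at this
  · have := key (u - v).toNat v
    rw [Int.toNat_of_nonneg (by omega), add_sub_cancel] at this
    exact this.symm

theorem line_locfin (v : ℤ) : (lineGraphZ.neighborSet v).Finite := by
  refine (Set.finite_Icc (v - 1) (v + 1)).subset ?_
  intro w hw
  rw [SimpleGraph.mem_neighborSet, lineAdj_iff] at hw
  rw [Set.mem_Icc]; omega

section topo
variable {G K : Type*} [Group G] [TopologicalSpace G] [IsTopologicalGroup G] [Group K]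

theorem cont_of_open_ker (φ : G →* K) (ho : IsOpen (φ.ker : Set G)) :
    @Continuous G K _ ⊥ φ := by
  let _ : TopologicalSpace K := ⊥
  have : DiscreteTopology K := ⟨rfl⟩
  refine continuous_of_continuousAt_one φ ?_
  rw [ContinuousAt, map_one, nhds_discrete K, Filter.tendsto_pure]
  exact ho.mem_nhds (one_mem φ.ker)

theorem preimage_open (φ : G →* K) (ho : IsOpen (φ.ker : Set G)) (s : Set K) :
    IsOpen (φ ⁻¹' s) := by
  let _ : TopologicalSpace K := ⊥
  have : DiscreteTopology K := ⟨rfl⟩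
  exact (isOpen_discrete s).preimage (cont_of_open_ker φ ho)

theorem preimage_compact (φ : G →* K) (hc : IsCompact (φ.ker : Set G)) (s : Set K)
    (hs : s.Finite) : IsCompact (φ ⁻¹' s) := by
  rw [← Set.biUnion_preimage_singleton]
  refine hs.isCompact_biUnion ?_
  intro k _
  by_cases h : ∃ g, φ g = k
  · obtain ⟨g, rfl⟩ := h
    have : φ ⁻¹' {φ g} = (fun x => g * x) '' (φ.ker : Set G) := by
      ext x
      simp only [Set.mem_preimage, Set.mem_singleton_iff, Set.mem_image, SetLike.mem_coe,
        MonoidHom.mem_ker]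
      constructor
      · intro hx; exact ⟨g⁻¹ * x, by simp [hx], by simp⟩
      · rintro ⟨y, hy, rfl⟩; simp [hy]
    rw [this]
    exact hc.image (continuous_const_mul g)
  · have : φ ⁻¹' {k} = ∅ := by
      ext x; simp only [Set.mem_preimage, Set.mem_singleton_iff, Set.mem_empty_iff_false, iff_false]
      intro hx; exact h ⟨x, hx⟩
    rw [this]; exact isCompact_empty

theorem isCA_of_hom (φ : G →* K) (hs : Function.Surjective φ)
    (hc : IsCompact (φ.ker : Set G)) (ho : IsOpen (φ.ker : Set G))
    (σ : K →* Equiv.Perm ℤ)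
    (hadj : ∀ (k : K) (u v : ℤ), lineGraphZ.Adj u v → lineGraphZ.Adj (σ k u) (σ k v))
    (htr : ∀ u v : ℤ, ∃ k, σ k u = v)
    (hfin : ∀ v : ℤ, {k | σ k v = v}.Finite) :
    IsCayleyAbels lineGraphZ (σ.comp φ) := by
  refine ⟨line_connected, line_locfin, fun g u v h => hadj _ u v h, ?_, ?_⟩
  · intro u v
    obtain ⟨k, hk⟩ := htr u v
    obtain ⟨g, rfl⟩ := hs k
    exact ⟨g, hk⟩
  · intro v
    exact ⟨preimage_compact φ hc _ (hfin v), preimage_open φ ho {k | σ k v = v}⟩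

end topo

/-- translation action -/
def transAct : Multiplicative ℤ →* Equiv.Perm ℤ where
  toFun k := Equiv.addLeft k.toAdd
  map_one' := by ext x; simp
  map_mul' a b := by ext x; simp [add_assoc]

/-- the underlying function of the dihedral action -/
def dihFun : DihedralGroup 0 → ℤ → ℤ
  | .r i, x => x + (show ℤ from i)
  | .sr i, x => -x - (show ℤ from i)

theorem dihFun_one (x : ℤ) : dihFun 1 x = x := by
  change x + 0 = x
  ring

theorem dihFun_mul (a b : DihedralGroup 0) (x : ℤ) :
    dihFun (a * b) x = dihFun a (dihFun b x) := by
  rcases a with (i : ℤ) | (i : ℤ) <;> rcases b with (j : ℤ) | (j : ℤ)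
  · change x + (i + j) = x + j + i; ring
  · change -x - (j - i) = (-x - j) + i; ring
  · change -x - (i + j) = -(x + j) - i; ring
  · change x + (j - i) = -(-x - j) - i; ring

/-- dihedral action -/
def dihAct : DihedralGroup 0 →* Equiv.Perm ℤ where
  toFun k := ⟨dihFun k, dihFun k⁻¹,
    fun x => by rw [← dihFun_mul, inv_mul_cancel, dihFun_one],
    fun x => by rw [← dihFun_mul, mul_inv_cancel, dihFun_one]⟩
  map_one' := by ext x; exact dihFun_one x
  map_mul' a b := by ext x; exact dihFun_mul a b x

theorem affine_of_adj (f : Equiv.Perm ℤ)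
    (h : ∀ u v : ℤ, lineGraphZ.Adj u v → lineGraphZ.Adj (f u) (f v)) :
    (f 1 - f 0 = 1 ∨ f 1 - f 0 = -1) ∧ ∀ x, f x = f 0 + (f 1 - f 0) * x := by
  have h1 : ∀ n, f (n + 1) - f n = 1 ∨ f (n + 1) - f n = -1 := by
    intro n
    have := h n (n + 1) (by rw [lineAdj_iff]; left; rfl)
    rw [lineAdj_iff] at this; omega
  have h2 : ∀ n, f (n + 1 + 1) - f (n + 1) = f (n + 1) - f n := by
    intro n
    have hne : f (n + 1 + 1) ≠ f n := fun e => by have := f.injective e; omega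
    have := h1 n
    have := h1 (n + 1)
    omega
  have h3 : ∀ n, f (n + 1) - f n = f 1 - f 0 := by
    intro n
    induction n using Int.induction_on with
    | zero => simp
    | succ k ih => rw [h2, ih]
    | pred k ih =>
      have := h2 (-(k : ℤ) - 1)
      rw [sub_add_cancel] at this ⊢
      rw [← this, ih]
  refine ⟨by simpa using h1 0, ?_⟩
  intro x
  induction x using Int.induction_on with
  | zero => simp
  | succ k ih => have := h3 k; linear_combination this + ih
  | pred k ih =>
    have := h3 (-(k : ℤ) - 1)
    rw [sub_add_cancel] at this
    linear_combination ih - this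

section alg
variable {G : Type*} [Group G]

/-- Building a homomorphism to the dihedral group from a cocycle. -/
def mkDih (a ε : G → ℤ) (hε : ∀ g, ε g = 1 ∨ ε g = -1)
    (hεm : ∀ g h, ε (g * h) = ε g * ε h) (ham : ∀ g h, a (g * h) = a g + ε g * a h) :
    G →* DihedralGroup 0 :=
  MonoidHom.mk' (fun g => if ε g = 1 then .r (show ℤ from a g) else .sr (show ℤ from -a g)) (by
    intro g h
    have h1 := hεm g h
    have h2 := ham g h
    rcases hε g with hg | hg <;> rcases hε h with hh | hh <;> rw [hg, hh] at h1 <;> rw [hg] at h2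
    · rw [if_pos hg, if_pos hh, if_pos (by omega)]
      exact congrArg DihedralGroup.r (show a (g * h) = a g + a h by omega)
    · rw [if_pos hg, if_neg (by omega), if_neg (by omega)]
      exact congrArg DihedralGroup.sr (show -a (g * h) = -a h - a g by omega)
    · rw [if_neg (by omega), if_neg (by omega), if_pos hh]
      exact congrArg DihedralGroup.sr (show -a (g * h) = -a g + a h by omega)
    · rw [if_pos (by omega), if_neg (by omega), if_neg (by omega)]
      exact congrArg DihedralGroup.r (show a (g * h) = -a h - (- a g) by omega))

theorem mkDih_apply (a ε : G → ℤ) (hε hεm ham) (g : G) :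
    mkDih a ε hε hεm ham g = if ε g = 1 then .r (show ℤ from a g) else .sr (show ℤ from -a g) := rfl

theorem mkDih_surj (a ε : G → ℤ) (hε hεm ham)
    (h : ∀ i e : ℤ, e = 1 ∨ e = -1 → ∃ g, a g = i ∧ ε g = e) :
    Function.Surjective (mkDih a ε hε hεm ham) := by
  rintro ((i : ℤ) | (i : ℤ))
  · obtain ⟨g, rfl, h2⟩ := h i 1 (by simp)
    exact ⟨g, by rw [mkDih_apply, if_pos h2]⟩
  · obtain ⟨g, h1, h2⟩ := h (-i) (-1) (by simp)
    refine ⟨g, ?_⟩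
    rw [mkDih_apply, if_neg (by omega), h1]
    exact congrArg DihedralGroup.sr (neg_neg i)

theorem mkDih_ker (a ε : G → ℤ) (hε hεm ham) (g : G) :
    g ∈ (mkDih a ε hε hεm ham).ker ↔ a g = 0 ∧ ε g = 1 := by
  rw [MonoidHom.mem_ker, mkDih_apply, DihedralGroup.one_def]
  split_ifs with h
  · exact ⟨fun e => ⟨DihedralGroup.r.inj e, h⟩, fun e => congrArg DihedralGroup.r e.1⟩
  · simp [h]

end alg

/-- For a non-compact, compactly generated t.d.l.c. group `G` the following are equivalent:
(1) the line graph on `ℤ` is a Cayley–Abels graph for `G` (equivalently, `G` has a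
Cayley–Abels graph of degree `2`); (2) there is a continuous surjective homomorphism with
compact open kernel from `G` onto the infinite cyclic group `ℤ` or the infinite dihedral
group `D∞`, each taken with the discrete topology. -/
theorem degree_two_CayleyAbels_iff (G : Type*) [Group G] [TopologicalSpace G]
    [IsTopologicalGroup G] [T2Space G] [TotallyDisconnectedSpace G] [LocallyCompactSpace G]
    (hnc : ¬ CompactSpace G)
    (hcg : ∃ S : Set G, IsCompact S ∧ Subgroup.closure S = ⊤) :
    (∃ ρ : G →* Equiv.Perm ℤ, IsCayleyAbels lineGraphZ ρ) ↔
      ((∃ φ : G →* Multiplicative ℤ, Function.Surjective φ ∧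
          (@Continuous G (Multiplicative ℤ) _ ⊥ φ) ∧
          IsCompact (φ.ker : Set G) ∧ IsOpen (φ.ker : Set G)) ∨
        (∃ φ : G →* DihedralGroup 0, Function.Surjective φ ∧
          (@Continuous G (DihedralGroup 0) _ ⊥ φ) ∧
          IsCompact (φ.ker : Set G) ∧ IsOpen (φ.ker : Set G))) := by
  constructor
  · rintro ⟨ρ, -, -, hadj, htr, hst⟩
    obtain ⟨a, ha⟩ : ∃ a : G → ℤ, ∀ g, a g = ρ g 0 := ⟨_, fun _ => rfl⟩
    obtain ⟨ε, hεd⟩ : ∃ ε : G → ℤ, ∀ g, ε g = ρ g 1 - ρ g 0 := ⟨_, fun _ => rfl⟩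
    have hε : ∀ g, ε g = 1 ∨ ε g = -1 := fun g => by
      rw [hεd]; exact (affine_of_adj (ρ g) (hadj g)).1
    have hρ : ∀ g x, ρ g x = a g + ε g * x := fun g x => by
      rw [hεd, ha]; exact (affine_of_adj (ρ g) (hadj g)).2 x
    have ham : ∀ g h, a (g * h) = a g + ε g * a h := fun g h => by
      rw [ha (g * h), map_mul, Equiv.Perm.mul_apply, ← ha h, hρ]
    have hεm : ∀ g h, ε (g * h) = ε g * ε h := fun g h => by
      have h1 := hρ (g * h) 1
      rw [map_mul, Equiv.Perm.mul_apply, hρ h, hρ g, ham] at h1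
      linear_combination -h1
    have hsur : ∀ i, ∃ g, a g = i := fun i => by
      obtain ⟨g, hg⟩ := htr 0 i
      exact ⟨g, by rw [ha, hg]⟩
    have hc0 := (hst 0).1
    have ho0 := (hst 0).2
    have hS0 : {g : G | ρ g 0 = 0} = {g | a g = 0} := by ext g; simp [ha]
    rw [hS0] at hc0 ho0
    by_cases hA : ∃ g, a g = 0 ∧ ε g = -1
    · right
      obtain ⟨g0, h0, h0'⟩ := hA
      have hker : ((mkDih a ε hε hεm ham).ker : Set G) =
          {g | a g = 0} ∩ {g | ρ g 1 = 1} := by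
        ext g
        rw [SetLike.mem_coe, mkDih_ker]
        simp only [Set.mem_inter_iff, Set.mem_ofPred_eq, hρ]
        omega
      have ho : IsOpen ((mkDih a ε hε hεm ham).ker : Set G) := by
        rw [hker]; exact ho0.inter (hst 1).2
      refine ⟨mkDih a ε hε hεm ham, mkDih_surj _ _ _ _ _ ?_, cont_of_open_ker _ ho, ?_, ho⟩
      · intro i e he
        obtain ⟨g, hg⟩ := hsur i
        by_cases hge : ε g = e
        · exact ⟨g, hg, hge⟩
        · refine ⟨g * g0, by rw [ham, h0, hg]; ring, ?_⟩
          rw [hεm, h0']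
          have := hε g
          omega
      · rw [hker]; exact hc0.inter (hst 1).1
    · have hB : ∀ g, a g = 0 → ε g = 1 := fun g hg => by
        rcases hε g with h | h
        · exact h
        · exact absurd ⟨g, hg, h⟩ hA
      by_cases hC : ∀ g, ε g = 1
      · left
        let φ : G →* Multiplicative ℤ := MonoidHom.mk' (fun g => Multiplicative.ofAdd (a g)) (by
          intro g h
          rw [ham, hC, one_mul, ofAdd_add])
        have hker : (φ.ker : Set G) = {g | a g = 0} := by
          ext g
          rw [SetLike.mem_coe, MonoidHom.mem_ker]
          exact Iff.rfl
        have ho : IsOpen (φ.ker : Set G) := by rw [hker]; exact ho0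
        refine ⟨φ, ?_, cont_of_open_ker _ ho, by rw [hker]; exact hc0, ho⟩
        intro i
        obtain ⟨g, hg⟩ := hsur i.toAdd
        exact ⟨g, congrArg Multiplicative.ofAdd hg⟩
      · right
        have ha1 : a 1 = 0 := by rw [ha]; simp
        have hε1 : ε 1 = 1 := hB 1 ha1
        -- powers of a translation
        have hpow : ∀ t, ε t = 1 → ∀ k : ℤ, a (t ^ k) = k * a t ∧ ε (t ^ k) = 1 := by
          intro t ht k
          induction k using Int.induction_on with
          | zero => simp [ha1, hε1]
          | succ k ih =>
            rw [zpow_add_one, ham, hεm, ih.1, ih.2, ht]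
            exact ⟨by ring, by ring⟩
          | pred k ih =>
            have h1 : ε t⁻¹ = 1 := by
              have := hεm t t⁻¹
              rw [mul_inv_cancel, hε1, ht] at this; omega
            have h2 : a t⁻¹ = - a t := by
              have := ham t t⁻¹
              rw [mul_inv_cancel, ha1, ht] at this; omega
            rw [zpow_sub_one, ham, hεm, ih.1, ih.2, h1, h2]
            exact ⟨by ring, by ring⟩
        have hnt : ∀ t, ε t = 1 → a t * a t = 1 → False := by
          intro t ht hat
          apply hC
          intro g
          have h1 := hpow t ht (-(a g * a t))
          have h2 := hB (t ^ (-(a g * a t)) * g) (by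
            rw [ham, h1.1, h1.2]; linear_combination (-a g) * hat)
          rwa [hεm, h1.2, one_mul] at h2
        obtain ⟨t, hta⟩ := hsur 1
        obtain ⟨u, hua⟩ := hsur (-1)
        have hte : ε t = -1 := (hε t).resolve_left fun h => hnt t h (by rw [hta]; rfl)
        have hue : ε u = -1 := (hε u).resolve_left fun h => hnt u h (by rw [hua]; rfl)
        have hwa : a (t * u) = 2 := by rw [ham, hta, hte, hua]; rfl
        have hwe : ε (t * u) = 1 := by rw [hεm, hte, hue]; rfl
        have heven : ∀ g k, a g = 2 * k → ε g = 1 := by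
          intro g k hg
          have h1 := hpow (t * u) hwe (-k)
          have h2 := hB ((t * u) ^ (-k) * g) (by rw [ham, h1.1, h1.2, hg, hwa]; ring)
          rwa [hεm, h1.2, one_mul] at h2
        have hodd : ∀ g k, a g = 2 * k + 1 → ε g = -1 := by
          intro g k hg
          have h2 := heven (t * g) (-k) (by rw [ham, hta, hte, hg]; ring)
          rw [hεm, hte] at h2
          omega
        have hpar : ∀ g, (ε g = 1 ∧ a g = 2 * (a g / 2)) ∨ (ε g = -1 ∧ a g = 2 * (a g / 2) + 1) := by
          intro g
          rcases Int.emod_two_eq_zero_or_one (a g) with h | h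
          · left
            have : a g = 2 * (a g / 2) := by omega
            exact ⟨heven g _ this, this⟩
          · right
            have : a g = 2 * (a g / 2) + 1 := by omega
            exact ⟨hodd g _ this, this⟩
        have ham' : ∀ g h, a (g * h) / 2 = a g / 2 + ε g * (a h / 2) := by
          intro g h
          have h1 := hpar g
          have h2 := hpar h
          have h3 := ham g h
          rcases h1 with ⟨e1, h1⟩ | ⟨e1, h1⟩ <;> rcases h2 with ⟨e2, h2⟩ | ⟨e2, h2⟩ <;>
            rw [e1] at h3 ⊢ <;> omega
        have hker : ((mkDih (fun g => a g / 2) ε hε hεm ham').ker : Set G) = {g | a g = 0} := by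
          ext g
          rw [SetLike.mem_coe, mkDih_ker]
          have := hpar g
          simp only [Set.mem_ofPred_eq]
          omega
        have ho : IsOpen ((mkDih (fun g => a g / 2) ε hε hεm ham').ker : Set G) := by
          rw [hker]; exact ho0
        refine ⟨mkDih (fun g => a g / 2) ε hε hεm ham', mkDih_surj _ _ _ _ _ ?_,
          cont_of_open_ker _ ho, by rw [hker]; exact hc0, ho⟩
        rintro i e (rfl | rfl)
        · obtain ⟨g, hg⟩ := hsur (2 * i)
          exact ⟨g, by simp only [hg]; omega, heven g i hg⟩
        · obtain ⟨g, hg⟩ := hsur (2 * i + 1)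
          exact ⟨g, by simp only [hg]; omega, hodd g i hg⟩
  · rintro (⟨φ, hs, -, hc, ho⟩ | ⟨φ, hs, -, hc, ho⟩)
    · refine ⟨_, isCA_of_hom φ hs hc ho transAct ?_ ?_ ?_⟩
      · intro k u v h
        rw [lineAdj_iff] at h ⊢
        change k.toAdd + v = k.toAdd + u + 1 ∨ k.toAdd + u = k.toAdd + v + 1
        omega
      · intro u v
        refine ⟨Multiplicative.ofAdd (v - u), ?_⟩
        change v - u + u = v
        ring
      · intro v
        refine (Set.finite_singleton (1 : Multiplicative ℤ)).subset ?_
        intro k (hk : k.toAdd + v = v)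
        have : k.toAdd = 0 := by omega
        exact this
    · refine ⟨_, isCA_of_hom φ hs hc ho dihAct ?_ ?_ ?_⟩
      · intro k u v h
        rw [lineAdj_iff] at h ⊢
        rcases k with (i : ℤ) | (i : ℤ)
        · change v + i = u + i + 1 ∨ u + i = v + i + 1
          omega
        · change -v - i = -u - i + 1 ∨ -u - i = -v - i + 1
          omega
      · intro u v
        refine ⟨DihedralGroup.r (show ℤ from v - u), ?_⟩
        change u + (v - u) = v
        ring
      · intro v
        refine (Set.toFinite {DihedralGroup.r (show ℤ from 0),
          DihedralGroup.sr (show ℤ from -2 * v)}).subset ?_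
        rintro ((i : ℤ) | (i : ℤ)) hk
        · left
          have hk' : v + i = v := hk
          exact congrArg DihedralGroup.r (show i = (0 : ℤ) by omega)
        · right
          have hk' : -v - i = v := hk
          exact congrArg DihedralGroup.sr (show i = (-2 * v : ℤ) by omega)
end

section
/- Let G be a t.d.l.c. group, K a compact open normal subgroup of G, and Γ a Cayley–Abels graph for G of degree d. Form the quotient graph Γ/K whose vertices are the K-orbits on the vertices of Γ, with two distinct orbits A ≠ B adjacent if and only if some vertex in A is adjacent in Γ to some vertex in B, equipped with the induced action of G. Then Γ/K is a Cayley–Abels graph for G of degree at most d, and the kernel of the action of G on Γ/K is a compact open normal subgroup of G. -/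
/-- The setoid on the vertex set whose classes are the orbits of the subgroup `K`,
acting through `ρ`. -/
def orbitSetoid {G V : Type*} [Group G] (ρ : G →* Equiv.Perm V) (K : Subgroup G) :
    Setoid V where
  r v w := ∃ k ∈ K, ρ k v = w
  iseqv := by
    constructor
    · intro v
      exact ⟨1, one_mem K, by simp⟩
    · rintro v w ⟨k, hk, rfl⟩
      refine ⟨k⁻¹, inv_mem hk, ?_⟩
      simp
    · rintro u v w ⟨k, hk, rfl⟩ ⟨l, hl, rfl⟩
      exact ⟨l * k, mul_mem hl hk, by simp⟩

/-- The quotient graph of a simple graph by an equivalence relation on its vertices: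
two distinct classes are adjacent iff some element of one is adjacent to some element of
the other. -/
def quotientGraph {V : Type*} (Γ : SimpleGraph V) (s : Setoid V) :
    SimpleGraph (Quotient s) where
  Adj A B := A ≠ B ∧ ∃ a b : V, Quotient.mk s a = A ∧ Quotient.mk s b = B ∧ Γ.Adj a b
  symm := by
    constructor
    rintro A B ⟨hne, a, b, ha, hb, hab⟩
    exact ⟨hne.symm, b, a, hb, ha, hab.symm⟩
  loopless := by
    constructor
    rintro A ⟨hne, -⟩
    exact hne rfl

open scoped Pointwise

/-- Let `G` be a t.d.l.c. group, `K` a compact open normal subgroup and `Γ` a Cayley–Abels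
graph for `G` of degree `d`.  Then the quotient graph `Γ/K` (on the `K`-orbits), with the
induced `G`-action, is a Cayley–Abels graph for `G` of degree at most `d`, and the kernel
of the action of `G` on `Γ/K` is a compact open normal subgroup of `G`. -/
theorem quotient_CayleyAbels_compact_open_normal {G V : Type*} [Group G]
    [TopologicalSpace G] [IsTopologicalGroup G] [T2Space G] [TotallyDisconnectedSpace G]
    [LocallyCompactSpace G]
    (K : Subgroup G) (hKn : K.Normal) (hKc : IsCompact (K : Set G))
    (hKo : IsOpen (K : Set G))
    (Γ : SimpleGraph V) (ρ : G →* Equiv.Perm V) (hCA : IsCayleyAbels Γ ρ)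
    (d : ℕ) (hdeg : ∀ v : V, (Γ.neighborSet v).ncard = d) :
    ∃ σ : G →* Equiv.Perm (Quotient (orbitSetoid ρ K)),
      (∀ (g : G) (v : V),
          σ g (Quotient.mk (orbitSetoid ρ K) v) = Quotient.mk (orbitSetoid ρ K) (ρ g v)) ∧
      IsCayleyAbels (quotientGraph Γ (orbitSetoid ρ K)) σ ∧
      (∀ A : Quotient (orbitSetoid ρ K),
          ((quotientGraph Γ (orbitSetoid ρ K)).neighborSet A).ncard ≤ d) ∧
      σ.ker.Normal ∧ IsCompact (σ.ker : Set G) ∧ IsOpen (σ.ker : Set G) := by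
  obtain ⟨hconn, hfin, hadj, htrans, hstab⟩ := hCA
  have hmk : ∀ u v : V, Quotient.mk (orbitSetoid ρ K) u = Quotient.mk (orbitSetoid ρ K) v ↔
      ∃ k ∈ K, ρ k u = v := fun u v => Quotient.eq (r := orbitSetoid ρ K)
  have hresp : ∀ (g : G) (u v : V), (orbitSetoid ρ K).r u v →
      (orbitSetoid ρ K).r (ρ g u) (ρ g v) := by
    rintro g u v ⟨k, hk, rfl⟩
    exact ⟨g * k * g⁻¹, hKn.conj_mem k hk g, by simp⟩
  let τ : G →* Function.End (Quotient (orbitSetoid ρ K)) :=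
    { toFun := fun g => Quotient.map (ρ g) (hresp g)
      map_one' := by
        funext A
        induction A using Quotient.inductionOn with
        | h v => exact congrArg (Quotient.mk (orbitSetoid ρ K)) (by simp)
      map_mul' := by
        intro g h
        funext A
        induction A using Quotient.inductionOn with
        | h v => exact congrArg (Quotient.mk (orbitSetoid ρ K)) (by simp) }
  let σ : G →* Equiv.Perm (Quotient (orbitSetoid ρ K)) := MonoidHom.toHomPerm τ
  have hσ : ∀ (g : G) (v : V),
      σ g (Quotient.mk (orbitSetoid ρ K) v) = Quotient.mk (orbitSetoid ρ K) (ρ g v) :=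
    fun g v => rfl
  clear_value σ
  have hnb : ∀ v : V, (quotientGraph Γ (orbitSetoid ρ K)).neighborSet
      (Quotient.mk (orbitSetoid ρ K) v) ⊆
        Quotient.mk (orbitSetoid ρ K) '' Γ.neighborSet v := by
    rintro v B ⟨-, a, b, ha, rfl, hab⟩
    obtain ⟨k, hk, rfl⟩ := (hmk a v).1 ha
    exact ⟨ρ k b, hadj k a b hab, ((hmk _ _).2 ⟨k, hk, rfl⟩).symm⟩
  have hst : ∀ v : V, {g : G | σ g (Quotient.mk (orbitSetoid ρ K) v) =
      Quotient.mk (orbitSetoid ρ K) v} = (K : Set G) * {g : G | ρ g v = v} := by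
    intro v
    ext g
    rw [Set.mem_setOf_eq, hσ, hmk, Set.mem_mul]
    constructor
    · rintro ⟨k, hk, h⟩
      exact ⟨k⁻¹, inv_mem hk, k * g, by simpa using h, by simp⟩
    · rintro ⟨k, hk, h, hh, rfl⟩
      refine ⟨k⁻¹, inv_mem hk, ?_⟩
      have hh' : ρ h v = v := hh
      simp [hh']
  have hstab' : ∀ A, IsCompact {g : G | σ g A = A} ∧ IsOpen {g : G | σ g A = A} := by
    intro A
    induction A using Quotient.inductionOn with
    | h v =>
      have := hst v
      rw [this]
      exact ⟨hKc.mul (hstab v).1, (hstab v).2.mul_left⟩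
  have hKle : K ≤ σ.ker := by
    intro k hk
    rw [MonoidHom.mem_ker]
    ext A
    induction A using Quotient.inductionOn with
    | h v => exact (hσ k v).trans ((hmk _ _).2 ⟨k, hk, rfl⟩).symm
  have hopen : IsOpen (σ.ker : Set G) := Subgroup.isOpen_mono hKle hKo
  obtain ⟨v0⟩ := hconn.nonempty
  refine ⟨σ, hσ, ⟨?_, ?_, ?_, ?_, hstab'⟩, ?_, inferInstance, ?_, hopen⟩
  · haveI : Nonempty (Quotient (orbitSetoid ρ K)) := ⟨Quotient.mk _ v0⟩
    refine ⟨?_⟩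
    intro A B
    induction A using Quotient.inductionOn with
    | h u =>
    induction B using Quotient.inductionOn with
    | h v =>
    obtain ⟨p⟩ := hconn.preconnected u v
    induction p with
    | nil => exact SimpleGraph.Reachable.refl _
    | @cons a b c h p ih =>
      by_cases hab : Quotient.mk (orbitSetoid ρ K) a = Quotient.mk (orbitSetoid ρ K) b
      · rw [hab]; exact ih
      · exact SimpleGraph.Reachable.trans
          (SimpleGraph.Adj.reachable ⟨hab, a, b, rfl, rfl, h⟩) ih
  · intro A
    induction A using Quotient.inductionOn with
    | h v => exact ((hfin v).image _).subset (hnb v)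
  · rintro g A B ⟨hne, a, b, rfl, rfl, hab⟩
    exact ⟨fun h => hne ((σ g).injective h), ρ g a, ρ g b, (hσ g a).symm, (hσ g b).symm,
      hadj g a b hab⟩
  · intro A B
    induction A using Quotient.inductionOn with
    | h u =>
    induction B using Quotient.inductionOn with
    | h v =>
    obtain ⟨g, rfl⟩ := htrans u v
    exact ⟨g, hσ g u⟩
  · intro A
    induction A using Quotient.inductionOn with
    | h v =>
      calc _ ≤ (Quotient.mk (orbitSetoid ρ K) '' Γ.neighborSet v).ncard :=
            Set.ncard_le_ncard (hnb v) ((hfin v).image _)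
        _ ≤ (Γ.neighborSet v).ncard := Set.ncard_image_le (hfin v)
        _ = d := hdeg v
  · refine (hstab' (Quotient.mk _ v0)).1.of_isClosed_subset
      (Subgroup.isClosed_of_isOpen _ hopen) ?_
    intro g hg
    have hg' : σ g = 1 := hg
    simp [hg']
end

section
/- Let G be a non-compact, compactly generated t.d.l.c. group with modular function Δ, and let H be the image of Δ (a subgroup of the multiplicative group of positive reals, consisting of positive rationals). Then for every Cayley–Abels graph Γ for G, of degree d, there exist k ≥ 1 and positive integers p_1, …, p_k, q_1, …, q_k such that the subgroup of the positive reals generated by p_1/q_1, …, p_k/q_k equals H and p_1 + q_1 + ⋯ + p_k + q_k ≤ d. (Equivalently, the degree of every Cayley–Abels graph of G is at least min{ Σ_{i=1}^k (p_i + q_i) : the p_i/q_i generate H }.) -/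
open MeasureTheory
open scoped NNReal ENNReal

lemma CA_transport {G V : Type*} [Group G] [TopologicalSpace G]
    [IsTopologicalGroup G] [T2Space G]
    [MeasurableSpace G] [BorelSpace G]
    (μ : Measure G) [IsFiniteMeasureOnCompacts μ] [μ.IsOpenPosMeasure]
    [μ.IsMulRightInvariant]
    (Δ : G →* ℝ≥0ˣ)
    (hΔ : ∀ (g : G) (A : Set G), MeasurableSet A →
      μ ((fun x => g * x) '' A) = ((Δ g : ℝ≥0) : ℝ≥0∞) * μ A)
    (ρ : G →* Equiv.Perm V) (v : V) (U : Set G) (hU : U = {g : G | ρ g v = v})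
    (hUc : IsCompact U) (hUo : IsOpen U)
    (N : Finset V) (hN : ∀ g : G, ρ g v ∈ N ↔ ρ g⁻¹ v ∈ N)
    (c : V → G) (hc : ∀ w, ρ (c w) v = w)
    (hD1 : ∀ g ∈ U, Δ g = 1) (x : ℝ≥0ˣ) [DecidableEq V] [DecidableEq ℝ≥0ˣ] :
    ((N.filter (fun w => Δ (c w) = x⁻¹)).card : ℝ≥0) =
      x * ((N.filter (fun w => Δ (c w) = x)).card : ℝ≥0) := by
  have hU0 : μ U ≠ 0 := (hUo.measure_pos μ ⟨1, by simp [hU]⟩).ne'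
  have hUt : μ U ≠ ∞ := hUc.measure_lt_top.ne
  have hDc : ∀ g, Δ (c (ρ g v)) = Δ g := by
    intro g
    have : Δ (g⁻¹ * c (ρ g v)) = 1 := hD1 _ (by simp [hU, hc])
    rw [map_mul, map_inv] at this
    exact (inv_mul_eq_one.1 this).symm
  have h1 : {g : G | ρ g v ∈ N ∧ Δ g = x} =
      ⋃ w ∈ N.filter (fun w => Δ (c w) = x), (fun y => c w * y) '' U := by
    ext g
    simp only [Set.mem_ofPred_eq, Set.mem_iUnion, Finset.mem_filter, Set.mem_image, exists_prop, hU]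
    constructor
    · rintro ⟨h, h'⟩
      exact ⟨ρ g v, ⟨h, by rw [hDc, h']⟩, (c (ρ g v))⁻¹ * g,
        by rw [map_mul, map_inv, Equiv.Perm.mul_apply, Equiv.Perm.inv_eq_iff_eq, hc], by group⟩
    · rintro ⟨w, ⟨h, h'⟩, y, hy, rfl⟩
      have : Δ y = 1 := hD1 _ (by simp [hU, hy])
      simp [hy, hc, h, h', this]
  have h2 : {g : G | ρ g v ∈ N ∧ Δ g = x} =
      ⋃ w ∈ N.filter (fun w => Δ (c w) = x⁻¹), (fun y => y * c w) ⁻¹' U := by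
    ext g
    simp only [Set.mem_ofPred_eq, Set.mem_iUnion, Finset.mem_filter, Set.mem_preimage, exists_prop, hU]
    constructor
    · rintro ⟨h, h'⟩
      refine ⟨ρ g⁻¹ v, ⟨(hN g).1 h, by rw [hDc, map_inv, h']⟩, ?_⟩
      simp [hc]
    · rintro ⟨w, ⟨h, h'⟩, hy⟩
      have h3 : Δ (g * c w) = 1 := hD1 _ (by simp only [hU, Set.mem_ofPred_eq, hy])
      rw [map_mul, h', mul_inv_eq_one] at h3
      refine ⟨?_, h3⟩
      rw [hN, map_inv]
      rw [map_mul, Equiv.Perm.mul_apply, hc] at hy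
      rwa [show (ρ g)⁻¹ v = w by rw [Equiv.Perm.inv_eq_iff_eq, hy]]
  have m1 : μ {g : G | ρ g v ∈ N ∧ Δ g = x} =
      ((N.filter (fun w => Δ (c w) = x)).card : ℝ≥0∞) * (((x : ℝ≥0) : ℝ≥0∞) * μ U) := by
    rw [h1, measure_biUnion_finset]
    · rw [Finset.sum_congr rfl (g := fun _ => (((x : ℝ≥0) : ℝ≥0∞) * μ U)), Finset.sum_const,
        nsmul_eq_mul]
      intro w hw
      rw [hΔ _ _ hUo.measurableSet, (Finset.mem_filter.1 hw).2]
    · intro w _ w' _ hne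
      rw [Function.onFun, Set.disjoint_left]
      rintro _ ⟨y, hy, rfl⟩ ⟨y', hy', h⟩
      rw [hU, Set.mem_ofPred_eq] at hy hy'
      apply hne
      have := congrArg (fun g => ρ g v) h
      simpa [hy, hy', hc] using this.symm
    · intro w _
      exact ((Homeomorph.mulLeft (c w)).isOpenMap _ hUo).measurableSet
  have m2 : μ {g : G | ρ g v ∈ N ∧ Δ g = x} =
      ((N.filter (fun w => Δ (c w) = x⁻¹)).card : ℝ≥0∞) * μ U := by
    rw [h2, measure_biUnion_finset]
    · rw [Finset.sum_congr rfl (g := fun _ => μ U), Finset.sum_const, nsmul_eq_mul]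
      intro w hw
      exact measure_preimage_mul_right μ (c w) U
    · intro w _ w' _ hne
      rw [Function.onFun, Set.disjoint_left]
      intro g hy hy'
      simp only [hU, Set.mem_preimage, Set.mem_ofPred_eq, map_mul, Equiv.Perm.mul_apply, hc] at hy hy'
      exact hne ((ρ g).injective (hy.trans hy'.symm))
    · intro w _
      exact (hUo.preimage (continuous_mul_const (c w))).measurableSet
  have h := m2.symm.trans m1
  rw [← mul_assoc, ENNReal.mul_left_inj hU0 hUt] at h
  rw [mul_comm]
  exact_mod_cast h

lemma CA_deg {G V : Type*} [Group G] [TopologicalSpace G]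
    [IsTopologicalGroup G] (hnc : ¬ CompactSpace G)
    (Γ : SimpleGraph V) (ρ : G →* Equiv.Perm V) (hCA : IsCayleyAbels Γ ρ)
    (deg : ℕ) (hdeg : ∀ v : V, (Γ.neighborSet v).ncard = deg) : 2 ≤ deg := by
  by_contra hlt
  apply hnc
  obtain ⟨hconn, hfin, hadj, htr, hst⟩ := hCA
  obtain ⟨v⟩ := hconn.nonempty
  have key : ∀ u, u = v ∨ u ∈ Γ.neighborSet v := by
    intro u
    have hr := (SimpleGraph.reachable_iff_reflTransGen v u).1 (hconn.preconnected v u)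
    induction hr with
    | refl => exact Or.inl rfl
    | @tail b c _ hbc ih =>
      rcases ih with rfl | ih
      · exact Or.inr hbc
      · left
        have h1 : (Γ.neighborSet b).ncard ≤ 1 := by rw [hdeg]; omega
        exact (Set.ncard_le_one (hfin b)).1 h1 c hbc v (SimpleGraph.Adj.symm ih)
  have hV : Finite V := by
    rw [← Set.finite_univ_iff]
    exact ((hfin v).insert v).subset (fun u _ => key u)
  choose c hc using htr v
  constructor
  have : (Set.univ : Set G) = ⋃ w : V, (fun y => c w * y) '' {g : G | ρ g v = v} := by
    ext g
    simp only [Set.mem_univ, true_iff, Set.mem_iUnion, Set.mem_image, Set.mem_ofPred_eq]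
    exact ⟨ρ g v, (c (ρ g v))⁻¹ * g,
        by rw [map_mul, map_inv, Equiv.Perm.mul_apply, Equiv.Perm.inv_eq_iff_eq, hc], by group⟩
  rw [this]
  exact isCompact_iUnion fun w => (hst v).1.image (continuous_const_mul (c w))

/-- Let `G` be a non-compact, compactly generated t.d.l.c. group with modular function `Δ`
(taking values in the multiplicative group `ℝ≥0ˣ` of positive reals, characterized by
`μ(g·A) = Δ(g)·μ(A)` for a right Haar measure `μ`), and let `H = im Δ`.  Then for every
Cayley–Abels graph for `G`, of degree `deg`, there are `k ≥ 1` and positive integers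
`p₁, …, p_k, q₁, …, q_k` such that the `pᵢ/qᵢ` generate `H` and `Σ (pᵢ + qᵢ) ≤ deg`. -/
theorem modular_function_lower_bound_on_degree {G V : Type*} [Group G] [TopologicalSpace G]
    [IsTopologicalGroup G] [T2Space G] [TotallyDisconnectedSpace G] [LocallyCompactSpace G]
    [MeasurableSpace G] [BorelSpace G]
    (hnc : ¬ CompactSpace G)
    (hcg : ∃ S : Set G, IsCompact S ∧ Subgroup.closure S = ⊤)
    (μ : Measure G) [IsFiniteMeasureOnCompacts μ] [μ.IsOpenPosMeasure]
    [μ.IsMulRightInvariant]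
    (Δ : G →* ℝ≥0ˣ)
    (hΔ : ∀ (g : G) (A : Set G), MeasurableSet A →
      μ ((fun x => g * x) '' A) = ((Δ g : ℝ≥0) : ℝ≥0∞) * μ A)
    (Γ : SimpleGraph V) (ρ : G →* Equiv.Perm V) (hCA : IsCayleyAbels Γ ρ)
    (deg : ℕ) (hdeg : ∀ v : V, (Γ.neighborSet v).ncard = deg) :
    ∃ (k : ℕ), 1 ≤ k ∧ ∃ p q : Fin k → ℕ,
      (∀ i, 0 < p i) ∧ (∀ i, 0 < q i) ∧
      Subgroup.closure {x : ℝ≥0ˣ | ∃ i : Fin k, (x : ℝ≥0) = (p i : ℝ≥0) / (q i : ℝ≥0)}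
        = Δ.range ∧
      ∑ i : Fin k, (p i + q i) ≤ deg := by
  classical
  have hdeg2 := CA_deg hnc Γ ρ hCA deg hdeg
  obtain ⟨hconn, hfin, hadj, htr, hst⟩ := hCA
  obtain ⟨v⟩ := hconn.nonempty
  choose c hc using htr v
  obtain ⟨U, hU⟩ : ∃ U : Set G, U = {g : G | ρ g v = v} := ⟨_, rfl⟩
  have hUc : IsCompact U := hU ▸ (hst v).1
  have hUo : IsOpen U := hU ▸ (hst v).2
  have hU0 : μ U ≠ 0 := (hUo.measure_pos μ ⟨1, by simp [hU]⟩).ne'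
  have hUt : μ U ≠ ∞ := hUc.measure_lt_top.ne
  have hD1 : ∀ g ∈ U, Δ g = 1 := by
    intro g hg
    have h := hΔ g U hUo.measurableSet
    have h2 : (fun x => g * x) '' U = U := by
      rw [hU, Set.mem_ofPred_eq] at hg
      ext y
      simp only [hU, Set.mem_image, Set.mem_ofPred_eq]
      constructor
      · rintro ⟨y, hy, rfl⟩
        simp [hy, hg]
      · intro hy
        exact ⟨g⁻¹ * y, by
          rw [map_mul, map_inv, Equiv.Perm.mul_apply, Equiv.Perm.inv_eq_iff_eq, hy, hg], by group⟩
    rw [h2] at h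
    nth_rewrite 1 [← one_mul (μ U)] at h
    rw [ENNReal.mul_left_inj hU0 hUt] at h
    have h3 : ((Δ g : ℝ≥0ˣ) : ℝ≥0) = 1 := ENNReal.coe_injective (by simpa using h.symm)
    exact Units.val_eq_one.1 h3
  have hDc : ∀ g, Δ (c (ρ g v)) = Δ g := by
    intro g
    have : Δ (g⁻¹ * c (ρ g v)) = 1 := hD1 _ (by simp [hU, hc])
    rw [map_mul, map_inv] at this
    exact (inv_mul_eq_one.1 this).symm
  obtain ⟨N, hNdef⟩ : ∃ N : Finset V, N = (hfin v).toFinset := ⟨_, rfl⟩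
  have hNm : ∀ w, w ∈ N ↔ Γ.Adj v w := by intro w; simp [hNdef]
  have hNcard : N.card = deg := by
    rw [← hdeg v, hNdef, Set.ncard_eq_toFinset_card _ (hfin v)]
  have hNinv : ∀ g : G, ρ g v ∈ N ↔ ρ g⁻¹ v ∈ N := by
    have : ∀ g : G, ρ g v ∈ N → ρ g⁻¹ v ∈ N := by
      intro g h
      rw [hNm] at h ⊢
      have := hadj g⁻¹ _ _ h
      rw [show ρ g⁻¹ (ρ g v) = v by simp] at this
      exact this.symm
    exact fun g => ⟨this g, fun h => by simpa using this _ h⟩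
  have htrans := CA_transport μ Δ hΔ ρ v U hU hUc hUo N hNinv c hc hD1
  obtain ⟨n, hn⟩ : ∃ n : ℝ≥0ˣ → ℕ, n = fun x => (N.filter (fun w => Δ (c w) = x)).card := ⟨_, rfl⟩
  have hn1 : ∀ x : ℝ≥0ˣ, (n x⁻¹ : ℝ≥0) = x * n x := by
    intro x; rw [hn]; exact htrans x
  have hninv : ∀ x, 0 < n x → 0 < n x⁻¹ := by
    intro x hx
    have h := hn1 x
    have : (0 : ℝ≥0) < n x⁻¹ := by
      rw [h]
      exact mul_pos (pos_iff_ne_zero.2 x.ne_zero) (by exact_mod_cast hx)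
    exact_mod_cast this
  have hnpos : ∀ x, 0 < n x ↔ ∃ w ∈ N, Δ (c w) = x := by
    intro x
    rw [hn]
    simp only [Finset.card_pos, Finset.Nonempty, Finset.mem_filter]
  obtain ⟨T, hT⟩ : ∃ T : Finset ℝ≥0ˣ, T = (N.image (fun w => Δ (c w))).filter
    (fun x : ℝ≥0ˣ => 1 < (x : ℝ≥0)) := ⟨_, rfl⟩
  have hTm : ∀ x, x ∈ T ↔ 0 < n x ∧ 1 < (x : ℝ≥0) := by
    intro x
    rw [hnpos, hT]
    simp
  have hgen : Subgroup.closure (T : Set ℝ≥0ˣ) = Δ.range := by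
    apply le_antisymm
    · rw [Subgroup.closure_le]
      intro x hx
      obtain ⟨w, -, hw⟩ := (hnpos x).1 ((hTm x).1 hx).1
      exact ⟨c w, hw⟩
    · have hw : ∀ w ∈ N, Δ (c w) ∈ Subgroup.closure (T : Set ℝ≥0ˣ) := by
        intro w hw
        have hp : 0 < n (Δ (c w)) := (hnpos _).2 ⟨w, hw, rfl⟩
        rcases lt_trichotomy ((Δ (c w) : ℝ≥0ˣ) : ℝ≥0) 1 with h | h | h
        · rw [← Subgroup.inv_mem_iff]
          apply Subgroup.subset_closure
          refine (hTm _).2 ⟨hninv _ hp, ?_⟩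
          rw [Units.val_inv_eq_inv_val]
          exact (one_lt_inv₀ (pos_iff_ne_zero.2 (Units.ne_zero _))).2 h
        · rw [Units.val_eq_one.1 h]
          exact one_mem _
        · exact Subgroup.subset_closure ((hTm _).2 ⟨hp, h⟩)
      have hall : ∀ u, ∀ g, ρ g v = u → Δ g ∈ Subgroup.closure (T : Set ℝ≥0ˣ) := by
        intro u
        have hr := (SimpleGraph.reachable_iff_reflTransGen v u).1 (hconn.preconnected v u)
        induction hr with
        | refl =>
          intro g hg
          rw [hD1 g (by rw [hU]; exact hg)]
          exact one_mem _
        | @tail a b _ hab ih =>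
          intro g hg
          have h1 := ih (c a) (hc a)
          have h2 : ρ ((c a)⁻¹ * g) v ∈ N := by
            rw [hNm, map_mul, Equiv.Perm.mul_apply, hg]
            have := hadj (c a)⁻¹ _ _ hab
            rwa [show ρ (c a)⁻¹ a = v by rw [map_inv, Equiv.Perm.inv_eq_iff_eq, hc]] at this
          have h3 := hw _ h2
          rw [hDc] at h3
          have := mul_mem h1 h3
          rwa [← map_mul, mul_inv_cancel_left] at this
      rintro _ ⟨g, rfl⟩
      exact hall _ g rfl
  have hsum : ∑ x ∈ T, (n x⁻¹ + n x) ≤ deg := by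
    have hinj : ∑ x ∈ T, n x⁻¹ = ∑ x ∈ T.image (fun x => x⁻¹), n x := by
      rw [Finset.sum_image]
      intro a _ b _ h
      exact inv_injective h
    have hdis : Disjoint (T.image (fun x => x⁻¹)) T := by
      rw [Finset.disjoint_left]
      intro x hx hx'
      obtain ⟨y, hy, rfl⟩ := Finset.mem_image.1 hx
      have h1 := ((hTm _).1 hy).2
      have h2 := ((hTm _).1 hx').2
      rw [Units.val_inv_eq_inv_val] at h2
      exact absurd h2 (not_lt.2 (inv_le_one_of_one_le₀ h1.le))
    rw [Finset.sum_add_distrib, hinj, ← Finset.sum_union hdis, ← hNcard, hn]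
    rw [Finset.sum_card_fiberwise_eq_card_filter]
    exact Finset.card_filter_le _ _
  rcases Finset.eq_empty_or_nonempty T with hTe | hTn
  · refine ⟨1, le_rfl, fun _ => 1, fun _ => 1, fun _ => one_pos, fun _ => one_pos, ?_, by simpa using hdeg2⟩
    rw [← hgen, hTe]
    have : {x : ℝ≥0ˣ | ∃ i : Fin 1, (x : ℝ≥0) = ((1 : ℕ) : ℝ≥0) / ((1 : ℕ) : ℝ≥0)} = {1} := by
      ext x; simp
    rw [this]
    simp
  · let e := T.equivFin
    refine ⟨T.card, hTn.card_pos, fun i => n ((e.symm i : ℝ≥0ˣ))⁻¹, fun i => n (e.symm i : ℝ≥0ˣ),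
      fun i => hninv _ ((hTm _).1 (e.symm i).2).1, fun i => ((hTm _).1 (e.symm i).2).1, ?_, ?_⟩
    · rw [← hgen]
      congr 1
      have hq : ∀ x ∈ T, (n x⁻¹ : ℝ≥0) / (n x : ℝ≥0) = x := by
        intro x hx
        have : (n x : ℝ≥0) ≠ 0 := by exact_mod_cast ((hTm x).1 hx).1.ne'
        rw [hn1, mul_div_cancel_right₀ _ this]
      ext x
      simp only [Set.mem_ofPred_eq, Finset.mem_coe]
      constructor
      · rintro ⟨i, hi⟩
        rw [hq _ (e.symm i).2] at hi
        rw [Units.ext hi]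
        exact (e.symm i).2
      · intro hx
        exact ⟨e ⟨x, hx⟩, by rw [Equiv.symm_apply_apply, hq _ hx]⟩
    · refine le_trans (le_of_eq ?_) hsum
      rw [← Finset.sum_coe_sort T]
      exact Equiv.sum_comp e.symm (fun x : T => n (x : ℝ≥0ˣ)⁻¹ + n (x : ℝ≥0ˣ))
end

section
/- Let G be a non-compact, compactly generated t.d.l.c. group whose modular function Δ has image generated by the single rational number p/q, where p and q are coprime positive integers. Then every Cayley–Abels graph for G has degree at least p + q. -/
open MeasureTheory
open scoped NNReal ENNReal

/-- The orbit of `w` under the stabilizer of `v`. -/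
def stabOrb {G V : Type*} [Group G] (ρ : G →* Equiv.Perm V) (v w : V) : Set V :=
  {w' | ∃ g, ρ g v = v ∧ ρ g w = w'}

theorem meas_eq_card_mul {G V : Type*} [Group G] [TopologicalSpace G]
    [IsTopologicalGroup G] [MeasurableSpace G] [BorelSpace G]
    (μ : Measure G) [μ.IsMulRightInvariant] (ρ : G →* Equiv.Perm V)
    (ho : ∀ v : V, IsOpen {g : G | ρ g v = v}) (v w : V) (hf : (stabOrb ρ v w).Finite) :
    μ {g : G | ρ g v = v} =
      ((stabOrb ρ v w).ncard : ℝ≥0∞) * μ ({g : G | ρ g v = v} ∩ {g : G | ρ g w = w}) := by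
  have key : ∀ w' ∈ stabOrb ρ v w, ∃ h : G,
      {g : G | ρ g v = v ∧ ρ g⁻¹ w = w'} =
        (fun g => g * h) ⁻¹' ({g : G | ρ g v = v} ∩ {g : G | ρ g w = w}) := by
    rintro w' ⟨h, hv, hw⟩
    refine ⟨h, ?_⟩
    ext g
    simp only [Set.mem_setOf_eq, Set.mem_preimage, Set.mem_inter_iff, map_mul, map_inv,
      Equiv.Perm.mul_apply, hv, hw]
    refine and_congr_right fun _ => ?_
    rw [Equiv.Perm.inv_eq_iff_eq]
    exact eq_comm
  have hU : {g : G | ρ g v = v} =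
      ⋃ w' ∈ hf.toFinset, {g : G | ρ g v = v ∧ ρ g⁻¹ w = w'} := by
    ext g
    simp only [Set.mem_setOf_eq, Set.mem_iUnion, Set.Finite.mem_toFinset, exists_prop]
    constructor
    · intro hg
      refine ⟨_, ⟨g⁻¹, ?_, rfl⟩, hg, rfl⟩
      rw [map_inv, Equiv.Perm.inv_eq_iff_eq, hg]
    · rintro ⟨_, _, h, _⟩
      exact h
  conv_lhs => rw [hU]
  rw [measure_biUnion_finset]
  · rw [Finset.sum_congr rfl (g := fun _ => μ ({g : G | ρ g v = v} ∩ {g : G | ρ g w = w})),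
      Finset.sum_const, nsmul_eq_mul, Set.ncard_eq_toFinset_card _ hf]
    intro w' hw'
    obtain ⟨h, hh⟩ := key w' (hf.mem_toFinset.1 hw')
    rw [hh, measure_preimage_mul_right]
  · intro a _ b _ hab
    refine Set.disjoint_left.2 ?_
    rintro g ⟨_, h1⟩ ⟨_, h2⟩
    exact hab (h1.symm.trans h2)
  · intro w' hw'
    obtain ⟨h, hh⟩ := key w' (hf.mem_toFinset.1 hw')
    rw [hh]
    exact (((ho v).inter (ho w)).preimage (continuous_mul_right h)).measurableSet

theorem arith_pos (p q a b : ℕ) (hpq : Nat.Coprime p q) (n : ℕ) (hn : n ≠ 0)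
    (ha : 0 < a) (hb : 0 < b) (h : p ^ n * a = b * q ^ n) : p + q ≤ a + b := by
  have h1 : q ^ n ∣ a := by
    have : q ^ n ∣ p ^ n * a := ⟨b, by rw [h]; ring⟩
    exact (Nat.Coprime.pow n n hpq.symm).dvd_of_dvd_mul_left this
  have h2 : p ^ n ∣ b := by
    have : p ^ n ∣ b * q ^ n := ⟨a, h.symm⟩
    exact (Nat.Coprime.pow n n hpq).dvd_of_dvd_mul_right this
  have h3 := Nat.le_of_dvd ha ((dvd_pow_self q hn).trans h1)
  have h4 := Nat.le_of_dvd hb ((dvd_pow_self p hn).trans h2)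
  omega

theorem arith_zpow (p q a b : ℕ) (hp : 0 < p) (hq : 0 < q) (hpq : Nat.Coprime p q) (k : ℤ)
    (hk : k ≠ 0) (ha : 0 < a) (hb : 0 < b)
    (h : ((p : ℝ≥0) / q) ^ k * a = b) : p + q ≤ a + b := by
  have hp' : (p : ℝ≥0) ≠ 0 := by exact_mod_cast hp.ne'
  have hq' : (q : ℝ≥0) ≠ 0 := by exact_mod_cast hq.ne'
  obtain ⟨n, rfl | rfl⟩ := k.eq_nat_or_neg
  · refine arith_pos p q a b hpq n (by simpa using hk) ha hb ?_
    rw [zpow_natCast, div_pow] at h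
    field_simp at h
    have h' : p ^ n * a = q ^ n * b := by exact_mod_cast h
    rw [h', mul_comm]
  · rw [add_comm p q]
    refine arith_pos q p a b hpq.symm n (by simpa using hk) ha hb ?_
    rw [zpow_neg, zpow_natCast, div_pow, inv_div] at h
    field_simp at h
    have h' : q ^ n * a = p ^ n * b := by exact_mod_cast h
    rw [h', mul_comm]

/-- Let `G` be a non-compact, compactly generated t.d.l.c. group whose modular function `Δ`
(characterized by `μ(g·A) = Δ(g)·μ(A)` for a right Haar measure `μ`) has image generated by
the single rational number `p/q` with `p, q` coprime positive integers.  Then every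
Cayley–Abels graph for `G` has degree at least `p + q`. -/
theorem cyclic_modular_image_degree_bound {G V : Type*} [Group G] [TopologicalSpace G]
    [IsTopologicalGroup G] [T2Space G] [TotallyDisconnectedSpace G] [LocallyCompactSpace G]
    [MeasurableSpace G] [BorelSpace G]
    (hnc : ¬ CompactSpace G)
    (hcg : ∃ S : Set G, IsCompact S ∧ Subgroup.closure S = ⊤)
    (μ : Measure G) [IsFiniteMeasureOnCompacts μ] [μ.IsOpenPosMeasure]
    [μ.IsMulRightInvariant]
    (Δ : G →* ℝ≥0ˣ)
    (hΔ : ∀ (g : G) (A : Set G), MeasurableSet A →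
      μ ((fun x => g * x) '' A) = ((Δ g : ℝ≥0) : ℝ≥0∞) * μ A)
    (p q : ℕ) (hp : 0 < p) (hq : 0 < q) (hpq : Nat.Coprime p q)
    (x : ℝ≥0ˣ) (hx : (x : ℝ≥0) = (p : ℝ≥0) / (q : ℝ≥0))
    (hgen : Δ.range = Subgroup.zpowers x)
    (Γ : SimpleGraph V) (ρ : G →* Equiv.Perm V) (hCA : IsCayleyAbels Γ ρ) :
    ∀ v : V, p + q ≤ (Γ.neighborSet v).ncard := by
  classical
  obtain ⟨hconn, hfin, hadj, htrans, hst⟩ := hCA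
  have ho : ∀ v : V, IsOpen {g : G | ρ g v = v} := fun v => (hst v).2
  intro v
  -- the set of vertices is infinite
  have hVinf : ¬ Finite V := by
    intro hV
    apply hnc
    refine ⟨?_⟩
    have : (Set.univ : Set G) = ⋃ w : V, {g : G | ρ g v = w} := by
      ext g; simp
    rw [this]
    refine isCompact_iUnion fun w => ?_
    obtain ⟨h, hh⟩ := htrans v w
    have : {g : G | ρ g v = w} = (fun g => h * g) '' {g : G | ρ g v = v} := by
      ext g
      simp only [Set.mem_setOf_eq, Set.mem_image]
      constructor
      · intro hg
        refine ⟨h⁻¹ * g, ?_, by group⟩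
        rw [map_mul, Equiv.Perm.mul_apply, hg, map_inv, Equiv.Perm.inv_eq_iff_eq, hh]
      · rintro ⟨g, hg, rfl⟩
        rw [map_mul, Equiv.Perm.mul_apply, hg, hh]
    rw [this]
    exact (hst v).1.image (continuous_const_mul h)
  by_cases hx1 : x = 1
  · -- unimodular case
    have hpq' : p = q := by
      rw [hx1, Units.val_one] at hx
      have hq' : (q : ℝ≥0) ≠ 0 := by exact_mod_cast hq.ne'
      field_simp at hx
      exact_mod_cast hx.symm
    subst hpq'
    have hp1 : p = 1 := by simpa using hpq
    subst hp1
    by_contra hlt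
    have hle : ∀ u : V, (Γ.neighborSet u).ncard ≤ 1 := by
      intro u
      obtain ⟨g, hg⟩ := htrans u v
      have : (Γ.neighborSet u).ncard ≤ (Γ.neighborSet v).ncard := by
        refine Set.ncard_le_ncard_of_injOn (ρ g) ?_ (ρ g).injective.injOn (hfin v)
        intro w hw
        have := hadj g u w hw
        rwa [hg] at this
      omega
    have huniq : ∀ u a b, Γ.Adj u a → Γ.Adj u b → a = b := fun u a b ha hb =>
      (Set.ncard_le_one (hfin u)).1 (hle u) a ha b hb
    apply hVinf
    have hsub : (Set.univ : Set V) ⊆ insert v (Γ.neighborSet v) := by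
      intro w _
      obtain ⟨W⟩ := hconn.preconnected w v
      have claim : ∀ a b, Γ.Walk a b → a = b ∨ Γ.Adj b a := by
        intro a b W
        induction W with
        | nil => exact Or.inl rfl
        | cons hab _ ih =>
          rcases ih with h | h
          · exact Or.inr (h ▸ hab.symm)
          · exact Or.inl (huniq _ _ _ hab.symm h.symm)
      exact claim w v W
    exact Set.finite_univ_iff.1 (((hfin v).insert v).subset hsub)
  -- measure of stabilizers
  set m : V → ℝ≥0∞ := fun u => μ {g : G | ρ g u = u} with hm
  have hmpos : ∀ u, m u ≠ 0 := fun u =>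
    ((ho u).measure_pos μ ⟨1, by simp⟩).ne'
  have hmtop : ∀ u, m u ≠ ∞ := fun u => (hst u).1.measure_lt_top.ne
  have hmg : ∀ g u, m (ρ g u) = ((Δ g : ℝ≥0) : ℝ≥0∞) * m u := by
    intro g u
    rw [hm]
    simp only
    rw [← hΔ g _ (ho u).measurableSet, ← measure_preimage_mul_right μ g ((fun x => g * x) '' _)]
    congr 1
    ext k
    simp only [Set.mem_setOf_eq, Set.mem_image, Set.mem_preimage]
    constructor
    · intro hk
      refine ⟨g⁻¹ * (k * g), ?_, by group⟩
      simp [hk]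
    · rintro ⟨l, hl, hlk⟩
      have := congrArg (fun t => ρ t u) hlk
      simp only [map_mul, Equiv.Perm.mul_apply, hl] at this
      exact this.symm
  have hΔ1 : ∀ g u, m (ρ g u) = m u → Δ g = 1 := by
    intro g u h
    rw [hmg] at h
    have h2 : ((Δ g : ℝ≥0) : ℝ≥0∞) = 1 := by
      rw [← ENNReal.mul_left_inj (hmpos u) (hmtop u), h, one_mul]
    exact Units.ext (ENNReal.coe_inj.1 (h2.trans ENNReal.coe_one.symm))
  -- some edge changes the measure
  have hedge : ∃ w, Γ.Adj v w ∧ m w ≠ m v := by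
    by_contra hno
    push Not at hno
    have hno' : ∀ a b, Γ.Adj a b → m a = m b := by
      intro a b hab
      obtain ⟨g, hg⟩ := htrans a v
      have h1 := hadj g a b hab
      rw [hg] at h1
      have h2 := hno _ h1
      rw [← hg, hmg, hmg, ENNReal.mul_right_inj (by simp) (by simp)] at h2
      exact h2.symm
    have hall : ∀ a b, m a = m b := by
      intro a b
      obtain ⟨W⟩ := hconn.preconnected a b
      clear_value m
      induction W with
      | nil => rfl
      | cons h _ ih => exact (hno' _ _ h).trans ih
    have : x ∈ Δ.range := by rw [hgen]; exact Subgroup.mem_zpowers x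
    obtain ⟨g, hg⟩ := this
    exact hx1 (hg ▸ hΔ1 g v (hall _ _))
  obtain ⟨w, hvw, hmw⟩ := hedge
  obtain ⟨g, rfl⟩ := htrans v w
  have hvw' : Γ.Adj v (ρ g⁻¹ v) := by
    have := hadj g⁻¹ _ _ hvw
    have h2 : ρ g⁻¹ (ρ g v) = v := by simp
    rw [h2] at this
    exact this.symm
  have hsubN : ∀ a b, Γ.Adj a b → stabOrb ρ a b ⊆ Γ.neighborSet a := by
    rintro a b hab _ ⟨h, h1, rfl⟩
    have := hadj h _ _ hab
    rwa [h1] at this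
  have hfinO : ∀ a b, Γ.Adj a b → (stabOrb ρ a b).Finite := fun a b hab =>
    (hfin a).subset (hsubN a b hab)
  have hposO : ∀ a b, Γ.Adj a b → 0 < (stabOrb ρ a b).ncard := fun a b hab =>
    (Set.ncard_pos (hfinO a b hab)).2 ⟨b, 1, by simp, by simp⟩
  have hcard : (stabOrb ρ (ρ g v) v).ncard = (stabOrb ρ v (ρ g⁻¹ v)).ncard := by
    have : stabOrb ρ (ρ g v) v = ρ g '' stabOrb ρ v (ρ g⁻¹ v) := by
      ext u
      constructor
      · rintro ⟨h, h1, h2⟩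
        refine ⟨ρ g⁻¹ u, ⟨g⁻¹ * h * g, ?_, ?_⟩, by simp⟩
        · simp [h1]
        · simp [h2]
      · rintro ⟨_, ⟨h, h1, rfl⟩, rfl⟩
        refine ⟨g * h * g⁻¹, by simp [h1], by simp⟩
    rw [this, Set.ncard_image_of_injective _ (ρ g).injective]
  have hstab1 : ∀ h, ρ h v = v → Δ h = 1 := fun h hh => hΔ1 h v (by rw [hh])
  have hgne : Δ g ≠ 1 := by
    intro h
    apply hmw
    rw [hmg, h]
    simp
  have hdisj : Disjoint (stabOrb ρ v (ρ g v)) (stabOrb ρ v (ρ g⁻¹ v)) := by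
    refine Set.disjoint_left.2 ?_
    rintro _ ⟨h, h1, rfl⟩ ⟨k, k1, k2⟩
    have h3 : Δ (g * k⁻¹ * h * g) = 1 := by
      apply hstab1
      simp [← k2]
    rw [map_mul, map_mul, map_mul, map_inv, hstab1 h h1, hstab1 k k1] at h3
    simp only [inv_one, mul_one] at h3
    apply hgne
    have h4 : ((Δ g : ℝ≥0)) * (Δ g : ℝ≥0) = 1 := by
      rw [← Units.val_mul, h3, Units.val_one]
    apply Units.ext
    have h5 : (Δ g : ℝ≥0) ^ 2 = 1 := by rw [sq, h4]
    simpa using h5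
  have hsum : (stabOrb ρ v (ρ g v)).ncard + (stabOrb ρ (ρ g v) v).ncard
      ≤ (Γ.neighborSet v).ncard := by
    rw [hcard, ← Set.ncard_union_eq hdisj (hfinO _ _ hvw) (hfinO _ _ hvw')]
    exact Set.ncard_le_ncard (Set.union_subset (hsubN _ _ hvw) (hsubN _ _ hvw')) (hfin v)
  refine le_trans ?_ hsum
  have e1 := meas_eq_card_mul μ ρ ho v (ρ g v) (hfinO _ _ hvw)
  have e2 := meas_eq_card_mul μ ρ ho (ρ g v) v (hfinO _ _ hvw.symm)
  rw [Set.inter_comm] at e2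
  have e3 := hmg g v
  simp only [hm] at e3
  set c := μ ({g : G | ρ g v = v} ∩ {h : G | ρ h (ρ g v) = ρ g v}) with hc
  have hc0 : c ≠ 0 := (((ho v).inter (ho (ρ g v))).measure_pos μ ⟨1, by simp⟩).ne'
  have hct : c ≠ ∞ := (lt_of_le_of_lt (measure_mono Set.inter_subset_left)
    (hst v).1.measure_lt_top).ne
  rw [e2, e1, ← mul_assoc, ENNReal.mul_left_inj hc0 hct] at e3
  have hgx : Δ g ∈ Subgroup.zpowers x := by rw [← hgen]; exact ⟨g, rfl⟩
  obtain ⟨k, hk⟩ := Subgroup.mem_zpowers_iff.1 hgx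
  refine arith_zpow p q _ _ hp hq hpq k ?_ (hposO _ _ hvw) (hposO _ _ hvw.symm) ?_
  · rintro rfl
    exact hgne (by rw [← hk, zpow_zero])
  · rw [← hx, ← Units.val_zpow_eq_zpow_val, hk]
    exact_mod_cast e3.symm
end

section
/- Let G be a compactly generated t.d.l.c. group with modular function Δ, let Γ be a Cayley–Abels graph for G, let α be a vertex of Γ, let B_1, …, B_n be the orbits of the stabilizer G_α on the neighbours of α, and choose g_1, …, g_n ∈ G with α·g_i ∈ B_i for each i. Then the image of Δ equals the subgroup of the positive reals generated by the n rational numbers |(α·g_i)·G_α| / |(α·g_i^{-1})·G_α| for i = 1, …, n (where |β·G_α| is the finite cardinality of the G_α-orbit of β). Moreover, the image of Δ is a finitely generated free abelian group. -/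
open MeasureTheory
open scoped NNReal ENNReal

/-- The cardinality `|b·G_a|` of the orbit of `b` under the stabilizer of `a`. -/
noncomputable def suborbitCard {G V : Type*} [Group G] (ρ : G →* Equiv.Perm V)
    (a b : V) : ℕ :=
  Set.ncard ((fun g : G => ρ g b) '' {g : G | ρ g a = a})

lemma ca_orbit_finite {G V : Type*} [Group G] [TopologicalSpace G] [IsTopologicalGroup G]
    (ρ : G →* Equiv.Perm V)
    (h : ∀ v : V, IsCompact {g : G | ρ g v = v} ∧ IsOpen {g : G | ρ g v = v}) (a b : V) :
    ((fun g : G => ρ g b) '' {g : G | ρ g a = a}).Finite := by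
  have hopen : ∀ w : V, IsOpen {g : G | ρ g b = w} := by
    intro w
    by_cases hw : ∃ k : G, ρ k b = w
    · obtain ⟨k, rfl⟩ := hw
      have : {g : G | ρ g b = ρ k b} = (fun g => k⁻¹ * g) ⁻¹' {g : G | ρ g b = b} := by
        ext g
        simp only [Set.mem_preimage, Set.mem_ofPred_eq, map_mul, map_inv, Equiv.Perm.mul_apply,
          Equiv.Perm.inv_eq_iff_eq]
      rw [this]
      exact (h b).2.preimage (continuous_const_mul _)
    · have : {g : G | ρ g b = w} = ∅ := by
        ext g
        simp only [Set.mem_ofPred_eq, Set.mem_empty_iff_false, iff_false]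
        exact fun hg => hw ⟨g, hg⟩
      rw [this]
      exact isOpen_empty
  obtain ⟨t, ht⟩ := (h a).1.elim_finite_subcover (fun w : V => {g : G | ρ g b = w}) hopen
    (fun g _ => Set.mem_iUnion.2 ⟨ρ g b, rfl⟩)
  refine t.finite_toSet.subset ?_
  rintro _ ⟨g, hg, rfl⟩
  have := ht hg
  simp only [Set.mem_iUnion, Set.mem_ofPred_eq] at this
  obtain ⟨w, hw, hgw⟩ := this
  simpa [hgw] using hw

lemma ca_measure_stab {G V : Type*} [Group G] [TopologicalSpace G] [IsTopologicalGroup G]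
    [MeasurableSpace G] [BorelSpace G] (μ : Measure G) [μ.IsMulRightInvariant]
    (ρ : G →* Equiv.Perm V)
    (h : ∀ v : V, IsCompact {g : G | ρ g v = v} ∧ IsOpen {g : G | ρ g v = v}) (a b : V) :
    μ {g : G | ρ g a = a} =
      (suborbitCard ρ a b : ℝ≥0∞) * μ ({g : G | ρ g a = a} ∩ {g : G | ρ g b = b}) := by
  classical
  have hfin := ca_orbit_finite ρ h a b
  set O := (fun g : G => ρ g b) '' {g : G | ρ g a = a} with hO
  set H := {g : G | ρ g a = a} ∩ {g : G | ρ g b = b} with hH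
  have hHo : IsOpen H := (h a).2.inter (h b).2
  have hch : ∀ w ∈ O, ∃ k : G, ρ k a = a ∧ ρ k b = w := by
    rintro _ ⟨k, hk, rfl⟩
    exact ⟨k, hk, rfl⟩
  choose! k hka hkb using hch
  have hun : {g : G | ρ g a = a} = ⋃ w ∈ hfin.toFinset, (fun x => x * k w) ⁻¹' H := by
    ext x
    simp only [Set.mem_ofPred_eq, Set.mem_iUnion, Set.Finite.mem_toFinset, Set.mem_preimage, hH,
      Set.mem_inter_iff, map_mul, Equiv.Perm.mul_apply, exists_prop]
    constructor
    · intro hx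
      have hw : (ρ x)⁻¹ b ∈ O :=
        ⟨x⁻¹, by simp only [Set.mem_ofPred_eq, map_inv, Equiv.Perm.inv_eq_iff_eq, hx], by simp⟩
      refine ⟨_, hw, ?_, ?_⟩
      · rw [hka _ hw, hx]
      · rw [hkb _ hw]; simp
    · rintro ⟨w, hw, h1, -⟩
      rwa [hka w hw] at h1
  have hm : ∀ w, μ ((fun x => x * k w) ⁻¹' H) = μ H := fun w => measure_preimage_mul_right μ _ _
  rw [hun, measure_biUnion_finset]
  · rw [Finset.sum_congr rfl (fun w _ => hm w), Finset.sum_const, nsmul_eq_mul]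
    congr 2
    rw [suborbitCard, Set.ncard_eq_toFinset_card _ hfin]
  · intro w hw w' hw' hne
    rw [Function.onFun, Set.disjoint_left]
    rintro x ⟨-, hx⟩ ⟨-, hx'⟩
    simp only [Set.Finite.coe_toFinset] at hw hw'
    simp only [Set.mem_ofPred_eq, map_mul, Equiv.Perm.mul_apply, hkb w hw] at hx
    simp only [Set.mem_ofPred_eq, map_mul, Equiv.Perm.mul_apply, hkb w' hw'] at hx'
    exact hne ((ρ x).injective (hx.trans hx'.symm))
  · intro w _
    exact (hHo.preimage (continuous_mul_const _)).measurableSet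

lemma ca_suborbit_conj {G V : Type*} [Group G] (ρ : G →* Equiv.Perm V) (g : G) (a b : V) :
    suborbitCard ρ (ρ g a) (ρ g b) = suborbitCard ρ a b := by
  unfold suborbitCard
  rw [← Set.ncard_image_of_injective ((fun x : G => ρ x b) '' {x : G | ρ x a = a})
    (ρ g).injective]
  congr 1
  ext w
  constructor
  · rintro ⟨x, hx, rfl⟩
    refine ⟨_, ⟨g⁻¹ * x * g, ?_, rfl⟩, ?_⟩
    · simp only [Set.mem_ofPred_eq] at hx ⊢
      simp [hx]
    · simp
  · rintro ⟨_, ⟨x, hx, rfl⟩, rfl⟩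
    refine ⟨g * x * g⁻¹, ?_, ?_⟩
    · simp only [Set.mem_ofPred_eq] at hx ⊢
      simp [hx]
    · simp

lemma ca_free (H : Subgroup ℝ≥0ˣ) (hfg : H.FG) :
    ∃ m : ℕ, Nonempty (H ≃* Multiplicative (Fin m → ℤ)) := by
  have : Group.FG H := (Group.fg_iff_subgroup_fg H).2 hfg
  have : AddGroup.FG (Additive H) := inferInstance
  have : Module.Finite ℤ (Additive H) := Module.Finite.iff_addGroup_fg.2 inferInstance
  have : IsMulTorsionFree ℝ≥0ˣ := by
    refine ⟨fun n hn x y hxy => ?_⟩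
    ext1
    have : (x : ℝ≥0) ^ n = (y : ℝ≥0) ^ n := by
      have := congrArg Units.val hxy
      simpa using this
    exact (pow_left_inj₀ zero_le zero_le hn).1 this
  have : IsMulTorsionFree H := inferInstance
  have : IsAddTorsionFree (Additive H) := inferInstance
  have : Module.IsTorsionFree ℤ (Additive H) := inferInstance
  have : Module.Free ℤ (Additive H) := inferInstance
  let b := Module.finBasis ℤ (Additive H)
  exact ⟨_, ⟨AddEquiv.toMultiplicativeRight b.equivFun.toAddEquiv⟩⟩

/-- Let `G` be a compactly generated t.d.l.c. group with modular function `Δ`, `Γ` a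
Cayley–Abels graph for `G`, `α` a vertex, `B 1, …, B n` the orbits of the stabilizer `G_α`
on the neighbours of `α`, and `g i ∈ G` with `α · g i ∈ B i`.  Then the image of `Δ` is
generated by the rationals `|(α·gᵢ)·G_α| / |(α·gᵢ⁻¹)·G_α|`, and it is a finitely generated
free abelian group. -/
theorem modular_image_generators {G V : Type*} [Group G] [TopologicalSpace G]
    [IsTopologicalGroup G] [T2Space G] [TotallyDisconnectedSpace G] [LocallyCompactSpace G]
    [MeasurableSpace G] [BorelSpace G]
    (hcg : ∃ S : Set G, IsCompact S ∧ Subgroup.closure S = ⊤)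
    (μ : Measure G) [IsFiniteMeasureOnCompacts μ] [μ.IsOpenPosMeasure]
    [μ.IsMulRightInvariant]
    (Δ : G →* ℝ≥0ˣ)
    (hΔ : ∀ (g : G) (A : Set G), MeasurableSet A →
      μ ((fun x => g * x) '' A) = ((Δ g : ℝ≥0) : ℝ≥0∞) * μ A)
    (Γ : SimpleGraph V) (ρ : G →* Equiv.Perm V) (hCA : IsCayleyAbels Γ ρ)
    (α : V) (n : ℕ) (B : Fin n → Set V)
    (hBsub : ∀ i, B i ⊆ Γ.neighborSet α)
    (hBne : ∀ i, (B i).Nonempty)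
    (hBcover : ∀ v ∈ Γ.neighborSet α, ∃ i, v ∈ B i)
    (hBorbit : ∀ i, ∀ b ∈ B i, B i = (fun g : G => ρ g b) '' {g : G | ρ g α = α})
    (hBdistinct : ∀ i j, B i = B j → i = j)
    (g : Fin n → G) (hg : ∀ i, ρ (g i) α ∈ B i) :
    Δ.range = Subgroup.closure {x : ℝ≥0ˣ | ∃ i : Fin n,
        (x : ℝ≥0) = (suborbitCard ρ α (ρ (g i) α) : ℝ≥0) /
          (suborbitCard ρ α (ρ (g i)⁻¹ α) : ℝ≥0)} ∧
      ∃ m : ℕ, Nonempty (Δ.range ≃* Multiplicative (Fin m → ℤ)) := by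
  obtain ⟨hconn, -, hadj, -, hst⟩ := hCA
  have hmeas : ∀ v, MeasurableSet {x : G | ρ x v = v} := fun v => (hst v).2.measurableSet
  have hpos : ∀ v, μ {x : G | ρ x v = v} ≠ 0 := fun v =>
    ((hst v).2.measure_pos μ ⟨1, by simp⟩).ne.symm
  have hfinm : ∀ v, μ {x : G | ρ x v = v} ≠ ∞ := fun v => (hst v).1.measure_lt_top.ne
  have hcne : ∀ a b, suborbitCard ρ a b ≠ 0 := by
    intro a b h0
    have := ca_measure_stab μ ρ hst a b
    rw [h0] at this
    exact hpos a (by simpa using this)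
  have hstab : ∀ u : G, ρ u α = α → Δ u = 1 := by
    intro u hu
    have h1 := hΔ u _ (hmeas α)
    have h2 : (fun x => u * x) '' {x : G | ρ x α = α} = {x : G | ρ x α = α} := by
      ext x
      simp only [Set.image_mul_left, Set.mem_preimage, Set.mem_ofPred_eq, map_mul, map_inv,
        Equiv.Perm.mul_apply, Equiv.Perm.inv_eq_iff_eq, hu]
    rw [h2] at h1
    have h3 : ((Δ u : ℝ≥0) : ℝ≥0∞) = 1 := by
      have : 1 * μ {x : G | ρ x α = α} = ((Δ u : ℝ≥0) : ℝ≥0∞) * μ {x : G | ρ x α = α} := by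
        rw [one_mul]; exact h1
      exact ((ENNReal.mul_left_inj (hpos α) (hfinm α)).1 this).symm
    have h4 : (Δ u : ℝ≥0) = 1 := by exact_mod_cast h3
    exact Units.ext h4
  have hval : ∀ x : G, (((Δ x)⁻¹ : ℝ≥0ˣ) : ℝ≥0) = (suborbitCard ρ α (ρ x α) : ℝ≥0) /
      (suborbitCard ρ α (ρ x⁻¹ α) : ℝ≥0) := by
    intro x
    have e1 := ca_measure_stab μ ρ hst α (ρ x α)
    have e2 := ca_measure_stab μ ρ hst (ρ x α) α
    have e3 : suborbitCard ρ (ρ x α) α = suborbitCard ρ α (ρ x⁻¹ α) := by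
      rw [← ca_suborbit_conj ρ x α (ρ x⁻¹ α)]; simp
    have e4 : μ {y : G | ρ y (ρ x α) = ρ x α} =
        ((Δ x : ℝ≥0) : ℝ≥0∞) * μ {y : G | ρ y α = α} := by
      rw [← hΔ x _ (hmeas α), ← measure_preimage_mul_right μ x⁻¹ {y : G | ρ y (ρ x α) = ρ x α}]
      congr 1
      ext y
      simp only [Set.image_mul_left, Set.mem_preimage, Set.mem_ofPred_eq, map_mul, map_inv,
        Equiv.Perm.mul_apply, Equiv.Perm.inv_eq_iff_eq]
      simp
    rw [e3, Set.inter_comm, e4, e1] at e2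
    set H := {y : G | ρ y α = α} ∩ {y : G | ρ y (ρ x α) = ρ x α}
    have hH0 : μ H ≠ 0 :=
      (((hst α).2.inter (hst (ρ x α)).2).measure_pos μ ⟨1, by simp⟩).ne.symm
    have hH1 : μ H ≠ ∞ := measure_ne_top_of_subset Set.inter_subset_left (hfinm α)
    rw [← mul_assoc] at e2
    have e5 := (ENNReal.mul_left_inj hH0 hH1).1 e2
    have e6 : (Δ x : ℝ≥0) * (suborbitCard ρ α (ρ x α) : ℝ≥0) =
      (suborbitCard ρ α (ρ x⁻¹ α) : ℝ≥0) := by exact_mod_cast e5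
    have n1 : (suborbitCard ρ α (ρ x α) : ℝ≥0) ≠ 0 := Nat.cast_ne_zero.2 (hcne _ _)
    have n2 : (Δ x : ℝ≥0) ≠ 0 := (Δ x).ne_zero
    rw [← e6, Units.val_inv_eq_inv_val]
    field_simp
  have hset : {x : ℝ≥0ˣ | ∃ i : Fin n,
        (x : ℝ≥0) = (suborbitCard ρ α (ρ (g i) α) : ℝ≥0) /
          (suborbitCard ρ α (ρ (g i)⁻¹ α) : ℝ≥0)} = Set.range (fun i => (Δ (g i))⁻¹) := by
    ext x
    simp only [Set.mem_ofPred_eq, Set.mem_range]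
    refine exists_congr fun i => ?_
    rw [← hval, Units.val_inj, eq_comm]
  rw [hset]
  have hmain : Δ.range = Subgroup.closure (Set.range (fun i => (Δ (g i))⁻¹)) := by
    apply le_antisymm
    · set K := (Subgroup.closure (Set.range (fun i => (Δ (g i))⁻¹))).comap Δ with hK
      have hKg : ∀ i, g i ∈ K := fun i => by
        rw [hK, Subgroup.mem_comap, ← inv_mem_iff]
        exact Subgroup.subset_closure ⟨i, rfl⟩
      have hKu : ∀ u : G, ρ u α = α → u ∈ K := fun u hu => by
        rw [hK, Subgroup.mem_comap, hstab u hu]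
        exact one_mem _
      have hreach : ∀ v, ∃ h ∈ K, ρ h α = v := by
        intro v
        have hr := (SimpleGraph.reachable_iff_reflTransGen α v).1 (hconn.preconnected α v)
        induction hr with
        | refl => exact ⟨1, one_mem _, by simp⟩
        | @tail v w _ hvw ih =>
          obtain ⟨h, hh, rfl⟩ := ih
          have h1 := hadj h⁻¹ _ _ hvw
          have h2 : Γ.Adj α (ρ h⁻¹ w) := by simpa using h1
          obtain ⟨i, hi⟩ := hBcover _ h2
          rw [hBorbit i _ (hg i)] at hi
          obtain ⟨u, hu, hu'⟩ := hi
          refine ⟨h * u * g i, mul_mem (mul_mem hh (hKu u hu)) (hKg i), ?_⟩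
          simp only [map_mul, Equiv.Perm.mul_apply]
          simp only at hu'
          rw [hu']
          simp
      rintro _ ⟨x, rfl⟩
      obtain ⟨h, hh, hx⟩ := hreach (ρ x α)
      have : h⁻¹ * x ∈ K := hKu _ (by
        rw [map_mul, Equiv.Perm.mul_apply, ← hx]; simp)
      have h3 : x ∈ K := by simpa using mul_mem hh this
      exact h3
    · rw [Subgroup.closure_le]
      rintro _ ⟨i, rfl⟩
      exact inv_mem ⟨g i, rfl⟩
  refine ⟨hmain, ca_free _ ?_⟩
  rw [hmain]
  exact (Subgroup.fg_iff _).2 ⟨_, rfl, Set.finite_range _⟩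
end

section
/- Let Γ be a locally finite digraph and let G be a group of automorphisms of Γ acting vertex-transitively and transitively on the set of arcs of Γ. Let p be the common out-degree and q the common in-degree of the vertices of Γ, and assume p and q are coprime. Then for every s ≥ 1, G acts transitively on the set of s-arcs of Γ (Γ is highly-arc-transitive). Moreover, for every vertex α, the subdigraph of Γ induced on the set of descendants of α (the vertices reachable from α by directed paths) has an underlying undirected graph that is a tree; equivalently, every descendant of α is reached from α by a unique directed path. -/
theorem hat_key {G V : Type*} [Group G] [MulAction G V] (H K : Subgroup G) (hKH : K ≤ H)
    (S : Set V) (hS : S.Finite) (x : V)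
    (horb : MulAction.orbit H x = S) (hc : Nat.Coprime S.ncard (K.relIndex H)) :
    MulAction.orbit K x = S ∧ (MulAction.stabilizer G x).relIndex K = S.ncard := by
  have orb : ∀ L : Subgroup G,
      (MulAction.stabilizer G x).relIndex L = (MulAction.orbit L x).ncard := by
    intro L
    rw [← MulAction.index_stabilizer]
    rfl
  have hsub : MulAction.orbit K x ⊆ S := by
    rw [← horb]
    rintro _ ⟨k, rfl⟩
    exact ⟨⟨k.1, hKH k.2⟩, rfl⟩
  have hfin : (MulAction.orbit K x).Finite := hS.subset hsub
  have hpos : 0 < (MulAction.orbit K x).ncard :=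
    (Set.ncard_pos hfin).2 ⟨x, MulAction.mem_orbit_self x⟩
  have h1 : (MulAction.stabilizer G x ⊓ K).relIndex K * K.relIndex H
      = (MulAction.stabilizer G x ⊓ K).relIndex H :=
    Subgroup.relIndex_mul_relIndex _ _ _ inf_le_right hKH
  have h2 : (MulAction.stabilizer G x).relIndex H ∣
      (MulAction.stabilizer G x ⊓ K).relIndex H :=
    Subgroup.relIndex_dvd_of_le_left _ inf_le_left
  rw [Subgroup.inf_relIndex_right, orb K] at h1
  rw [orb H, horb, ← h1] at h2
  have h3 := Nat.le_of_dvd hpos (hc.dvd_of_dvd_mul_right h2)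
  have h4 := Set.eq_of_subset_of_ncard_le hsub h3 hS
  exact ⟨h4, by rw [orb K, h4]⟩

/-- Pointwise stabilizer of `a 0, ..., a s`. -/
def hatK (G : Type*) {V : Type*} [Group G] [MulAction G V] (a : ℕ → V) : ℕ → Subgroup G
  | 0 => MulAction.stabilizer G (a 0)
  | s + 1 => MulAction.stabilizer G (a (s + 1)) ⊓ hatK G a s

theorem mem_hatK {G V : Type*} [Group G] [MulAction G V] (a : ℕ → V) (s : ℕ) (g : G) :
    g ∈ hatK G a s ↔ ∀ i ≤ s, g • a i = a i := by
  induction s with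
  | zero => simp [hatK]
  | succ s ih =>
    simp only [hatK, Subgroup.mem_inf, ih, MulAction.mem_stabilizer_iff]
    constructor
    · rintro ⟨h1, h2⟩ i hi
      rcases Nat.lt_or_ge s i with h | h
      · have : i = s + 1 := by omega
        rw [this, h1]
      · exact h2 i h
    · intro h
      exact ⟨h _ le_rfl, fun i hi => h i (by omega)⟩

theorem hatK_shift {G V : Type*} [Group G] [MulAction G V] (a : ℕ → V) (s : ℕ) :
    hatK G a (s + 1) = MulAction.stabilizer G (a 0) ⊓ hatK G (fun i => a (i + 1)) s := by
  ext g
  simp only [Subgroup.mem_inf, mem_hatK, MulAction.mem_stabilizer_iff]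
  constructor
  · intro h
    exact ⟨h 0 (by omega), fun i hi => h (i + 1) (by omega)⟩
  · rintro ⟨h1, h2⟩ i hi
    rcases i with _ | i
    · exact h1
    · exact h2 i (by omega)

theorem hatK_le {G V : Type*} [Group G] [MulAction G V] (a : ℕ → V) (s i : ℕ) (hi : i ≤ s) :
    hatK G a s ≤ MulAction.stabilizer G (a i) := by
  intro g hg
  exact (mem_hatK a s g).1 hg i hi

section
variable {G V : Type*} [Group G] [MulAction G V]
    (A : V → V → Prop)
    (hlf : ∀ v : V, {w : V | A v w}.Finite ∧ {w : V | A w v}.Finite)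
    (hpres : ∀ (g : G) (u v : V), A u v → A (g • u) (g • v))
    (harctrans : ∀ a b c d : V, A a b → A c d → ∃ g : G, g • a = c ∧ g • b = d)
    (p q : ℕ) (hout : ∀ v : V, {w : V | A v w}.ncard = p)
    (hin : ∀ v : V, {w : V | A w v}.ncard = q)
    (hcop : Nat.Coprime p q)
include hlf hpres harctrans hout hin hcop

theorem hat_index (s : ℕ) : ∀ a : ℕ → V, (∀ i < s, A (a i) (a (i + 1))) →
    (hatK G a s).relIndex (MulAction.stabilizer G (a 0)) = p ^ s ∧
    (hatK G a s).relIndex (MulAction.stabilizer G (a s)) = q ^ s ∧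
    (∀ y, A (a s) y → ∀ z, A (a s) z → ∃ g ∈ hatK G a s, g • y = z) := by
  have oout : ∀ u v, A u v → MulAction.orbit (MulAction.stabilizer G u) v = {w | A u w} := by
    intro u v huv
    ext w
    constructor
    · rintro ⟨k, rfl⟩
      have := hpres k.1 u v huv
      rwa [show k.1 • u = u from k.2] at this
    · intro hw
      obtain ⟨g, h1, h2⟩ := harctrans u v u w huv hw
      exact ⟨⟨g, h1⟩, h2⟩
  have oin : ∀ u v, A u v → MulAction.orbit (MulAction.stabilizer G v) u = {w | A w v} := by
    intro u v huv
    ext w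
    constructor
    · rintro ⟨k, rfl⟩
      have := hpres k.1 u v huv
      rwa [show k.1 • v = v from k.2] at this
    · intro hw
      obtain ⟨g, h1, h2⟩ := harctrans u v w v huv hw
      exact ⟨⟨g, h2⟩, h1⟩
  have step : ∀ a : ℕ → V, ∀ s,
      (hatK G a s).relIndex (MulAction.stabilizer G (a s)) = q ^ s → ∀ y, A (a s) y →
      MulAction.orbit (hatK G a s) y = {w | A (a s) w} ∧
      (MulAction.stabilizer G y).relIndex (hatK G a s) = p := by
    intro a s h y hy
    have := hat_key (MulAction.stabilizer G (a s)) (hatK G a s) (hatK_le a s s le_rfl)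
      {w | A (a s) w} (hlf _).1 y (oout _ _ hy) (by rw [hout, h]; exact hcop.pow_right s)
    rwa [hout] at this
  induction s with
  | zero =>
    intro a _
    refine ⟨by simp [hatK], by simp [hatK], ?_⟩
    intro y hy z hz
    obtain ⟨g, h1, h2⟩ := harctrans _ _ _ _ hy hz
    exact ⟨g, h1, h2⟩
  | succ s ih =>
    intro a ha
    obtain ⟨i1, i2, -⟩ := ih a (fun i hi => ha i (by omega))
    obtain ⟨j1, j2, -⟩ := ih (fun i => a (i + 1)) (fun i hi => ha (i + 1) (by omega))
    have f2 : (hatK G a (s + 1)).relIndex (MulAction.stabilizer G (a (s + 1))) = q ^ (s + 1) := by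
      rw [hatK_shift, ← Subgroup.relIndex_mul_relIndex _ (hatK G (fun i => a (i + 1)) s) _
        inf_le_right (hatK_le (fun i => a (i + 1)) s s le_rfl), Subgroup.inf_relIndex_right, j2]
      have := (hat_key (MulAction.stabilizer G (a 1)) (hatK G (fun i => a (i + 1)) s)
        (hatK_le (fun i => a (i + 1)) s 0 (by omega))
        {w | A w (a 1)} (hlf _).2 (a 0) (oin _ _ (ha 0 (by omega)))
        (by rw [hin]; erw [j1]; exact hcop.symm.pow_right s)).2
      rw [this, hin, pow_succ, mul_comm]
    refine ⟨?_, f2, ?_⟩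
    · have := (step a s i2 (a (s + 1)) (ha s (by omega))).2
      rw [hatK, ← Subgroup.relIndex_mul_relIndex _ (hatK G a s) _
        inf_le_right (hatK_le a s 0 (by omega)), Subgroup.inf_relIndex_right, i1, this,
        pow_succ, mul_comm]
    · intro y hy z hz
      have := (step a (s + 1) f2 y hy).1
      have hz' : z ∈ MulAction.orbit (hatK G a (s + 1)) y := by rw [this]; exact hz
      obtain ⟨g, hg⟩ := hz'
      exact ⟨g.1, g.2, hg⟩

theorem hat_trans (hv : ∀ u v : V, ∃ g : G, g • u = v) (s : ℕ) (a b : ℕ → V)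
    (ha : ∀ i < s, A (a i) (a (i + 1)))
    (hb : ∀ i < s, A (b i) (b (i + 1))) : ∃ g : G, ∀ i ≤ s, g • a i = b i := by
  induction s with
  | zero =>
    obtain ⟨g, hg⟩ := hv (a 0) (b 0)
    refine ⟨g, fun i hi => ?_⟩
    obtain rfl : i = 0 := by omega
    exact hg
  | succ s ih =>
    obtain ⟨g, hg⟩ := ih (fun i hi => ha i (by omega)) (fun i hi => hb i (by omega))
    have h1 := hpres g _ _ (ha s (by omega))
    rw [hg s le_rfl] at h1
    obtain ⟨k, hk, hk2⟩ := (hat_index A hlf hpres harctrans p q hout hin hcop s b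
      (fun i hi => hb i (by omega))).2.2 _ h1 _ (hb s (by omega))
    refine ⟨k * g, fun i hi => ?_⟩
    rw [mul_smul]
    rcases Nat.lt_or_ge s i with h | h
    · obtain rfl : i = s + 1 := by omega
      exact hk2
    · rw [hg i h, (mem_hatK b s k).1 hk i h]

theorem hat_ends (s : ℕ) (a : ℕ → V) (ha : ∀ i < s, A (a i) (a (i + 1))) :
    hatK G a s = MulAction.stabilizer G (a 0) ⊓ MulAction.stabilizer G (a s) := by
  obtain ⟨h1, h2, -⟩ := hat_index A hlf hpres harctrans p q hout hin hcop s a ha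
  have hle : hatK G a s ≤ MulAction.stabilizer G (a 0) ⊓ MulAction.stabilizer G (a s) :=
    le_inf (hatK_le a s 0 (by omega)) (hatK_le a s s le_rfl)
  refine le_antisymm hle ?_
  rw [← Subgroup.relIndex_mul_relIndex _ _ _ hle inf_le_left] at h1
  rw [← Subgroup.relIndex_mul_relIndex _ _ _ hle inf_le_right] at h2
  rw [← Subgroup.relIndex_eq_one]
  exact Nat.eq_one_of_dvd_coprimes (hcop.pow s s) (Dvd.intro _ h1) (Dvd.intro _ h2)

theorem hat_unique (hv : ∀ u v : V, ∃ g : G, g • u = v) (s : ℕ) (a b : ℕ → V)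
    (ha : ∀ i < s, A (a i) (a (i + 1)))
    (hb : ∀ i < s, A (b i) (b (i + 1))) (h0 : a 0 = b 0) (hs : a s = b s) :
    ∀ i ≤ s, a i = b i := by
  obtain ⟨g, hg⟩ := hat_trans A hlf hpres harctrans p q hout hin hcop hv s a b ha hb
  have hk : g ∈ hatK G a s := by
    rw [hat_ends A hlf hpres harctrans p q hout hin hcop s a ha]
    exact ⟨by simpa [h0] using hg 0 (by omega), by simpa [hs] using hg s le_rfl⟩
  intro i hi
  rw [← hg i hi, (mem_hatK a s g).1 hk i hi]

theorem hat_lengths (m n : ℕ) (hmn : m < n) (P Q : ℕ → V)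
    (hP : ∀ i < m, A (P i) (P (i + 1)))
    (hQ : ∀ i < n, A (Q i) (Q (i + 1))) (h0 : P 0 = Q 0) (he : P m = Q n) :
    Q m = Q n := by
  have e1 := hat_ends A hlf hpres harctrans p q hout hin hcop m P hP
  have e2 := hat_ends A hlf hpres harctrans p q hout hin hcop n Q hQ
  have i1 := (hat_index A hlf hpres harctrans p q hout hin hcop m P hP).1
  have i2 := (hat_index A hlf hpres harctrans p q hout hin hcop n Q hQ).1
  have hpp : p ^ m = p ^ n := by
    rw [← i1, ← i2, e1, e2, h0, he]
  have hp0 : 0 < p := by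
    rw [← hout (Q 0)]
    exact (Set.ncard_pos (hlf _).1).2 ⟨Q 1, hQ 0 (by omega)⟩
  have hp1 : p = 1 := by
    by_contra hne
    have := Nat.pow_lt_pow_right (a := p) (by omega) hmn
    omega
  have key : ∀ i ≤ m, P i = Q i := by
    intro i
    induction i with
    | zero => intro _; exact h0
    | succ i ih =>
      intro hi
      have h := ih (by omega)
      have h1 := hP i (by omega)
      have h2 := hQ i (by omega)
      rw [h] at h1
      obtain ⟨w, hw⟩ := Set.ncard_eq_one.1 ((hout (Q i)).trans hp1)
      have a1 : P (i + 1) ∈ ({w} : Set V) := by rw [← hw]; exact h1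
      have a2 : Q (i + 1) ∈ ({w} : Set V) := by rw [← hw]; exact h2
      rw [Set.mem_singleton_iff.1 a1, Set.mem_singleton_iff.1 a2]
  rw [← key m le_rfl, he]
end

/-- Let `Γ` be a locally finite digraph (arc relation `A`) and `G` a group of digraph
automorphisms acting vertex- and arc-transitively.  If the common out-degree `p` and the
common in-degree `q` are coprime, then `G` acts transitively on `s`-arcs for every `s ≥ 1`
(the digraph is highly-arc-transitive), and every descendant of a vertex `α` is reached
from `α` by a unique directed path (so the subdigraph induced on the descendants of `α`
is a tree). -/
theorem coprime_degrees_highly_arc_transitive {G V : Type*} [Group G]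
    (A : V → V → Prop) (hirr : ∀ v, ¬ A v v)
    (hlf : ∀ v : V, {w : V | A v w}.Finite ∧ {w : V | A w v}.Finite)
    (ρ : G →* Equiv.Perm V)
    (hpres : ∀ (g : G) (u v : V), A u v → A (ρ g u) (ρ g v))
    (hvtrans : ∀ u v : V, ∃ g : G, ρ g u = v)
    (harctrans : ∀ a b c d : V, A a b → A c d → ∃ g : G, ρ g a = c ∧ ρ g b = d)
    (p q : ℕ) (hout : ∀ v : V, {w : V | A v w}.ncard = p)
    (hin : ∀ v : V, {w : V | A w v}.ncard = q)
    (hcop : Nat.Coprime p q) :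
    (∀ s : ℕ, 1 ≤ s → ∀ a b : ℕ → V,
      (∀ i < s, A (a i) (a (i + 1))) → (∀ i, i + 2 ≤ s → a i ≠ a (i + 2)) →
      (∀ i < s, A (b i) (b (i + 1))) → (∀ i, i + 2 ≤ s → b i ≠ b (i + 2)) →
      ∃ g : G, ∀ i ≤ s, ρ g (a i) = b i) ∧
    (∀ (α : V) (m m' : ℕ) (P Q : ℕ → V),
      P 0 = α → Q 0 = α →
      (∀ i < m, A (P i) (P (i + 1))) → (∀ i < m', A (Q i) (Q (i + 1))) →
      (∀ i j, i ≤ m → j ≤ m → P i = P j → i = j) →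
      (∀ i j, i ≤ m' → j ≤ m' → Q i = Q j → i = j) →
      P m = Q m' → m = m' ∧ ∀ i ≤ m, P i = Q i) := by
  letI : MulAction G V := MulAction.compHom V ρ
  refine ⟨fun s _ a b ha _ hb _ =>
    hat_trans A hlf hpres harctrans p q hout hin hcop hvtrans s a b ha hb, ?_⟩
  intro α m m' P Q hP0 hQ0 hP hQ hPi hQi he
  have hm : m = m' := by
    rcases Nat.lt_trichotomy m m' with h | h | h
    · exact hQi _ _ h.le le_rfl (hat_lengths (G := G) A hlf hpres harctrans p q hout hin hcop
        m m' h P Q hP hQ (hP0.trans hQ0.symm) he)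
    · exact h
    · exact (hPi _ _ h.le le_rfl (hat_lengths (G := G) A hlf hpres harctrans p q hout hin hcop
        m' m h Q P hQ hP (hQ0.trans hP0.symm) he.symm)).symm
  subst hm
  exact ⟨rfl, hat_unique (G := G) A hlf hpres harctrans p q hout hin hcop hvtrans m P Q hP hQ
    (hP0.trans hQ0.symm) he⟩
end

section
/- Let G be a t.d.l.c. group, let g ∈ G, and let U be a compact open subgroup of G such that the indices [U : U ∩ g^{-1}Ug] and [U : U ∩ gUg^{-1}] are (finite and) coprime. Then for every compact open subgroup V of G one has [U : U ∩ g^{-1}Ug] ≤ [V : V ∩ g^{-1}Vg]; that is, U is tidy for g and the scale satisfies s(g) = [U : U ∩ g^{-1}Ug]. -/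
/-- The conjugate subgroup `g⁻¹ U g`. -/
def conjSubgroup {G : Type*} [Group G] (g : G) (U : Subgroup G) : Subgroup G :=
  U.map (MulAut.conj g⁻¹).toMonoidHom

theorem relIndex_cross {G : Type*} [Group G] (K A B : Subgroup G) (hA : K ≤ A) (hB : K ≤ B) :
    K.relIndex A * A.relIndex B = K.relIndex B * B.relIndex A := by
  have h1 := Subgroup.relIndex_mul_relIndex K (A ⊓ B) A (le_inf hA hB) inf_le_left
  have h2 := Subgroup.relIndex_mul_relIndex K (A ⊓ B) B (le_inf hA hB) inf_le_right
  rw [Subgroup.inf_relIndex_left] at h1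
  rw [Subgroup.inf_relIndex_right] at h2
  rw [← h1, ← h2]; ring

theorem relIndex_ne_zero_of_open_compact {G : Type*} [Group G] [TopologicalSpace G]
    [IsTopologicalGroup G] (K A : Subgroup G) (hK : IsOpen (K : Set G))
    (hA : IsCompact (A : Set G)) : K.relIndex A ≠ 0 := by
  have : CompactSpace A := isCompact_iff_compactSpace.mp hA
  have ho : IsOpen ((K.subgroupOf A : Subgroup A) : Set A) :=
    hK.preimage continuous_subtype_val
  have := Subgroup.quotient_finite_of_isOpen (K.subgroupOf A) ho
  exact Subgroup.index_ne_zero_of_finite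

theorem conj_isOpen {G : Type*} [Group G] [TopologicalSpace G]
    [IsTopologicalGroup G] (g : G) (A : Subgroup G) (hA : IsOpen (A : Set G)) :
    IsOpen (conjSubgroup g A : Set G) := by
  have : (conjSubgroup g A : Set G) = (fun x => g * x * g⁻¹) ⁻¹' (A : Set G) := by
    ext x
    simp only [conjSubgroup, SetLike.mem_coe, Subgroup.mem_map, Set.mem_preimage]
    constructor
    · rintro ⟨y, hy, rfl⟩
      simpa [mul_assoc] using hy
    · intro h
      exact ⟨_, h, by simp [mul_assoc]⟩
  rw [this]
  exact hA.preimage (by fun_prop)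

theorem conj_isCompact {G : Type*} [Group G] [TopologicalSpace G]
    [IsTopologicalGroup G] (g : G) (A : Subgroup G) (hA : IsCompact (A : Set G)) :
    IsCompact (conjSubgroup g A : Set G) := by
  have : (conjSubgroup g A : Set G) = (fun x => g⁻¹ * x * g) '' (A : Set G) := by
    ext x
    simp [conjSubgroup]
  rw [this]
  exact hA.image (by fun_prop)

theorem conj_relIndex {G : Type*} [Group G] (g : G) (A B : Subgroup G) :
    (conjSubgroup g A).relIndex (conjSubgroup g B) = A.relIndex B :=
  Subgroup.relIndex_map_map_of_injective A B (MulAut.conj g⁻¹).injective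

theorem conj_conj_inv {G : Type*} [Group G] (g : G) (A : Subgroup G) :
    conjSubgroup g (conjSubgroup g⁻¹ A) = A := by
  ext x
  simp [conjSubgroup, Subgroup.mem_map, mul_assoc]


/-- Let `G` be a t.d.l.c. group, `g ∈ G` and `U` a compact open subgroup such that the
indices `[U : U ∩ g⁻¹Ug]` and `[U : U ∩ gUg⁻¹]` are finite and coprime.  Then `U` is tidy
for `g`: for every compact open subgroup `V` of `G` one has
`[U : U ∩ g⁻¹Ug] ≤ [V : V ∩ g⁻¹Vg]`, i.e. the scale satisfies `s(g) = [U : U ∩ g⁻¹Ug]`. -/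
theorem coprime_indices_tidy {G : Type*} [Group G] [TopologicalSpace G]
    [IsTopologicalGroup G] [T2Space G] [TotallyDisconnectedSpace G] [LocallyCompactSpace G]
    (g : G) (U : Subgroup G) (hUc : IsCompact (U : Set G)) (hUo : IsOpen (U : Set G))
    (hpos₁ : 0 < (conjSubgroup g U).relIndex U)
    (hpos₂ : 0 < (conjSubgroup g⁻¹ U).relIndex U)
    (hcop : Nat.Coprime ((conjSubgroup g U).relIndex U) ((conjSubgroup g⁻¹ U).relIndex U)) :
    ∀ V : Subgroup G, IsCompact (V : Set G) → IsOpen (V : Set G) →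
      (conjSubgroup g U).relIndex U ≤ (conjSubgroup g V).relIndex V := by
  intro V hVc hVo
  have key : ∀ A : Subgroup G,
      (conjSubgroup g⁻¹ A).relIndex A = A.relIndex (conjSubgroup g A) := by
    intro A
    rw [← conj_relIndex g (conjSubgroup g⁻¹ A) A, conj_conj_inv]
  rw [key U] at hcop
  have hUo' := conj_isOpen g U hUo
  have hVo' := conj_isOpen g V hVo
  have hUc' := conj_isCompact g U hUc
  have hVc' := conj_isCompact g V hVc
  have hKo : IsOpen (((U ⊓ conjSubgroup g U) ⊓ (V ⊓ conjSubgroup g V) : Subgroup G) : Set G) :=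
    (hUo.inter hUo').inter (hVo.inter hVo')
  obtain ⟨K, hK⟩ : ∃ K, K = (U ⊓ conjSubgroup g U) ⊓ (V ⊓ conjSubgroup g V) := ⟨_, rfl⟩
  rw [← hK] at hKo
  have k1 : K ≤ U := hK ▸ inf_le_left.trans inf_le_left
  have k2 : K ≤ conjSubgroup g U := hK ▸ inf_le_left.trans inf_le_right
  have k3 : K ≤ V := hK ▸ inf_le_right.trans inf_le_left
  have k4 : K ≤ conjSubgroup g V := hK ▸ inf_le_right.trans inf_le_right
  have e1 := relIndex_cross K _ _ k1 k2
  have e2 := relIndex_cross K _ _ k3 k4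
  have e3 := relIndex_cross K _ _ k1 k3
  have e4 := relIndex_cross K _ _ k2 k4
  rw [conj_relIndex, conj_relIndex] at e4
  have a0 := relIndex_ne_zero_of_open_compact K U hKo hUc
  have b0 := relIndex_ne_zero_of_open_compact K _ hKo hUc'
  have c0 := relIndex_ne_zero_of_open_compact K V hKo hVc
  have d0 := relIndex_ne_zero_of_open_compact K _ hKo hVc'
  have p0 := relIndex_ne_zero_of_open_compact U V hUo hVc
  have q0 := relIndex_ne_zero_of_open_compact V U hVo hUc
  have m0 := relIndex_ne_zero_of_open_compact _ V hVo' hVc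
  clear hpos₁ hpos₂
  generalize (conjSubgroup g U).relIndex U = m at *
  generalize U.relIndex (conjSubgroup g U) = n at *
  generalize (conjSubgroup g V).relIndex V = m' at *
  generalize V.relIndex (conjSubgroup g V) = n' at *
  generalize K.relIndex U = a at *
  generalize K.relIndex (conjSubgroup g U) = b at *
  generalize K.relIndex V = c at *
  generalize K.relIndex (conjSubgroup g V) = d at *
  generalize U.relIndex V = p at *
  generalize V.relIndex U = q at *
  have e5 : a * d = b * c := by
    apply Nat.eq_of_mul_eq_mul_right (Nat.pos_of_ne_zero (mul_ne_zero p0 q0))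
    calc a * d * (p * q) = (a * p) * (d * q) := by ring
      _ = (c * q) * (b * p) := by rw [e3, e4]
      _ = b * c * (p * q) := by ring
  have e6 : m * n' = n * m' := by
    apply Nat.eq_of_mul_eq_mul_right (Nat.pos_of_ne_zero (mul_ne_zero b0 c0))
    calc m * n' * (b * c) = (b * m) * (c * n') := by ring
      _ = (a * n) * (d * m') := by rw [← e1, e2]
      _ = n * m' * (a * d) := by ring
      _ = n * m' * (b * c) := by rw [e5]
  exact Nat.le_of_dvd (Nat.pos_of_ne_zero m0) (hcop.dvd_of_dvd_mul_left ⟨n', e6.symm⟩)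
end

section
/- Let G be a second countable profinite group and let (G_i) and (H_j) be two composition series of G. Then for every finite simple group A, the cardinality of the set of indices i such that G_i/G_{i+1} ≅ A equals the cardinality of the set of indices j such that H_j/H_{j+1} ≅ A; that is, any two composition series of G have, up to isomorphism and permutation, the same composition factors appearing with the same (finite or countably infinite) multiplicities. -/
/-- A composition series of a profinite group `G`: a descending chain
`G = H 0 ⊵ H 1 ⊵ ⋯` of closed subgroups with trivial intersection such that at each step
either `H (i+1)` is a proper normal subgroup of `H i` with simple quotient, or the chain
has already reached the trivial subgroup (this uniformly encodes finite series, padded by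
the trivial subgroup, and infinite series). -/
structure ProfiniteCompositionSeries (G : Type*) [Group G] [TopologicalSpace G] where
  H : ℕ → Subgroup G
  top_eq : H 0 = ⊤
  isClosed : ∀ i, IsClosed (H i : Set G)
  antitone : ∀ i, H (i + 1) ≤ H i
  iInf_eq_bot : ⨅ i, H i = ⊥
  normal : ∀ i, ((H (i + 1)).subgroupOf (H i)).Normal
  step : ∀ i, (H (i + 1) < H i ∧
      (letI := normal i
       IsSimpleGroup (↥(H i) ⧸ (H (i + 1)).subgroupOf (H i)))) ∨ H i = ⊥

variable {G : Type*} [Group G] [TopologicalSpace G]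

/-- The `i`-th composition factor `H i / H (i+1)` of a composition series. -/
def ProfiniteCompositionSeries.factor (S : ProfiniteCompositionSeries G) (i : ℕ) :
    Type _ :=
  letI := S.normal i
  ↥(S.H i) ⧸ (S.H (i + 1)).subgroupOf (S.H i)

noncomputable instance (S : ProfiniteCompositionSeries G) (i : ℕ) : Group (S.factor i) :=
  letI := S.normal i
  inferInstanceAs (Group (↥(S.H i) ⧸ (S.H (i + 1)).subgroupOf (S.H i)))

namespace ProfiniteCompositionSeries

/-- The quotient map from a term of the series to its factor. -/
noncomputable def proj (S : ProfiniteCompositionSeries G) (i : ℕ) : S.H i →* S.factor i :=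
  letI := S.normal i
  QuotientGroup.mk' ((S.H (i + 1)).subgroupOf (S.H i))

theorem proj_surjective (S : ProfiniteCompositionSeries G) (i : ℕ) :
    Function.Surjective (S.proj i) :=
  letI := S.normal i
  QuotientGroup.mk'_surjective ((S.H (i + 1)).subgroupOf (S.H i))

theorem proj_eq_one (S : ProfiniteCompositionSeries G) (i : ℕ) (x : S.H i) :
    S.proj i x = 1 ↔ (x : G) ∈ S.H (i + 1) := by
  letI := S.normal i
  exact (QuotientGroup.eq_one_iff x).trans Subgroup.mem_subgroupOf

theorem factor_simple (S : ProfiniteCompositionSeries G) (i : ℕ) (h : S.H (i + 1) < S.H i) :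
    IsSimpleGroup (S.factor i) := by
  rcases S.step i with h' | h'
  · exact h'.2
  · rw [h'] at h
    exact absurd h not_lt_bot

theorem anti (S : ProfiniteCompositionSeries G) : Antitone S.H :=
  antitone_nat_of_succ_le S.antitone

theorem conj_mem (S : ProfiniteCompositionSeries G) (i : ℕ) {y t : G} (hy : y ∈ S.H i)
    (ht : t ∈ S.H (i + 1)) : y * t * y⁻¹ ∈ S.H (i + 1) := by
  have := (S.normal i).conj_mem ⟨t, S.antitone i ht⟩ (Subgroup.mem_subgroupOf.2 ht) ⟨y, hy⟩
  exact Subgroup.mem_subgroupOf.1 this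

/-- `S_i ∩ T_j` maps onto `S_i / S_{i+1}`. -/
def Onto (S T : ProfiniteCompositionSeries G) (i j : ℕ) : Prop :=
  ∀ x ∈ S.H i, ∃ y ∈ S.H i, y ∈ T.H j ∧ y⁻¹ * x ∈ S.H (i + 1)

/-- `S_i ∩ T_j` maps trivially to `S_i / S_{i+1}`. -/
def Triv (S T : ProfiniteCompositionSeries G) (i j : ℕ) : Prop :=
  ∀ x ∈ S.H i, x ∈ T.H j → x ∈ S.H (i + 1)

theorem not_onto_triv (S T : ProfiniteCompositionSeries G) {i j : ℕ}
    (h : S.H (i + 1) < S.H i) (ho : Onto S T i j) (ht : Triv S T i j) : False := by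
  obtain ⟨x, hx, hx'⟩ := SetLike.exists_of_lt h
  obtain ⟨y, hy, hyT, hyx⟩ := ho x hx
  apply hx'
  have := mul_mem (ht y hy hyT) hyx
  simpa using this

theorem onto_step (S T : ProfiniteCompositionSeries G) {i j : ℕ}
    (h : S.H (i + 1) < S.H i) (ho : Onto S T i j) :
    Onto S T i (j + 1) ∨ Triv S T i (j + 1) := by
  haveI := S.factor_simple i h
  let N : Subgroup (S.factor i) := ((T.H (j + 1)).subgroupOf (S.H i)).map (S.proj i)
  have hN : N.Normal := by
    constructor
    rintro _ ⟨t, ht, rfl⟩ g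
    obtain ⟨x, rfl⟩ := S.proj_surjective i g
    obtain ⟨y, hy, hyT, hyx⟩ := ho x x.2
    have e : S.proj i x = S.proj i ⟨y, hy⟩ := by
      have := (S.proj_eq_one i (⟨y, hy⟩⁻¹ * x)).2 hyx
      rw [map_mul, map_inv, inv_mul_eq_one] at this
      exact this.symm
    rw [e]
    refine ⟨⟨y, hy⟩ * t * ⟨y, hy⟩⁻¹, ?_, by simp⟩
    exact T.conj_mem j hyT ht
  rcases hN.eq_bot_or_eq_top with hb | hb
  · right
    intro x hx hxT
    rw [← S.proj_eq_one i ⟨x, hx⟩, ← Subgroup.mem_bot, ← hb]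
    exact ⟨⟨x, hx⟩, hxT, rfl⟩
  · left
    intro x hx
    have : S.proj i ⟨x, hx⟩ ∈ N := by rw [hb]; trivial
    obtain ⟨y, hy, e⟩ := this
    refine ⟨y, y.2, hy, ?_⟩
    rw [← inv_mul_eq_one, ← map_inv, ← map_mul, S.proj_eq_one] at e
    exact e

theorem onto_zero (S T : ProfiniteCompositionSeries G) (i : ℕ) : Onto S T i 0 := by
  intro x hx
  refine ⟨x, hx, ?_, by simp⟩
  rw [T.top_eq]; trivial

theorem onto_or_triv (S T : ProfiniteCompositionSeries G) {i : ℕ}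
    (h : S.H (i + 1) < S.H i) (j : ℕ) : Onto S T i j ∨ Triv S T i j := by
  induction j with
  | zero => exact Or.inl (onto_zero S T i)
  | succ j ih =>
    rcases ih with ih | ih
    · exact onto_step S T h ih
    · exact Or.inr fun x hx hxT => ih x hx (T.antitone j hxT)

theorem exists_not_onto [IsTopologicalGroup G] [CompactSpace G]
    (S T : ProfiniteCompositionSeries G) {i : ℕ}
    (h : S.H (i + 1) < S.H i) : ∃ j, ¬ Onto S T i j := by
  by_contra! hall
  obtain ⟨x, hx, hx'⟩ := SetLike.exists_of_lt h
  have hcl : ∀ j, IsClosed ((T.H j : Set G) ∩ {y | y⁻¹ * x ∈ S.H (i + 1)}) := fun j =>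
    (T.isClosed j).inter ((S.isClosed (i + 1)).preimage (by fun_prop))
  have hne := IsCompact.nonempty_iInter_of_sequence_nonempty_isCompact_isClosed
    (fun j => (T.H j : Set G) ∩ {y | y⁻¹ * x ∈ S.H (i + 1)})
    (fun j y hy => ⟨T.antitone j hy.1, hy.2⟩)
    (fun j => by
      obtain ⟨y, _, hyT, hyx⟩ := hall j x hx
      exact ⟨y, hyT, hyx⟩)
    (hcl 0).isCompact hcl
  obtain ⟨y, hy⟩ := hne
  rw [Set.mem_iInter] at hy
  have h1 : y ∈ ⨅ j, T.H j := by
    rw [Subgroup.mem_iInf]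
    exact fun j => (hy j).1
  rw [T.iInf_eq_bot, Subgroup.mem_bot] at h1
  have h2 := (hy 0).2
  simp only [Set.mem_setOf_eq, h1, inv_one, one_mul] at h2
  exact hx' h2

/-- The series `T` jumps inside the factor `S_i / S_{i+1}` at step `j`. -/
def Jump (S T : ProfiniteCompositionSeries G) (i j : ℕ) : Prop :=
  Onto S T i j ∧ Triv S T i (j + 1)

theorem exists_jump [IsTopologicalGroup G] [CompactSpace G]
    (S T : ProfiniteCompositionSeries G) {i : ℕ}
    (h : S.H (i + 1) < S.H i) : ∃ j, Jump S T i j := by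
  classical
  have hex := exists_not_onto S T h
  obtain ⟨j, hj⟩ : ∃ j, Nat.find hex = j + 1 := by
    refine Nat.exists_eq_succ_of_ne_zero fun h0 => ?_
    have := Nat.find_spec hex
    rw [h0] at this
    exact this (onto_zero S T i)
  have h1 : Onto S T i j := not_not.1 (Nat.find_min hex (by omega))
  have h2 := Nat.find_spec hex
  rw [hj] at h2
  exact ⟨j, h1, (onto_or_triv S T h (j + 1)).resolve_left h2⟩

theorem Jump.lt {S T : ProfiniteCompositionSeries G} {i j : ℕ}
    (h : S.H (i + 1) < S.H i) (hJ : Jump S T i j) : T.H (j + 1) < T.H j := by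
  refine lt_of_le_of_ne (T.antitone j) fun e => ?_
  refine not_onto_triv S T h hJ.1 ?_
  have := hJ.2
  unfold Triv at this
  rwa [e] at this

theorem Jump.symm {S T : ProfiniteCompositionSeries G} {i j : ℕ}
    (h : S.H (i + 1) < S.H i) (hJ : Jump S T i j) : Jump T S j i := by
  have hT := hJ.lt h
  refine ⟨(onto_or_triv T S hT i).resolve_right fun ht => ?_,
    (onto_or_triv T S hT (i + 1)).resolve_left fun ho => ?_⟩
  · exact not_onto_triv S T h hJ.1 fun x hx hxT => hJ.2 x hx (ht x hxT hx)
  · refine not_onto_triv S T h hJ.1 fun x hx hxT => ?_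
    obtain ⟨y, hyT, hyS, hyx⟩ := ho x hxT
    have := mul_mem hyS
      (hJ.2 (y⁻¹ * x) (mul_mem (inv_mem (S.antitone i hyS)) hx) hyx)
    simpa using this

theorem Jump.unique {S T : ProfiniteCompositionSeries G} {i j j' : ℕ}
    (h : S.H (i + 1) < S.H i) (hJ : Jump S T i j) (hJ' : Jump S T i j') : j = j' := by
  have key : ∀ a b, Jump S T i a → Jump S T i b → ¬ a < b := fun a b ha hb hab =>
    not_onto_triv S T h hb.1 fun x hx hxT => ha.2 x hx (T.anti hab hxT)
  have h1 := key _ _ hJ hJ'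
  have h2 := key _ _ hJ' hJ
  omega

/-- The restriction of the projection to `S_i ∩ T_j`. -/
noncomputable def res (S T : ProfiniteCompositionSeries G) (i j : ℕ) :
    (S.H i ⊓ T.H j : Subgroup G) →* S.factor i :=
  (S.proj i).comp (Subgroup.inclusion inf_le_left)

/-- The other restriction of the projection, to `S_i ∩ T_j`. -/
noncomputable def res' (S T : ProfiniteCompositionSeries G) (i j : ℕ) :
    (S.H i ⊓ T.H j : Subgroup G) →* T.factor j :=
  (T.proj j).comp (Subgroup.inclusion inf_le_right)

theorem Onto.surj {S T : ProfiniteCompositionSeries G} {i j : ℕ} (ho : Onto S T i j)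
    (g : S.factor i) : ∃ y, ∃ hy : y ∈ S.H i, y ∈ T.H j ∧ S.proj i ⟨y, hy⟩ = g := by
  obtain ⟨x, rfl⟩ := S.proj_surjective i g
  obtain ⟨y, hy, hyT, hyx⟩ := ho x x.2
  refine ⟨y, hy, hyT, ?_⟩
  have := (S.proj_eq_one i (⟨y, hy⟩⁻¹ * x)).2 hyx
  rw [map_mul, map_inv, inv_mul_eq_one] at this
  exact this

theorem Jump.equiv {S T : ProfiniteCompositionSeries G} {i j : ℕ}
    (h : S.H (i + 1) < S.H i) (hJ : Jump S T i j) :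
    Nonempty (S.factor i ≃* T.factor j) := by
  have hJ' := hJ.symm h
  have s1 : Function.Surjective (res S T i j) := fun g => by
    obtain ⟨y, hy, hyT, e⟩ := hJ.1.surj g
    exact ⟨⟨y, hy, hyT⟩, e⟩
  have s2 : Function.Surjective (res' S T i j) := fun g => by
    obtain ⟨y, hy, hyS, e⟩ := hJ'.1.surj g
    exact ⟨⟨y, hyS, hy⟩, e⟩
  have hk : (res S T i j).ker = (res' S T i j).ker := by
    ext ⟨x, hxS, hxT⟩
    have e1 : res S T i j ⟨x, hxS, hxT⟩ = 1 ↔ x ∈ S.H (i + 1) := S.proj_eq_one i ⟨x, hxS⟩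
    have e2 : res' S T i j ⟨x, hxS, hxT⟩ = 1 ↔ x ∈ T.H (j + 1) := T.proj_eq_one j ⟨x, hxT⟩
    rw [MonoidHom.mem_ker, MonoidHom.mem_ker, e1, e2]
    exact ⟨fun hx => hJ'.2 x hxT hx, fun hx => hJ.2 x hxS hx⟩
  exact ⟨((QuotientGroup.quotientKerEquivOfSurjective _ s1).symm.trans
    (QuotientGroup.quotientMulEquivOfEq hk)).trans
    (QuotientGroup.quotientKerEquivOfSurjective _ s2)⟩

theorem card_le [IsTopologicalGroup G] [CompactSpace G]
    (A : Type*) [Group A] (S T : ProfiniteCompositionSeries G) :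
    Cardinal.mk {i : ℕ // S.H (i + 1) < S.H i ∧ Nonempty (S.factor i ≃* A)} ≤
      Cardinal.mk {i : ℕ // T.H (i + 1) < T.H i ∧ Nonempty (T.factor i ≃* A)} := by
  choose f hf using fun x : {i : ℕ // S.H (i + 1) < S.H i ∧ Nonempty (S.factor i ≃* A)} =>
    exists_jump S T x.2.1
  refine Cardinal.mk_le_of_injective
    (f := fun x => ⟨f x, (hf x).lt x.2.1, ?_⟩) ?_
  · obtain ⟨e⟩ := (hf x).equiv x.2.1
    obtain ⟨e'⟩ := x.2.2
    exact ⟨e.symm.trans e'⟩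
  · intro x y hxy
    have e : f x = f y := congrArg Subtype.val hxy
    have h1 := (hf x).symm x.2.1
    have h2 := (hf y).symm y.2.1
    rw [← e] at h2
    exact Subtype.ext (h1.unique ((hf x).lt x.2.1) h2)

end ProfiniteCompositionSeries

/-- Jordan–Hölder theorem for second countable profinite groups: any two composition series
have, up to isomorphism and permutation, the same composition factors appearing with the
same (finite or countably infinite) multiplicities. -/
theorem profinite_jordan_holder [IsTopologicalGroup G] [CompactSpace G] [T2Space G]
    [TotallyDisconnectedSpace G] [SecondCountableTopology G]
    (A : Type*) [Group A] [Finite A] [IsSimpleGroup A]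
    (S T : ProfiniteCompositionSeries G) :
    Cardinal.mk {i : ℕ // S.H (i + 1) < S.H i ∧ Nonempty (S.factor i ≃* A)} =
      Cardinal.mk {i : ℕ // T.H (i + 1) < T.H i ∧ Nonempty (T.factor i ≃* A)} :=
  le_antisymm (ProfiniteCompositionSeries.card_le A S T)
    (ProfiniteCompositionSeries.card_le A T S)
end

section
/- Let G be a t.d.l.c. group and K a compact normal subgroup of G (so K is closed and the quotient G/K is again a t.d.l.c. group). Then for every g ∈ G, the scale of the coset gK in G/K equals the scale of g in G: s_{G/K}(gK) = s_G(g). -/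
/-- The scale of `g`: the minimum of the indices `[U : U ∩ g⁻¹Ug]` over all compact open
subgroups `U` of `G`. -/
noncomputable def scaleOf (G : Type*) [Group G] [TopologicalSpace G] (g : G) : ℕ :=
  sInf {n : ℕ | ∃ U : Subgroup G, IsCompact (U : Set G) ∧ IsOpen (U : Set G) ∧
    n = (conjSubgroup g U).relIndex U}

theorem mem_conjSubgroup_iff {G : Type*} [Group G] (g x : G) (U : Subgroup G) :
    x ∈ conjSubgroup g U ↔ g * x * g⁻¹ ∈ U := by
  unfold conjSubgroup
  rw [Subgroup.mem_map]
  constructor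
  · rintro ⟨y, hy, rfl⟩
    simpa [mul_assoc] using hy
  · intro h
    exact ⟨_, h, by simp [mul_assoc]⟩

theorem relIndex_ne_zero_of_compact_open {G : Type*} [Group G] [TopologicalSpace G]
    [IsTopologicalGroup G] (U V : Subgroup G) (hU : IsCompact (U : Set G))
    (hV : IsOpen (V : Set G)) : V.relIndex U ≠ 0 := by
  have : CompactSpace U := isCompact_iff_compactSpace.mp hU
  have ho : IsOpen ((V.subgroupOf U : Subgroup U) : Set U) :=
    hV.preimage continuous_subtype_val
  have : Finite (U ⧸ V.subgroupOf U) := Subgroup.quotient_finite_of_isOpen _ ho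
  have := Subgroup.finiteIndex_of_finite_quotient (H := V.subgroupOf U)
  exact Subgroup.FiniteIndex.index_ne_zero (H := V.subgroupOf U)

theorem isOpen_conjSubgroup {G : Type*} [Group G] [TopologicalSpace G]
    [IsTopologicalGroup G] (g : G) (U : Subgroup G) (hU : IsOpen (U : Set G)) :
    IsOpen (conjSubgroup g U : Set G) := by
  have : (conjSubgroup g U : Set G) = (fun x => g * x * g⁻¹) ⁻¹' (U : Set G) := by
    ext x
    exact mem_conjSubgroup_iff g x U
  rw [this]
  exact hU.preimage (by fun_prop)

/-- Let `G` be a t.d.l.c. group and `K` a compact normal subgroup of `G`.  Then for every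
`g ∈ G` the scale of the coset `gK` in the quotient t.d.l.c. group `G/K` equals the scale
of `g` in `G`. -/
theorem scale_quotient_by_compact_normal {G : Type*} [Group G] [TopologicalSpace G]
    [IsTopologicalGroup G] [T2Space G] [TotallyDisconnectedSpace G] [LocallyCompactSpace G]
    (K : Subgroup G) [K.Normal] (hKc : IsCompact (K : Set G)) (g : G) :
    scaleOf (G ⧸ K) (↑g) = scaleOf G g := by
  have up : ∀ n, (∃ U : Subgroup (G ⧸ K), IsCompact (U : Set (G ⧸ K)) ∧
      IsOpen (U : Set (G ⧸ K)) ∧ n = (conjSubgroup (g : G ⧸ K) U).relIndex U) →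
      ∃ U : Subgroup G, IsCompact (U : Set G) ∧ IsOpen (U : Set G) ∧
        n = (conjSubgroup g U).relIndex U := by
    rintro n ⟨U, hc, ho, rfl⟩
    have hprop : IsProperMap ((↑) : G → G ⧸ K) := by
      rw [isProperMap_iff_isClosedMap_and_compact_fibers]
      refine ⟨continuous_quot_mk, QuotientGroup.isClosedMap_coe hKc, fun y => ?_⟩
      obtain ⟨a, rfl⟩ := QuotientGroup.mk_surjective y
      have : ((↑) : G → G ⧸ K) ⁻¹' {(a : G ⧸ K)} = (fun x => a * x) '' (K : Set G) := by
        ext x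
        simp only [Set.mem_preimage, Set.mem_singleton_iff, Set.mem_image, SetLike.mem_coe]
        rw [eq_comm, QuotientGroup.eq]
        constructor
        · intro h
          exact ⟨_, h, by simp⟩
        · rintro ⟨k, hk, rfl⟩
          simpa using hk
      rw [this]
      exact hKc.image (by fun_prop)
    refine ⟨U.comap (QuotientGroup.mk' K), hprop.isCompact_preimage hc,
      ho.preimage hprop.continuous, ?_⟩
    have hconj : conjSubgroup g (U.comap (QuotientGroup.mk' K)) =
        (conjSubgroup (g : G ⧸ K) U).comap (QuotientGroup.mk' K) := by
      ext x
      simp [mem_conjSubgroup_iff]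
    rw [hconj, Subgroup.relIndex_comap,
      Subgroup.map_comap_eq_self_of_surjective (QuotientGroup.mk'_surjective K)]
  have down : ∀ n, (∃ U : Subgroup G, IsCompact (U : Set G) ∧ IsOpen (U : Set G) ∧
        n = (conjSubgroup g U).relIndex U) →
      ∃ m ≤ n, ∃ U : Subgroup (G ⧸ K), IsCompact (U : Set (G ⧸ K)) ∧
      IsOpen (U : Set (G ⧸ K)) ∧ m = (conjSubgroup (g : G ⧸ K) U).relIndex U := by
    rintro n ⟨U, hc, ho, rfl⟩
    refine ⟨_, ?_, U.map (QuotientGroup.mk' K), hc.image continuous_quot_mk,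
      QuotientGroup.isOpenMap_coe _ ho, rfl⟩
    rw [← Subgroup.relIndex_comap]
    refine Nat.le_of_dvd (Nat.pos_of_ne_zero
      (relIndex_ne_zero_of_compact_open _ _ hc (isOpen_conjSubgroup g U ho)))
      (Subgroup.relIndex_dvd_of_le_left _ ?_)
    intro x hx
    rw [mem_conjSubgroup_iff] at hx
    rw [Subgroup.mem_comap, mem_conjSubgroup_iff]
    exact ⟨_, hx, by simp⟩
  unfold scaleOf
  by_cases hne : {n : ℕ | ∃ U : Subgroup G, IsCompact (U : Set G) ∧ IsOpen (U : Set G) ∧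
    n = (conjSubgroup g U).relIndex U}.Nonempty
  · apply le_antisymm
    · obtain ⟨m, hm, h⟩ := down _ (Nat.sInf_mem hne)
      exact (Nat.sInf_le h).trans hm
    · obtain ⟨n, hn⟩ := hne
      obtain ⟨m, -, h⟩ := down n hn
      have hne' : {n : ℕ | ∃ U : Subgroup (G ⧸ K), IsCompact (U : Set (G ⧸ K)) ∧
          IsOpen (U : Set (G ⧸ K)) ∧
          n = (conjSubgroup (g : G ⧸ K) U).relIndex U}.Nonempty := ⟨m, h⟩
      have hmem := Nat.sInf_mem hne'
      exact Nat.sInf_le (up _ hmem)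
  · congr 1
    ext n
    refine ⟨fun h => up n h, fun h => (hne ⟨n, h⟩).elim⟩
end
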